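/- There is an absolute constant C such that for every integer k ≥ 3 and every n ≥ 2, the mixing time of the lazy k-angulation flip walk on the k-angulations of the convex ((k−2)n+2)-gon is at most n^{C·k·log n}; that is, for every integer t ≥ n^{C·k·log n} and every starting k-angulation x, the total variation distance between the distribution of the walk after t steps and the uniform distribution on all k-angulations is at most 1/4. -/

import Mathlib

open Finset

/-- `x` lies strictly between `a` and `b` in cyclic (counterclockwise) order
on the vertices `0, 1, …, m-1` of a convex `m`-gon. -/
def CycBtw {m : ℕ} (a b x : Fin m) : Prop :=
  0 < (x - a).val ∧ (x - a).val < (b - a).val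

/-- `a` and `b` are adjacent (cyclically consecutive) vertices of the convex `m`-gon. -/
def PolyAdj {m : ℕ} (a b : Fin m) : Prop :=
  (b - a).val = 1 ∨ (a - b).val = 1

/-- `e` is a side of the convex `m`-gon. -/
def IsSide {m : ℕ} (e : Sym2 (Fin m)) : Prop :=
  ∃ a b : Fin m, e = s(a, b) ∧ PolyAdj a b

/-- `e` is a diagonal of the convex `m`-gon: a pair of distinct non-adjacent vertices. -/
def IsDiagonal {m : ℕ} (e : Sym2 (Fin m)) : Prop :=
  ¬ e.IsDiag ∧ ∀ a b : Fin m, e = s(a, b) → ¬ PolyAdj a b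

/-- Two chords cross iff exactly one endpoint of one lies strictly between the
endpoints of the other (for every representation of the endpoints). -/
def Crosses {m : ℕ} (e f : Sym2 (Fin m)) : Prop :=
  ∀ a b : Fin m, e = s(a, b) →
    ∃ c d : Fin m, f = s(c, d) ∧ Xor' (CycBtw a b c) (CycBtw a b d)

/-- `e` is an edge of the dissection given by the diagonal set `t`:
a polygon side or a diagonal of `t`. -/
def EdgeOfD {m : ℕ} (t : Finset (Sym2 (Fin m))) (e : Sym2 (Fin m)) : Prop :=
  IsSide e ∨ e ∈ t

/-- `b` is the cyclic successor of `a` among the elements of `F`. -/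
def NextIn {m : ℕ} (F : Finset (Fin m)) (a b : Fin m) : Prop :=
  a ∈ F ∧ b ∈ F ∧ a ≠ b ∧ ∀ x ∈ F, ¬ CycBtw a b x

/-- `F` is the vertex set of a cell (face) of the dissection of the convex `m`-gon by the
pairwise non-crossing diagonal set `t`: every pair of cyclically consecutive vertices of
`F` is joined by an edge of the dissection, and no diagonal of `t` joins two
non-consecutive vertices of `F`. -/
def IsFaceSet {m : ℕ} (t : Finset (Sym2 (Fin m))) (F : Finset (Fin m)) : Prop :=
  3 ≤ F.card ∧
  (∀ a b : Fin m, NextIn F a b → EdgeOfD t s(a, b)) ∧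
  (∀ e ∈ t, ∀ a b : Fin m, e = s(a, b) → a ∈ F → b ∈ F → NextIn F a b ∨ NextIn F b a)

/-- `t` is a `k`-angulation of the convex `((k-2)n+2)`-gon: a set of `n - 1` pairwise
non-crossing diagonals subdividing the polygon into cells that are all `k`-gons. -/
def IsKAngulation (k n : ℕ) (t : Finset (Sym2 (Fin ((k - 2) * n + 2)))) : Prop :=
  (∀ e ∈ t, IsDiagonal e) ∧
  (∀ e ∈ t, ∀ f ∈ t, ¬ Crosses e f) ∧
  t.card = n - 1 ∧
  (∀ F : Finset (Fin ((k - 2) * n + 2)), IsFaceSet t F → F.card = k)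

/-- The type of `k`-angulations of the convex `((k-2)n+2)`-gon. -/
def KAngulation (k n : ℕ) : Type :=
  {t : Finset (Sym2 (Fin ((k - 2) * n + 2))) // IsKAngulation k n t}

instance (k n : ℕ) : DecidableEq (KAngulation k n) := fun a b =>
  decidable_of_iff (a.val = b.val) Subtype.ext_iff.symm

noncomputable instance (k n : ℕ) : Fintype (KAngulation k n) := by
  classical exact Subtype.fintype _

/-- The `k`-angulation flip graph `K_{k,(k-2)n+2}`: vertices are the `k`-angulations of
the convex `((k-2)n+2)`-gon, two of them adjacent iff they differ in exactly one
diagonal (a flip). -/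
def kAngGraph (k n : ℕ) : SimpleGraph (KAngulation k n) where
  Adj s t := (s.val \ t.val).card = 1 ∧ (t.val \ s.val).card = 1
  symm := ⟨fun s t h => ⟨h.2, h.1⟩⟩
  loopless := ⟨fun s h => by simp at h⟩

open Classical in
/-- The transition matrix of the lazy `k`-angulation flip walk: from a `k`-angulation,
with probability 1/2 stay put, otherwise pick one of the `n - 1` diagonals uniformly at
random and apply one of its `k - 2` possible flips chosen uniformly at random. -/
noncomputable def kFlipWalkMatrix (k n : ℕ) :
    Matrix (KAngulation k n) (KAngulation k n) ℝ := fun s t =>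
  if (kAngGraph k n).Adj s t then 1 / (2 * ((n : ℝ) - 1) * ((k : ℝ) - 2))
  else if s = t then 1 / 2 else 0


section PartB1

/-- pairwise non-crossing set of pairs -/
def NCr (D : Finset (ℕ × ℕ)) : Prop :=
  ∀ e ∈ D, ∀ f ∈ D, ¬ (e.1 < f.1 ∧ f.1 < e.2 ∧ e.2 < f.2)

/-- number of pairs of `D` nested in `[i,j]` -/
def NN (D : Finset (ℕ × ℕ)) (i j : ℕ) : ℕ := (D.filter (fun e => i ≤ e.1 ∧ e.2 ≤ j)).card

structure Good (κ n : ℕ) (D : Finset (ℕ × ℕ)) : Prop where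
  chord : ∀ e ∈ D, e.1 + 2 ≤ e.2
  bd : ∀ e ∈ D, e.2 ≤ κ * n + 1
  allow : ∀ e ∈ D, κ ∣ e.2 - e.1 - 1
  nc : NCr D
  root : (0, κ * n + 1) ∈ D
  card : D.card = n

theorem nn_split {D : Finset (ℕ × ℕ)} (hc : ∀ e ∈ D, e.1 + 2 ≤ e.2) (i l j : ℕ)
    (hil : i < l) (hlj : l < j)
    (h : ∀ e ∈ D, i ≤ e.1 → e.2 ≤ j → e ≠ (i, j) → e.2 ≤ l ∨ l ≤ e.1) :
    NN D i j = (if (i, j) ∈ D then 1 else 0) + NN D i l + NN D l j := by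
  unfold NN
  have h1 : D.filter (fun e => i ≤ e.1 ∧ e.2 ≤ j) =
      ((D.filter (fun e => e = (i, j))) ∪ D.filter (fun e => i ≤ e.1 ∧ e.2 ≤ l)) ∪
        D.filter (fun e => l ≤ e.1 ∧ e.2 ≤ j) := by
    ext ⟨u, v⟩
    simp only [mem_filter, mem_union, Prod.mk.injEq]
    constructor
    · rintro ⟨hD, h1, h2⟩
      by_cases he : (u, v) = (i, j)
      · simp only [Prod.mk.injEq] at he; tauto
      · have := h _ hD h1 h2 he
        simp only at this; tauto
    · rintro ((⟨hD, h1, h2⟩ | ⟨hD, h1, h2⟩) | ⟨hD, h1, h2⟩) <;> refine ⟨hD, ?_, ?_⟩ <;> omega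
  rw [h1, card_union_of_disjoint, card_union_of_disjoint]
  · congr 2
    split_ifs with hD
    · rw [card_eq_one]
      refine ⟨(i, j), ?_⟩
      ext e; simp only [mem_filter, mem_singleton]
      constructor
      · exact fun h => h.2
      · rintro rfl; exact ⟨hD, rfl⟩
    · rw [card_eq_zero]
      ext e; simp only [mem_filter, notMem_empty, iff_false]
      rintro ⟨h1, rfl⟩; exact hD h1
  · rw [disjoint_left]
    rintro ⟨u, v⟩ h1 h2
    simp only [mem_filter, Prod.mk.injEq] at h1 h2
    omega
  · rw [disjoint_left]
    rintro ⟨u, v⟩ h1 h2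
    simp only [mem_filter, mem_union, Prod.mk.injEq] at h1 h2
    have := hc _ h2.1
    simp only at this
    omega

theorem exists_split {D : Finset (ℕ × ℕ)} (hc : ∀ e ∈ D, e.1 + 2 ≤ e.2) (hn : NCr D) (i j : ℕ)
    (hij : i + 2 ≤ j) :
    ∃ l, i < l ∧ l < j ∧ ∀ e ∈ D, i ≤ e.1 → e.2 ≤ j → e ≠ (i, j) → e.2 ≤ l ∨ l ≤ e.1 := by
  by_cases hex : ∃ d, d < j ∧ (i, d) ∈ D
  · classical
    obtain ⟨d, hd, hdD⟩ := hex
    have hne : ((range j).filter (fun d => (i, d) ∈ D)).Nonempty := ⟨d, by simp [hd, hdD]⟩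
    obtain ⟨l, hl, hmax⟩ := exists_max_image _ id hne
    simp only [mem_filter, mem_range, id] at hl hmax
    have := hc _ hl.2
    refine ⟨l, by simp only at this; omega, hl.1, ?_⟩
    rintro ⟨u, v⟩ he h1 h2 h3
    simp only [ne_eq, Prod.mk.injEq] at *
    have h4 := hn _ hl.2 _ he
    simp only at h4
    rcases Nat.eq_or_lt_of_le h1 with h | h
    · subst h
      left; exact hmax v ⟨by omega, he⟩
    · omega
  · push Not at hex
    refine ⟨i + 1, by omega, by omega, ?_⟩
    rintro ⟨u, v⟩ he h1 h2 h3
    simp only [ne_eq, Prod.mk.injEq] at *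
    right
    by_contra hcon
    have : u = i := by omega
    subst this
    exact hex v (by omega) he

theorem nn_of_ge {D : Finset (ℕ × ℕ)} (hc : ∀ e ∈ D, e.1 + 2 ≤ e.2) (i j : ℕ) (h : j < i + 2) :
    NN D i j = 0 := by
  unfold NN
  rw [card_eq_zero]
  ext e; simp only [mem_filter, notMem_empty, iff_false]
  rintro ⟨h1, h2⟩
  have := hc _ h1; omega

theorem nn_le {κ : ℕ} {D : Finset (ℕ × ℕ)} (hc : ∀ e ∈ D, e.1 + 2 ≤ e.2)
    (ha : ∀ e ∈ D, κ ∣ e.2 - e.1 - 1) (hn : NCr D) :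
    ∀ s i j, j - i = s → i < j → κ * NN D i j + i + 1 ≤ j := by
  intro s
  induction s using Nat.strong_induction_on with
  | _ s ih =>
  intro i j hs hij
  by_cases h2 : j < i + 2
  · rw [nn_of_ge hc i j h2]; omega
  obtain ⟨l, hil, hlj, hl⟩ := exists_split hc hn i j (by omega)
  have e1 := nn_split hc i l j hil hlj hl
  have i1 := ih (l - i) (by omega) i l rfl hil
  have i2 := ih (j - l) (by omega) l j rfl hlj
  rw [e1]
  split_ifs with hD
  · obtain ⟨q, hq⟩ := ha _ hD
    simp only at hq
    have : κ * (NN D i l + NN D l j) < κ * q := by rw [← hq, mul_add]; omega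
    have h3 : NN D i l + NN D l j + 1 ≤ q := Nat.lt_of_mul_lt_mul_left this
    have h4 : κ * (NN D i l + NN D l j + 1) ≤ κ * q := Nat.mul_le_mul_left _ h3
    have : 1 + NN D i l + NN D l j = NN D i l + NN D l j + 1 := by ring
    rw [this]; omega
  · rw [zero_add, mul_add]; omega

theorem nn_le2 {κ : ℕ} {D : Finset (ℕ × ℕ)} (hc : ∀ e ∈ D, e.1 + 2 ≤ e.2)
    (ha : ∀ e ∈ D, κ ∣ e.2 - e.1 - 1) (hn : NCr D) (a b : ℕ) (hab : (a, b) ∈ D) :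
    ∀ s i j, j - i = s → i ≤ a → b ≤ j → κ * NN D i j + i + b ≤ κ * NN D a b + j + a := by
  intro s
  induction s using Nat.strong_induction_on with
  | _ s ih =>
  intro i j hs hia hbj
  have hab2 := hc _ hab
  simp only at hab2
  by_cases heq : (a, b) = (i, j)
  · simp only [Prod.mk.injEq] at heq
    obtain ⟨rfl, rfl⟩ := heq
    omega
  obtain ⟨l, hil, hlj, hl⟩ := exists_split hc hn i j (by omega)
  have e1 := nn_split hc i l j hil hlj hl
  have key : κ * (NN D i l + NN D l j) + i + b + 1 ≤ κ * NN D a b + j + a := by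
    rw [mul_add]
    rcases hl _ hab hia hbj heq with h | h
    · have i1 := ih (l - i) (by omega) i l rfl hia h
      have i2 := nn_le hc ha hn _ l j rfl hlj
      omega
    · have i1 := ih (j - l) (by omega) l j rfl h hbj
      have i2 := nn_le hc ha hn _ i l rfl hil
      simp only at h
      omega
  rw [e1]
  split_ifs with hD
  · obtain ⟨q, hq⟩ := ha _ hD
    obtain ⟨r, hr⟩ := ha _ hab
    simp only at hq hr
    have : κ * (NN D i l + NN D l j + r) < κ * (q + NN D a b) := by
      rw [mul_add, mul_add _ q, ← hq, ← hr]; omega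
    have h3 : NN D i l + NN D l j + r + 1 ≤ q + NN D a b := Nat.lt_of_mul_lt_mul_left this
    have h4 := Nat.mul_le_mul_left κ h3
    have : 1 + NN D i l + NN D l j = NN D i l + NN D l j + 1 := by ring
    rw [this]
    simp only [mul_add] at h4 ⊢
    omega
  · rw [zero_add]; omega

theorem nn_all {κ n : ℕ} {D : Finset (ℕ × ℕ)} (h : Good κ n D) : NN D 0 (κ * n + 1) = n := by
  unfold NN
  rw [filter_true_of_mem, h.card]
  intro e he
  exact ⟨Nat.zero_le _, h.bd e he⟩

theorem Good.sat {κ n : ℕ} {D : Finset (ℕ × ℕ)} (h : Good κ n D) (a b : ℕ) (hab : (a, b) ∈ D) :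
    κ * NN D a b + a + 1 = b := by
  have hc := h.chord _ hab
  simp only at hc
  have h1 := nn_le h.chord h.allow h.nc _ a b rfl (by omega)
  have h2 := nn_le2 h.chord h.allow h.nc a b hab _ 0 (κ * n + 1) rfl (Nat.zero_le _) (h.bd _ hab)
  rw [nn_all h] at h2
  omega

end PartB1

section PartD1

/-- admissible monotone sequences -/
structure IsW (M n : ℕ) (ell : ℕ → ℕ) (w : ℕ → ℕ) : Prop where
  zero : w 0 = 0
  mono : ∀ j, w j ≤ w (j + 1)
  top : ∀ j, M ≤ j → w j = n
  low : ∀ j, ell j ≤ w j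

def wlo (ell : ℕ → ℕ) (w : ℕ → ℕ) (a : ℕ) : ℕ := max (w (a - 1)) (ell a)
def whi (w : ℕ → ℕ) (a : ℕ) : ℕ := w (a + 1)

variable {M n : ℕ} {ell : ℕ → ℕ}

theorem IsW.upd {w : ℕ → ℕ} (h : IsW M n ell w) {a v : ℕ} (ha : 0 < a) (haM : a < M) :
    IsW M n ell (Function.update w a v) ↔ wlo ell w a ≤ v ∧ v ≤ whi w a := by
  unfold wlo whi
  constructor
  · intro h'
    have h1 := h'.mono (a - 1)
    have h2 := h'.mono a
    have h3 := h'.low a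
    rw [Nat.sub_add_cancel ha] at h1
    simp only [Function.update_self] at h1 h2 h3
    rw [Function.update_of_ne (by omega)] at h1 h2
    exact ⟨max_le h1 h3, h2⟩
  · rintro ⟨h1, h2⟩
    rw [max_le_iff] at h1
    refine ⟨?_, ?_, ?_, ?_⟩
    · rw [Function.update_of_ne (by omega)]; exact h.zero
    · intro j
      have := h.mono j
      by_cases h3 : j = a
      · subst h3; simp only [Function.update_self]; rw [Function.update_of_ne (by omega)]; exact h2
      · by_cases h4 : j + 1 = a
        · rw [Function.update_of_ne h3, h4, Function.update_self]
          have : j = a - 1 := by omega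
          rw [this]; exact h1.1
        · rw [Function.update_of_ne h3, Function.update_of_ne h4]; exact this
    · intro j hj; rw [Function.update_of_ne (by omega)]; exact h.top j hj
    · intro j
      by_cases h3 : j = a
      · subst h3; rw [Function.update_self]; exact h1.2
      · rw [Function.update_of_ne h3]; exact h.low j

theorem IsW.lo_le {w : ℕ → ℕ} (h : IsW M n ell w) {a : ℕ} (ha : 0 < a) :
    wlo ell w a ≤ w a ∧ w a ≤ whi w a := by
  unfold wlo whi
  refine ⟨max_le ?_ (h.low a), h.mono a⟩
  have := h.mono (a - 1)
  rwa [Nat.sub_add_cancel ha] at this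

theorem IsW.le_n {w : ℕ → ℕ} (h : IsW M n ell w) (j : ℕ) : w j ≤ n := by
  have hm : Monotone w := monotone_nat_of_le_succ h.mono
  rw [← h.top (max j M) (le_max_right _ _)]
  exact hm (le_max_left _ _)

theorem wlo_update (w : ℕ → ℕ) (a v : ℕ) (ha : 0 < a) : wlo ell (Function.update w a v) a = wlo ell w a := by
  unfold wlo; rw [Function.update_of_ne (by omega)]

theorem whi_update (w : ℕ → ℕ) (a v : ℕ) : whi (Function.update w a v) a = whi w a := by
  unfold whi; rw [Function.update_of_ne (by omega)]

/-- heat-bath average at site `a` -/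
noncomputable def EE (ell : ℕ → ℕ) (a : ℕ) (f : (ℕ → ℕ) → ℝ) (w : ℕ → ℕ) : ℝ :=
  (∑ v ∈ Icc (wlo ell w a) (whi w a), f (Function.update w a v)) /
    ((whi w a + 1 - wlo ell w a : ℕ) : ℝ)

theorem swap_sum (W : Finset (ℕ → ℕ)) (hW : ∀ w, w ∈ W ↔ IsW M n ell w) {a : ℕ} (ha : 0 < a)
    (haM : a < M) (F : (ℕ → ℕ) → (ℕ → ℕ) → ℝ) :
    ∑ w ∈ W, ∑ v ∈ Icc (wlo ell w a) (whi w a), F w (Function.update w a v) =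
    ∑ w ∈ W, ∑ v ∈ Icc (wlo ell w a) (whi w a), F (Function.update w a v) w := by
  rw [Finset.sum_sigma', Finset.sum_sigma']
  have key : ∀ p ∈ W.sigma (fun w => Icc (wlo ell w a) (whi w a)),
      (⟨Function.update p.1 a p.2, p.1 a⟩ : Σ _ : ℕ → ℕ, ℕ) ∈
        W.sigma (fun w => Icc (wlo ell w a) (whi w a)) := by
    rintro ⟨w, v⟩ hp
    simp only [mem_sigma, mem_Icc, hW] at hp ⊢
    refine ⟨(hp.1.upd ha haM).2 hp.2, ?_⟩
    rw [wlo_update _ _ _ ha, whi_update]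
    exact hp.1.lo_le ha
  refine Finset.sum_nbij' (fun p => ⟨Function.update p.1 a p.2, p.1 a⟩)
    (fun p => ⟨Function.update p.1 a p.2, p.1 a⟩) key key ?_ ?_ ?_
  · rintro ⟨w, v⟩ _; simp
  · rintro ⟨w, v⟩ _; simp
  · rintro ⟨w, v⟩ _; simp

theorem EE_symm (W : Finset (ℕ → ℕ)) (hW : ∀ w, w ∈ W ↔ IsW M n ell w) {a : ℕ} (ha : 0 < a)
    (haM : a < M) (f g : (ℕ → ℕ) → ℝ) :
    ∑ w ∈ W, g w * EE ell a f w = ∑ w ∈ W, EE ell a g w * f w := by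
  have h := swap_sum W hW ha haM
    (fun w w' => g w * f w' / ((whi w a + 1 - wlo ell w a : ℕ) : ℝ))
  have e1 : ∀ w, g w * EE ell a f w = ∑ v ∈ Icc (wlo ell w a) (whi w a),
      g w * f (Function.update w a v) / ((whi w a + 1 - wlo ell w a : ℕ) : ℝ) := by
    intro w; unfold EE; rw [← Finset.sum_div, ← Finset.mul_sum, mul_div_assoc]
  have e2 : ∀ w, EE ell a g w * f w = ∑ v ∈ Icc (wlo ell w a) (whi w a),
      g (Function.update w a v) * f w / ((whi (Function.update w a v) a + 1 - wlo ell (Function.update w a v) a : ℕ) : ℝ) := by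
    intro w; unfold EE
    simp only [wlo_update _ _ _ ha, whi_update]
    rw [← Finset.sum_div, ← Finset.sum_mul, div_mul_eq_mul_div]
  simp only [e1, e2]
  exact h

/-- quantile form of an average -/
theorem sum_quantile (l A B : ℕ) (hB : 0 < B) (f : ℕ → ℝ) :
    ∑ j ∈ range (A * B), f (l + j / B) = B * ∑ v ∈ range A, f (l + v) := by
  induction A with
  | zero => simp
  | succ A ih =>
    rw [Nat.succ_mul, Finset.sum_range_add, ih, Finset.sum_range_succ, mul_add]
    congr 1
    rw [Finset.sum_congr rfl (g := fun _ => f (l + A)), Finset.sum_const, card_range, nsmul_eq_mul]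
    intro j hj
    rw [mem_range] at hj
    congr 2
    rw [mul_comm, Nat.mul_add_div hB, Nat.div_eq_of_lt hj, add_zero]

theorem quantile_mono (l A l' B j : ℕ) (hA : 0 < A) (hB : 0 < B) (hl : l ≤ l')
    (hu : l + A ≤ l' + B) (hj : j < A * B) : l + j / B ≤ l' + j / A := by
  obtain ⟨δ, rfl⟩ := Nat.exists_eq_add_of_le hl
  have h1 : A ≤ B + δ := by omega
  rw [add_assoc, Nat.add_le_add_iff_left]
  rw [← Nat.lt_succ_iff, Nat.div_lt_iff_lt_mul hB]
  have h2 : j < A * (j / A + 1) := by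
    have := Nat.lt_div_mul_add (a := j) hA
    rw [mul_comm]; linarith [Nat.succ_mul (j / A) A]
  rcases le_total A B with h | h
  · have : A * (j / A + 1) ≤ B * (j / A + 1) := Nat.mul_le_mul_right _ h
    have h3 : (j/A + 1) * B ≤ (δ + j / A).succ * B := Nat.mul_le_mul_right _ (by omega)
    linarith [mul_comm B (j/A+1)]
  · obtain ⟨ε, rfl⟩ := Nat.exists_eq_add_of_le h
    have hε : ε ≤ δ := by omega
    set q := j / (B + ε)
    -- q < B
    have hq : q < B := by
      rw [Nat.div_lt_iff_lt_mul hA]; linarith [mul_comm (B+ε) B]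
    have h3 : ε * (q + 1) ≤ ε * B := Nat.mul_le_mul_left _ hq
    have h4 : ε * B ≤ δ * B := Nat.mul_le_mul_right _ hε
    have : (δ + q).succ * B = δ * B + (q+1) * B := by rw [Nat.succ_eq_add_one]; ring
    rw [this]
    have h5 : (B + ε) * (q + 1) = (q+1) * B + ε * (q+1) := by ring
    omega

theorem EE_quantile (a : ℕ) (f : (ℕ → ℕ) → ℝ) (w : ℕ → ℕ) (B : ℕ) (hB : 0 < B)
    (h : wlo ell w a ≤ whi w a) :
    EE ell a f w = (∑ j ∈ range ((whi w a + 1 - wlo ell w a) * B),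
      f (Function.update w a (wlo ell w a + j / B))) /
        (((whi w a + 1 - wlo ell w a) * B : ℕ) : ℝ) := by
  rw [sum_quantile _ _ _ hB (fun v => f (Function.update w a v))]
  unfold EE
  have e : Icc (wlo ell w a) (whi w a) = Ico (wlo ell w a) (whi w a + 1) := by ext; simp only [mem_Icc, mem_Ico]; omega
  rw [e, Finset.sum_Ico_eq_sum_range]
  have hA : ((whi w a + 1 - wlo ell w a : ℕ) : ℝ) ≠ 0 := by
    have : whi w a + 1 - wlo ell w a ≠ 0 := by omega
    exact_mod_cast this
  have hB' : (B : ℝ) ≠ 0 := by exact_mod_cast hB.ne'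
  rw [Nat.cast_mul]
  field_simp

theorem avg_val (l A : ℕ) (hA : 0 < A) :
    (∑ v ∈ range A, ((l + v : ℕ) : ℝ)) = A * (l + (l + A - 1)) / 2 := by
  induction A with
  | zero => omega
  | succ A ih =>
    rw [Finset.sum_range_succ]
    rcases Nat.eq_zero_or_pos A with h | h
    · subst h; simp
    · rw [ih h]; push_cast; ring

end PartD1

section PartD2
variable {M n : ℕ} {ell : ℕ → ℕ}

/-- site weights -/
def wt (M : ℕ) (a : ℕ) : ℝ := (a : ℝ) * ((M : ℝ) - a)

/-- weighted distance between ordered sequences -/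
noncomputable def wdist (M : ℕ) (x y : ℕ → ℕ) : ℝ :=
  ∑ i ∈ range (M - 1), wt M (i + 1) * ((y (i + 1) : ℝ) - x (i + 1))

def Lip (M n : ℕ) (ell : ℕ → ℕ) (K : ℝ) (f : (ℕ → ℕ) → ℝ) : Prop :=
  ∀ x y, IsW M n ell x → IsW M n ell y → (∀ j, x j ≤ y j) → |f x - f y| ≤ K * wdist M x y

theorem EE_val (a : ℕ) (w : ℕ → ℕ) (h : wlo ell w a ≤ whi w a) :
    EE ell a (fun w => (w a : ℝ)) w = ((wlo ell w a : ℝ) + whi w a) / 2 := by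
  unfold EE
  have e : Icc (wlo ell w a) (whi w a) = Ico (wlo ell w a) (whi w a + 1) := by
    ext; simp only [mem_Icc, mem_Ico]; omega
  rw [e, Finset.sum_Ico_eq_sum_range]
  simp only [Function.update_self]
  have hA : 0 < whi w a + 1 - wlo ell w a := by omega
  rw [avg_val _ _ hA]
  have hA' : ((whi w a + 1 - wlo ell w a : ℕ) : ℝ) ≠ 0 := by exact_mod_cast hA.ne'
  have h2 : ((whi w a + 1 - wlo ell w a : ℕ) : ℝ) = (whi w a : ℝ) + 1 - wlo ell w a := by
    rw [Nat.cast_sub (by omega)]; push_cast; ring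
  field_simp
  rw [h2]; ring

theorem wdist_update {x y : ℕ → ℕ} {a u v : ℕ} (ha : 0 < a) (haM : a < M) :
    wdist M (Function.update x a u) (Function.update y a v) =
      wdist M x y + wt M a * (((v : ℝ) - u) - ((y a : ℝ) - x a)) := by
  unfold wdist
  have hm : a - 1 ∈ range (M - 1) := by rw [mem_range]; omega
  rw [← Finset.add_sum_erase _ _ hm, ← Finset.add_sum_erase _ (fun i => wt M (i + 1) * ((y (i + 1) : ℝ) - x (i + 1))) hm]
  have e : a - 1 + 1 = a := by omega
  simp only [e, Function.update_self]
  have : ∑ i ∈ (range (M - 1)).erase (a - 1), wt M (i + 1) *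
      ((Function.update y a v (i + 1) : ℝ) - Function.update x a u (i + 1)) =
      ∑ i ∈ (range (M - 1)).erase (a - 1), wt M (i + 1) * ((y (i + 1) : ℝ) - x (i + 1)) := by
    apply Finset.sum_congr rfl
    intro i hi
    rw [mem_erase] at hi
    rw [Function.update_of_ne (by omega), Function.update_of_ne (by omega)]
  rw [this]
  have e2 : ((a - 1 : ℕ) : ℝ) + 1 = a := by exact_mod_cast e
  ring

theorem wt_nonneg {a : ℕ} (haM : a ≤ M) : 0 ≤ wt M a := by
  unfold wt
  have : (a : ℝ) ≤ M := by exact_mod_cast haM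
  apply mul_nonneg <;> [positivity; linarith]

theorem EE_lip {K : ℝ} (hK : 0 ≤ K) {f : (ℕ → ℕ) → ℝ} (hf : Lip M n ell K f) {x y : ℕ → ℕ}
    (hx : IsW M n ell x) (hy : IsW M n ell y) (hxy : ∀ j, x j ≤ y j) {a : ℕ} (ha : 0 < a) (haM : a < M) :
    |EE ell a f x - EE ell a f y| ≤ K * (wdist M x y - wt M a * ((y a : ℝ) - x a) +
      wt M a * ((((y (a - 1) : ℝ) - x (a - 1)) + ((y (a + 1) : ℝ) - x (a + 1))) / 2)) := by
  have hx1 := hx.lo_le ha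
  have hy1 := hy.lo_le ha
  set A := whi x a + 1 - wlo ell x a with hA
  set B := whi y a + 1 - wlo ell y a with hB
  have hA0 : 0 < A := by omega
  have hB0 : 0 < B := by omega
  have hlo : wlo ell x a ≤ wlo ell y a := max_le_max (hxy _) le_rfl
  have hhi : whi x a ≤ whi y a := hxy _
  have qx : ∀ g, EE ell a g x = _ := fun g => EE_quantile a g x B hB0 (by omega)
  have qy : ∀ g, EE ell a g y = _ := fun g => EE_quantile a g y A hA0 (by omega)
  rw [← hA] at qx
  rw [← hB, mul_comm B A] at qy
  have hv := EE_val (ell := ell) a x (by omega)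
  have hv' := EE_val (ell := ell) a y (by omega)
  rw [qx] at hv
  rw [qy] at hv'
  simp only [Function.update_self] at hv hv'
  rw [qx f, qy f]
  have hAB : (0 : ℝ) < ((A * B : ℕ) : ℝ) := by exact_mod_cast Nat.mul_pos hA0 hB0
  rw [← sub_div, ← Finset.sum_sub_distrib, abs_div, abs_of_pos hAB, div_le_iff₀ hAB]
  refine (Finset.abs_sum_le_sum_abs _ _).trans ?_
  have step : ∀ j ∈ range (A * B), |f (Function.update x a (wlo ell x a + j / B)) -
      f (Function.update y a (wlo ell y a + j / A))| ≤
      K * (wdist M x y + wt M a * ((((wlo ell y a + j / A : ℕ) : ℝ) - (wlo ell x a + j / B : ℕ)) - ((y a : ℝ) - x a))) := by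
    intro j hj
    rw [mem_range] at hj
    rw [← wdist_update ha haM]
    apply hf
    · rw [hx.upd ha haM]
      refine ⟨Nat.le_add_right _ _, ?_⟩
      have : j / B < A := by rw [Nat.div_lt_iff_lt_mul hB0]; exact hj
      omega
    · rw [hy.upd ha haM]
      refine ⟨Nat.le_add_right _ _, ?_⟩
      have : j / A < B := by rw [Nat.div_lt_iff_lt_mul hA0, mul_comm]; exact hj
      omega
    · intro i
      by_cases hi : i = a
      · subst hi; simp only [Function.update_self]
        exact quantile_mono _ A _ B j hA0 hB0 hlo (by omega) hj
      · rw [Function.update_of_ne hi, Function.update_of_ne hi]; exact hxy i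
  refine (Finset.sum_le_sum step).trans ?_
  rw [← Finset.mul_sum, Finset.sum_add_distrib, ← Finset.mul_sum, Finset.sum_sub_distrib, Finset.sum_sub_distrib]
  rw [div_eq_iff hAB.ne'] at hv hv'
  rw [hv, hv']
  simp only [Finset.sum_const, card_range, nsmul_eq_mul]
  rw [mul_assoc]
  apply mul_le_mul_of_nonneg_left _ hK
  have hw := wt_nonneg (M := M) haM.le
  have h1 : (wlo ell y a : ℝ) - wlo ell x a ≤ (y (a - 1) : ℝ) - x (a - 1) := by
    have : wlo ell y a + x (a - 1) ≤ y (a - 1) + wlo ell x a := by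
      unfold wlo; have := hxy (a - 1); omega
    have : (wlo ell y a : ℝ) + x (a - 1) ≤ y (a - 1) + wlo ell x a := by exact_mod_cast this
    linarith
  have h2 : (wlo ell y a + whi y a : ℝ) / 2 - (wlo ell x a + whi x a) / 2 ≤
      (((y (a - 1) : ℝ) - x (a - 1)) + ((y (a + 1) : ℝ) - x (a + 1))) / 2 := by
    have e1 : (whi y a : ℝ) = y (a + 1) := rfl
    have e2 : (whi x a : ℝ) = x (a + 1) := rfl
    rw [e1, e2]; linarith
  have h3 := mul_le_mul_of_nonneg_left h2 hw
  have h4 := mul_le_mul_of_nonneg_right h3 hAB.le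
  nlinarith [h4]

theorem sum_parts (hM : 1 ≤ M) (Δ : ℕ → ℝ) (h0 : Δ 0 = 0) (h1 : Δ M = 0) :
    ∑ i ∈ range (M - 1), wt M (i + 1) * ((Δ i + Δ (i + 2)) / 2) =
      ∑ i ∈ range (M - 1), (wt M (i + 1) - 1) * Δ (i + 1) := by
  have h := Finset.sum_range_sub
    (fun i => (wt M i * Δ (i + 1) - wt M (i + 1) * Δ i) / 2) (M - 1)
  rw [← sub_eq_zero, ← Finset.sum_sub_distrib]
  have e : M - 1 + 1 = M := by omega
  have : (wt M (M - 1) * Δ (M - 1 + 1) - wt M (M - 1 + 1) * Δ (M - 1)) / 2 -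
     (wt M 0 * Δ (0 + 1) - wt M (0 + 1) * Δ 0) / 2 = 0 := by
    rw [e, h0, h1]; unfold wt; simp
  rw [this] at h
  rw [← h]
  apply Finset.sum_congr rfl
  intro i _
  unfold wt; push_cast; ring

/-- the averaged heat-bath operator -/
noncomputable def QQ (M : ℕ) (ell : ℕ → ℕ) (f : (ℕ → ℕ) → ℝ) (w : ℕ → ℕ) : ℝ :=
  (∑ i ∈ range (M - 1), EE ell (i + 1) f w) / ((M : ℝ) - 1)

theorem QQ_lip (hM : 2 ≤ M) {K : ℝ} (hK : 0 ≤ K) {f : (ℕ → ℕ) → ℝ} (hf : Lip M n ell K f) :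
    Lip M n ell ((1 - 1 / (M : ℝ) ^ 3) * K) (QQ M ell f) := by
  intro x y hx hy hxy
  have hM1 : (0 : ℝ) < (M : ℝ) - 1 := by
    have : (2 : ℝ) ≤ M := by exact_mod_cast hM
    linarith
  unfold QQ
  rw [← sub_div, ← Finset.sum_sub_distrib, abs_div, abs_of_pos hM1, div_le_iff₀ hM1]
  refine (Finset.abs_sum_le_sum_abs _ _).trans ?_
  have step : ∀ i ∈ range (M - 1), _ := fun i hi =>
    EE_lip hK hf hx hy hxy (Nat.succ_pos i) (by rw [mem_range] at hi; omega)
  refine (Finset.sum_le_sum step).trans ?_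
  rw [← Finset.mul_sum]
  set Δ : ℕ → ℝ := fun j => (y j : ℝ) - x j with hΔ
  have hΔ0 : ∀ j, 0 ≤ Δ j := by
    intro j; simp only [hΔ, sub_nonneg]; exact_mod_cast hxy j
  have sp := sum_parts (M := M) (by omega) Δ (by simp [hΔ, hx.zero, hy.zero])
    (by simp [hΔ, hx.top M le_rfl, hy.top M le_rfl])
  have e1 : ∑ i ∈ range (M - 1), (wdist M x y - wt M (i.succ) * ((y i.succ : ℝ) - x i.succ) +
      wt M i.succ * ((((y (i.succ - 1) : ℝ) - x (i.succ - 1)) + ((y (i.succ + 1) : ℝ) - x (i.succ + 1))) / 2)) =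
      ((M : ℝ) - 1) * wdist M x y - ∑ i ∈ range (M - 1), Δ (i + 1) := by
    rw [Finset.sum_add_distrib, Finset.sum_sub_distrib]
    have e3 : ∑ i ∈ range (M - 1), wt M i.succ * ((((y (i.succ - 1) : ℝ) - x (i.succ - 1)) + ((y (i.succ + 1) : ℝ) - x (i.succ + 1))) / 2) = ∑ i ∈ range (M - 1), (wt M (i + 1) - 1) * Δ (i + 1) := sp
    have e4 : ∑ i ∈ range (M - 1), wt M (i.succ) * ((y i.succ : ℝ) - x i.succ) = wdist M x y := rfl
    rw [e3, e4]
    simp only [Finset.sum_const, card_range, nsmul_eq_mul, sub_mul, one_mul, Finset.sum_sub_distrib]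
    have e5 : ∑ i ∈ range (M - 1), wt M (i + 1) * Δ (i + 1) = wdist M x y := rfl
    rw [e5, Nat.cast_sub (by omega)]; push_cast; ring
  rw [e1]
  have h6 : wdist M x y ≤ (M : ℝ) ^ 2 * ∑ i ∈ range (M - 1), Δ (i + 1) := by
    unfold wdist
    rw [Finset.mul_sum]
    apply Finset.sum_le_sum
    intro i hi
    apply mul_le_mul_of_nonneg_right _ (hΔ0 _)
    unfold wt
    rw [mem_range] at hi
    have h1 : ((i + 1 : ℕ) : ℝ) ≤ M := by exact_mod_cast (by omega)
    have h2 : (0 : ℝ) ≤ ((i + 1 : ℕ) : ℝ) := by positivity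
    nlinarith
  have h7 : ((M : ℝ) - 1) * wdist M x y - ∑ i ∈ range (M - 1), Δ (i + 1) ≤
      (1 - 1 / (M : ℝ) ^ 3) * wdist M x y * ((M : ℝ) - 1) := by
    have hS : 0 ≤ ∑ i ∈ range (M - 1), Δ (i + 1) := Finset.sum_nonneg (fun i _ => hΔ0 _)
    have hMp : (0 : ℝ) < M := by linarith
    have : 1 / (M : ℝ) ^ 3 * wdist M x y * ((M : ℝ) - 1) ≤ ∑ i ∈ range (M - 1), Δ (i + 1) := by
      calc 1 / (M : ℝ) ^ 3 * wdist M x y * ((M : ℝ) - 1)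
          ≤ 1 / (M : ℝ) ^ 3 * ((M : ℝ) ^ 2 * ∑ i ∈ range (M - 1), Δ (i + 1)) * ((M : ℝ) - 1) := by
            gcongr
        _ = (((M : ℝ) - 1) / M) * ∑ i ∈ range (M - 1), Δ (i + 1) := by field_simp
        _ ≤ 1 * ∑ i ∈ range (M - 1), Δ (i + 1) := by
            gcongr
            rw [div_le_one hMp]; linarith
        _ = _ := one_mul _
    nlinarith
  have := mul_le_mul_of_nonneg_left h7 hK
  linarith

end PartD2

section PartD3
variable {M n : ℕ} {ell : ℕ → ℕ}

theorem logconvex_bound (b : ℕ → ℝ) (hb : ∀ t, 0 ≤ b t) (hlc : ∀ t, b (t + 1) ^ 2 ≤ b t * b (t + 2))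
    (C r : ℝ) (hr : 0 < r) (hC : ∀ t, b t ≤ C * r ^ t) : b 1 ≤ r * b 0 := by
  by_contra hcon
  push Not at hcon
  have hb1 : 0 < b 1 := lt_of_le_of_lt (mul_nonneg hr.le (hb 0)) hcon
  have hb0 : 0 < b 0 := by
    rcases (hb 0).lt_or_eq with h | h
    · exact h
    · have := hlc 0
      rw [← h] at this
      nlinarith [sq_nonneg (b 1)]
  set s := b 1 / b 0 with hs
  have hs0 : 0 < s := div_pos hb1 hb0
  have hsr : r < s := by rw [hs, lt_div_iff₀ hb0]; exact hcon
  have ind : ∀ t, 0 < b t ∧ s * b t ≤ b (t + 1) := by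
    intro t
    induction t with
    | zero => exact ⟨hb0, by rw [hs]; field_simp; exact le_rfl⟩
    | succ t ih =>
      have h1 : 0 < b (t + 1) := lt_of_lt_of_le (mul_pos hs0 ih.1) ih.2
      refine ⟨h1, ?_⟩
      have h2 := hlc t
      have h3 : s * b t * b (t + 1) ≤ b t * b (t + 2) := by nlinarith
      have h4 : b t * (s * b (t + 1)) ≤ b t * b (t + 2) := by linarith
      exact le_of_mul_le_mul_left h4 ih.1
  have geo : ∀ t, s ^ t * b 0 ≤ b t := by
    intro t
    induction t with
    | zero => simp
    | succ t ih =>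
      rw [pow_succ]
      nlinarith [(ind t).2]
  obtain ⟨t, ht⟩ := pow_unbounded_of_one_lt (C / b 0) ((one_lt_div hr).2 hsr)
  have h1 := (geo t).trans (hC t)
  rw [div_pow, div_lt_div_iff₀ hb0 (pow_pos hr t)] at ht
  linarith

theorem QQ_symm (W : Finset (ℕ → ℕ)) (hW : ∀ w, w ∈ W ↔ IsW M n ell w) (f g : (ℕ → ℕ) → ℝ) :
    ∑ w ∈ W, g w * QQ M ell f w = ∑ w ∈ W, QQ M ell g w * f w := by
  unfold QQ
  simp only [mul_div_assoc', div_mul_eq_mul_div, ← Finset.sum_div, Finset.mul_sum, Finset.sum_mul]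
  congr 1
  rw [Finset.sum_comm, Finset.sum_comm (s := W)]
  apply Finset.sum_congr rfl
  intro i hi
  rw [mem_range] at hi
  exact EE_symm W hW (Nat.succ_pos i) (by omega) f g

theorem QQ_one (hM : 2 ≤ M) {w : ℕ → ℕ} (hw : IsW M n ell w) : QQ M ell (fun _ => 1) w = 1 := by
  have : ∀ i ∈ range (M - 1), EE ell (i + 1) (fun _ => (1 : ℝ)) w = 1 := by
    intro i _
    have := hw.lo_le (a := i + 1) (Nat.succ_pos i)
    unfold EE
    rw [Finset.sum_const, Nat.card_Icc, nsmul_eq_mul, mul_one, div_self]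
    have : whi w (i + 1) + 1 - wlo ell w (i + 1) ≠ 0 := by omega
    exact_mod_cast this
  unfold QQ
  rw [Finset.sum_congr rfl this, Finset.sum_const, card_range, nsmul_eq_mul, mul_one,
    Nat.cast_sub (by omega), Nat.cast_one, div_self]
  have : (2 : ℝ) ≤ M := by exact_mod_cast hM
  linarith

theorem QQ_mean (W : Finset (ℕ → ℕ)) (hW : ∀ w, w ∈ W ↔ IsW M n ell w) (hM : 2 ≤ M) (f : (ℕ → ℕ) → ℝ) :
    ∑ w ∈ W, QQ M ell f w = ∑ w ∈ W, f w := by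
  have := QQ_symm W hW f (fun _ => 1)
  simp only [one_mul] at this
  rw [this]
  apply Finset.sum_congr rfl
  intro w hw
  rw [QQ_one hM ((hW w).1 hw), one_mul]

theorem wdist_ge_one {x y : ℕ → ℕ} (hx : IsW M n ell x) (hy : IsW M n ell y) (hxy : ∀ j, x j ≤ y j)
    (hne : x ≠ y) : 1 ≤ wdist M x y := by
  obtain ⟨j, hj⟩ : ∃ j, x j ≠ y j := by
    by_contra h; push Not at h; exact hne (funext h)
  have h0 : j ≠ 0 := by rintro rfl; rw [hx.zero, hy.zero] at hj; exact hj rfl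
  have h1 : j < M := by
    by_contra h; push Not at h; rw [hx.top j h, hy.top j h] at hj; exact hj rfl
  unfold wdist
  have hm : j - 1 ∈ range (M - 1) := by rw [mem_range]; omega
  refine le_trans ?_ (Finset.single_le_sum (f := fun i => wt M (i + 1) * ((y (i + 1) : ℝ) - x (i + 1))) ?_ hm)
  · have e : j - 1 + 1 = j := by omega
    simp only [e]
    have a1 : (1 : ℝ) ≤ (y j : ℝ) - x j := by
      have : x j + 1 ≤ y j := by have := hxy j; omega
      have : (x j : ℝ) + 1 ≤ y j := by exact_mod_cast this
      linarith
    have a2 : (1 : ℝ) ≤ wt M j := by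
      unfold wt
      have b1 : (1 : ℝ) ≤ j := by exact_mod_cast (by omega : 1 ≤ j)
      have b2 : (j : ℝ) + 1 ≤ M := by exact_mod_cast h1
      nlinarith
    nlinarith
  · intro i hi
    rw [mem_range] at hi
    apply mul_nonneg (wt_nonneg (by omega))
    rw [sub_nonneg]; exact_mod_cast hxy _

theorem wdist_nonneg {x y : ℕ → ℕ} (hxy : ∀ j, x j ≤ y j) : 0 ≤ wdist M x y := by
  unfold wdist
  apply Finset.sum_nonneg
  intro i hi
  rw [mem_range] at hi
  apply mul_nonneg (wt_nonneg (by omega))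
  rw [sub_nonneg]; exact_mod_cast hxy _

theorem exists_lip (W : Finset (ℕ → ℕ)) (hW : ∀ w, w ∈ W ↔ IsW M n ell w) (f : (ℕ → ℕ) → ℝ) :
    ∃ K, 0 ≤ K ∧ Lip M n ell K f := by
  have hS : 0 ≤ ∑ w ∈ W, |f w| := Finset.sum_nonneg (fun _ _ => abs_nonneg _)
  refine ⟨2 * ∑ w ∈ W, |f w|, by positivity, ?_⟩
  intro x y hx hy hxy
  by_cases hne : x = y
  · subst hne; simp only [sub_self, abs_zero]
    exact mul_nonneg (by positivity) (wdist_nonneg hxy)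
  have h1 := wdist_ge_one hx hy hxy hne
  have h2 : |f x| ≤ ∑ w ∈ W, |f w| :=
    Finset.single_le_sum (f := fun w => |f w|) (fun _ _ => abs_nonneg _) ((hW x).2 hx)
  have h3 : |f y| ≤ ∑ w ∈ W, |f w| :=
    Finset.single_le_sum (f := fun w => |f w|) (fun _ _ => abs_nonneg _) ((hW y).2 hy)
  have h4 := abs_sub (f x) (f y)
  nlinarith

theorem lip_sup (W : Finset (ℕ → ℕ)) (hW : ∀ w, w ∈ W ↔ IsW M n ell w) (hM : 2 ≤ M) :
    ∃ R, 0 ≤ R ∧ ∀ K g, Lip M n ell K g → ∑ w ∈ W, g w = 0 → ∀ w ∈ W, |g w| ≤ K * R := by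
  rcases W.eq_empty_or_nonempty with hE | ⟨w0, hw0⟩
  · exact ⟨0, le_rfl, by subst hE; simp⟩
  set tp : ℕ → ℕ := fun j => if j = 0 then 0 else n with htp
  have hw0' := (hW w0).1 hw0
  have htop : IsW M n ell tp := by
    refine ⟨by simp [htp], ?_, ?_, ?_⟩
    · intro j; simp only [htp]; rw [if_neg (Nat.succ_ne_zero j)]; split_ifs <;> omega
    · intro j hj; simp only [htp]; rw [if_neg (by omega)]
    · intro j; simp only [htp]; split_ifs with h
      · subst h; have := hw0'.low 0; rwa [hw0'.zero] at this
      · exact (hw0'.low j).trans (hw0'.le_n j)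
  have hle : ∀ x, IsW M n ell x → ∀ j, x j ≤ tp j := by
    intro x hx j; simp only [htp]; split_ifs with h
    · subst h; rw [hx.zero]
    · exact hx.le_n j
  set S := ∑ w ∈ W, wdist M w tp with hSdef
  have hS : ∀ w ∈ W, wdist M w tp ≤ S := fun w hw =>
    Finset.single_le_sum (f := fun w => wdist M w tp)
      (fun x hx => wdist_nonneg (hle x ((hW x).1 hx))) hw
  have hS0 : 0 ≤ S := Finset.sum_nonneg (fun x hx => wdist_nonneg (hle x ((hW x).1 hx)))
  refine ⟨2 * S, by positivity, ?_⟩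
  intro K g hg hmean w hw
  by_cases hK : K < 0
  · -- degenerate case
    have hall : ∀ x ∈ W, x = tp := by
      intro x hx
      by_contra hne
      have h1 := wdist_ge_one ((hW x).1 hx) htop (hle x ((hW x).1 hx)) hne
      have h2 := hg x tp ((hW x).1 hx) htop (hle x ((hW x).1 hx))
      have := abs_nonneg (g x - g tp)
      nlinarith
    have hW1 : W = {tp} := by
      ext x; rw [mem_singleton]; exact ⟨hall x, fun h => by rw [h]; exact (hW _).2 htop⟩
    rw [hW1, Finset.sum_singleton] at hmean
    rw [hall w hw, hmean, abs_zero]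
    have : S = 0 := by rw [hSdef, hW1, Finset.sum_singleton]; unfold wdist; simp
    rw [this]; simp
  push Not at hK
  have h1 : ∀ x ∈ W, |g x - g tp| ≤ K * S := fun x hx =>
    (hg x tp ((hW x).1 hx) htop (hle x ((hW x).1 hx))).trans (mul_le_mul_of_nonneg_left (hS x hx) hK)
  have hcard : (0 : ℝ) < W.card := by exact_mod_cast card_pos.2 ⟨w, hw⟩
  have h2 : (W.card : ℝ) * g w = ∑ x ∈ W, (g w - g x) := by
    rw [Finset.sum_sub_distrib, hmean, Finset.sum_const, nsmul_eq_mul, sub_zero]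
  have h3 : |(W.card : ℝ) * g w| ≤ W.card * (K * (2 * S)) := by
    rw [h2]
    refine (Finset.abs_sum_le_sum_abs _ _).trans ?_
    rw [← nsmul_eq_mul]
    apply Finset.sum_le_card_nsmul
    intro x hx
    have a1 := h1 w hw
    have a2 := h1 x hx
    have : g w - g x = (g w - g tp) - (g x - g tp) := by ring
    rw [this]
    have := abs_sub (g w - g tp) (g x - g tp)
    linarith
  rw [abs_mul, abs_of_pos hcard] at h3
  exact le_of_mul_le_mul_left h3 hcard

theorem poincare_Q (W : Finset (ℕ → ℕ)) (hW : ∀ w, w ∈ W ↔ IsW M n ell w) (hM : 2 ≤ M)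
    (f : (ℕ → ℕ) → ℝ) (hf : ∑ w ∈ W, f w = 0) :
    ∑ w ∈ W, f w ^ 2 ≤ (M : ℝ) ^ 3 * ∑ w ∈ W, f w * (f w - QQ M ell f w) := by
  obtain ⟨K, hK, hL⟩ := exists_lip W hW f
  obtain ⟨R, hR, hsup⟩ := lip_sup W hW hM
  have hMr : (2 : ℝ) ≤ M := by exact_mod_cast hM
  set ρ : ℝ := 1 - 1 / (M : ℝ) ^ 3 with hρ
  have hM3 : (1 : ℝ) < (M : ℝ) ^ 3 := by nlinarith [sq_nonneg ((M : ℝ) - 1), sq_nonneg (M : ℝ)]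
  have hρ0 : 0 < ρ := by
    rw [hρ, sub_pos, div_lt_one (by linarith)]; exact hM3
  set F : ℕ → (ℕ → ℕ) → ℝ := fun t => (QQ M ell)^[t] f with hF
  have hFs : ∀ t, F (t + 1) = QQ M ell (F t) := fun t => Function.iterate_succ_apply' _ _ _
  have hlip : ∀ t, Lip M n ell (ρ ^ t * K) (F t) := by
    intro t
    induction t with
    | zero => simpa [hF] using hL
    | succ t ih =>
      rw [hFs, pow_succ, mul_comm (ρ ^ t) ρ, mul_assoc]
      exact QQ_lip hM (by positivity) ih
  have hmean : ∀ t, ∑ w ∈ W, F t w = 0 := by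
    intro t
    induction t with
    | zero => simpa [hF] using hf
    | succ t ih => rw [hFs, QQ_mean W hW hM, ih]
  set b : ℕ → ℝ := fun t => ∑ w ∈ W, F t w ^ 2 with hb
  have hb0 : ∀ t, 0 ≤ b t := fun t => Finset.sum_nonneg (fun _ _ => sq_nonneg _)
  have hlc : ∀ t, b (t + 1) ^ 2 ≤ b t * b (t + 2) := by
    intro t
    have e : b (t + 1) = ∑ w ∈ W, F t w * F (t + 2) w := by
      rw [hFs (t + 1), QQ_symm W hW, ← hFs]
      simp only [hb, sq]
    rw [e]
    exact Finset.sum_mul_sq_le_sq_mul_sq W (F t) (F (t + 2))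
  have hC : ∀ t, b t ≤ (W.card * (K * R) ^ 2) * (ρ ^ 2) ^ t := by
    intro t
    have : ∀ w ∈ W, F t w ^ 2 ≤ (ρ ^ t * K * R) ^ 2 := by
      intro w hw
      rw [← sq_abs]
      exact pow_le_pow_left₀ (abs_nonneg _) (hsup _ _ (hlip t) (hmean t) w hw) 2
    have := Finset.sum_le_card_nsmul W _ _ this
    rw [nsmul_eq_mul] at this
    refine this.trans (le_of_eq ?_)
    ring_nf
  have h1 := logconvex_bound b hb0 hlc _ _ (by positivity) hC
  have e0 : b 0 = ∑ w ∈ W, f w ^ 2 := rfl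
  have e1 : ∑ w ∈ W, f w * QQ M ell f w ≤ ρ * b 0 := by
    have cs := Finset.sum_mul_sq_le_sq_mul_sq W (F 0) (F 1)
    have e2 : ∑ w ∈ W, f w * QQ M ell f w = ∑ w ∈ W, F 0 w * F 1 w := rfl
    rw [e2]
    apply le_of_sq_le_sq _ (mul_nonneg hρ0.le (hb0 0))
    refine cs.trans ?_
    have : b 0 * b 1 ≤ b 0 * (ρ ^ 2 * b 0) := mul_le_mul_of_nonneg_left h1 (hb0 0)
    calc _ = b 0 * b 1 := rfl
      _ ≤ _ := this
      _ = _ := by ring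
  have e3 : ∑ w ∈ W, f w * (f w - QQ M ell f w) = b 0 - ∑ w ∈ W, f w * QQ M ell f w := by
    rw [e0, ← Finset.sum_sub_distrib]
    apply Finset.sum_congr rfl; intros; ring
  rw [e3, ← e0]
  have h5 : 1 / (M : ℝ) ^ 3 * b 0 ≤ b 0 - ∑ w ∈ W, f w * QQ M ell f w := by
    rw [hρ] at e1; linarith
  have h6 := mul_le_mul_of_nonneg_left h5 (by positivity : (0 : ℝ) ≤ (M : ℝ) ^ 3)
  have h7 : (M : ℝ) ^ 3 * (1 / (M : ℝ) ^ 3 * b 0) = b 0 := by field_simp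
  linarith

end PartD3

section PartD4
variable {M n : ℕ} {ell : ℕ → ℕ}

theorem sq_telescope (φ : ℕ → ℝ) (l h s v : ℕ) (hs : l ≤ s ∧ s ≤ h) (hv : l ≤ v ∧ v ≤ h) :
    (φ s - φ v) ^ 2 ≤ (h - l : ℕ) * ∑ u ∈ Ico l h, (φ (u + 1) - φ u) ^ 2 := by
  wlog hsv : v ≤ s generalizing s v
  · have := this v s hv hs (by omega)
    have e : (φ s - φ v) ^ 2 = (φ v - φ s) ^ 2 := by ring
    rw [e]; exact this
  have e : φ s - φ v = ∑ u ∈ Ico v s, (φ (u + 1) - φ u) := (Finset.sum_Ico_sub φ hsv).symm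
  rw [e]
  have h1 := sq_sum_le_card_mul_sum_sq (s := Ico v s) (f := fun u => φ (u + 1) - φ u)
  refine h1.trans ?_
  have hsub : Ico v s ⊆ Ico l h := Ico_subset_Ico hv.1 hs.2
  have h2 : ∑ u ∈ Ico v s, (φ (u + 1) - φ u) ^ 2 ≤ ∑ u ∈ Ico l h, (φ (u + 1) - φ u) ^ 2 :=
    Finset.sum_le_sum_of_subset_of_nonneg hsub (fun _ _ _ => sq_nonneg _)
  have h3 : ((Ico v s).card : ℝ) ≤ (h - l : ℕ) := by
    rw [Nat.card_Ico]; exact_mod_cast (by omega : s - v ≤ h - l)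
  exact mul_le_mul h3 h2 (Finset.sum_nonneg (fun _ _ => sq_nonneg _)) (by positivity)

/-- squared discrete derivative in direction `a` -/
noncomputable def GG (f : (ℕ → ℕ) → ℝ) (a : ℕ) (w : ℕ → ℕ) : ℝ :=
  if w a < w (a + 1) then (f (Function.update w a (w a + 1)) - f w) ^ 2 else 0

theorem GG_nonneg (f : (ℕ → ℕ) → ℝ) (a : ℕ) (w : ℕ → ℕ) : 0 ≤ GG f a w := by
  unfold GG; split_ifs <;> positivity

theorem EE_dirichlet (W : Finset (ℕ → ℕ)) (hW : ∀ w, w ∈ W ↔ IsW M n ell w) {a : ℕ} (ha : 0 < a)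
    (haM : a < M) (f : (ℕ → ℕ) → ℝ) :
    ∑ w ∈ W, f w * (f w - EE ell a f w) ≤ ((n : ℝ) + 1) ^ 3 * ∑ w ∈ W, GG f a w := by
  set A : (ℕ → ℕ) → ℝ := fun w => ((whi w a + 1 - wlo ell w a : ℕ) : ℝ) with hA
  have hA1 : ∀ w ∈ W, 1 ≤ A w ∧ A w ≤ (n : ℝ) + 1 := by
    intro w hw
    have h1 := ((hW w).1 hw).lo_le ha
    have h2 := ((hW w).1 hw).le_n (a + 1)
    have h3 : whi w a ≤ n := h2
    constructor
    · simp only [hA]; exact_mod_cast (by omega : 1 ≤ whi w a + 1 - wlo ell w a)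
    · simp only [hA]; exact_mod_cast (by omega : whi w a + 1 - wlo ell w a ≤ n + 1)
  have hcard : ∀ w ∈ W, ((Icc (wlo ell w a) (whi w a)).card : ℝ) = A w := by
    intro w _; rw [Nat.card_Icc]
  -- first identity
  have id1 : ∀ w ∈ W, f w * (f w - EE ell a f w) =
      ∑ v ∈ Icc (wlo ell w a) (whi w a), f w * (f w - f (Function.update w a v)) / A w := by
    intro w hw
    have h1 := (hA1 w hw).1
    rw [← Finset.sum_div, ← Finset.mul_sum, Finset.sum_sub_distrib, Finset.sum_const, nsmul_eq_mul, hcard w hw]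
    unfold EE
    have : A w ≠ 0 := by linarith
    change f w * (f w - _ / A w) = _
    field_simp
  have hAu : ∀ w v, A (Function.update w a v) = A w := by
    intro w v; simp only [hA, wlo_update _ _ _ ha, whi_update]
  have id2 := swap_sum W hW ha haM (fun w w' => f w * (f w - f w') / A w)
  simp only [hAu] at id2
  have id3 : 2 * ∑ w ∈ W, f w * (f w - EE ell a f w) =
      ∑ w ∈ W, ∑ v ∈ Icc (wlo ell w a) (whi w a), (f w - f (Function.update w a v)) ^ 2 / A w := by
    rw [Finset.sum_congr rfl id1, two_mul]
    nth_rw 2 [id2]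
    rw [← Finset.sum_add_distrib]
    apply Finset.sum_congr rfl; intro w _
    rw [← Finset.sum_add_distrib]
    apply Finset.sum_congr rfl; intro v _
    ring
  have b1 : ∀ w ∈ W, ∑ v ∈ Icc (wlo ell w a) (whi w a), (f w - f (Function.update w a v)) ^ 2 / A w ≤
      ((n : ℝ) + 1) ^ 2 * ∑ v ∈ Icc (wlo ell w a) (whi w a), GG f a (Function.update w a v) := by
    intro w hw
    obtain ⟨h1, h2⟩ := hA1 w hw
    have hlo := ((hW w).1 hw).lo_le ha
    set T := ∑ v ∈ Icc (wlo ell w a) (whi w a), GG f a (Function.update w a v) with hT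
    have hT0 : 0 ≤ T := Finset.sum_nonneg (fun _ _ => GG_nonneg _ _ _)
    have hin : ∑ u ∈ Ico (wlo ell w a) (whi w a), (f (Function.update w a (u + 1)) - f (Function.update w a u)) ^ 2 ≤ T := by
      rw [hT]
      refine le_trans (le_of_eq ?_) (Finset.sum_le_sum_of_subset_of_nonneg Ico_subset_Icc_self (fun _ _ _ => GG_nonneg _ _ _))
      apply Finset.sum_congr rfl
      intro u hu
      rw [mem_Ico] at hu
      unfold GG
      rw [Function.update_self, Function.update_of_ne (by omega : a + 1 ≠ a), if_pos (show u < w (a + 1) from hu.2), Function.update_idem]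
    have each : ∀ v ∈ Icc (wlo ell w a) (whi w a), (f w - f (Function.update w a v)) ^ 2 / A w ≤ ((n : ℝ) + 1) * T := by
      intro v hv
      rw [mem_Icc] at hv
      have h3 := sq_telescope (fun u => f (Function.update w a u)) (wlo ell w a) (whi w a) (w a) v hlo hv
      simp only [Function.update_eq_self] at h3
      have h4 : (f w - f (Function.update w a v)) ^ 2 / A w ≤ (f w - f (Function.update w a v)) ^ 2 :=
        div_le_self (sq_nonneg _) h1
      refine h4.trans (h3.trans ?_)
      have h5 : ((whi w a - wlo ell w a : ℕ) : ℝ) ≤ (n : ℝ) + 1 := by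
        refine le_trans ?_ h2
        simp only [hA]; exact_mod_cast (by omega)
      exact mul_le_mul h5 hin (Finset.sum_nonneg (fun _ _ => sq_nonneg _)) (by positivity)
    have := Finset.sum_le_card_nsmul _ _ _ each
    rw [nsmul_eq_mul, hcard w hw] at this
    refine this.trans ?_
    have : A w * (((n : ℝ) + 1) * T) ≤ ((n : ℝ) + 1) * (((n : ℝ) + 1) * T) :=
      mul_le_mul_of_nonneg_right h2 (by positivity)
    linarith
  have b2 := Finset.sum_le_sum b1
  rw [← id3, ← Finset.mul_sum, swap_sum W hW ha haM (fun _ w' => GG f a w')] at b2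
  have b3 : ∑ w ∈ W, ∑ v ∈ Icc (wlo ell w a) (whi w a), GG f a w ≤ ((n : ℝ) + 1) * ∑ w ∈ W, GG f a w := by
    rw [Finset.mul_sum]
    apply Finset.sum_le_sum
    intro w hw
    rw [Finset.sum_const, nsmul_eq_mul, hcard w hw]
    exact mul_le_mul_of_nonneg_right (hA1 w hw).2 (GG_nonneg _ _ _)
  have hG : 0 ≤ ∑ w ∈ W, GG f a w := Finset.sum_nonneg (fun _ _ => GG_nonneg _ _ _)
  have b4 := mul_le_mul_of_nonneg_left b3 (by positivity : (0 : ℝ) ≤ ((n : ℝ) + 1) ^ 2)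
  have b5 : 0 ≤ ((n : ℝ) + 1) ^ 3 * ∑ w ∈ W, GG f a w := by positivity
  nlinarith

theorem poincare_W (W : Finset (ℕ → ℕ)) (hW : ∀ w, w ∈ W ↔ IsW M n ell w) (hM : 2 ≤ M)
    (f : (ℕ → ℕ) → ℝ) (hf : ∑ w ∈ W, f w = 0) :
    ∑ w ∈ W, f w ^ 2 ≤ (M : ℝ) ^ 3 * ((n : ℝ) + 1) ^ 3 *
      ∑ w ∈ W, ∑ i ∈ range (M - 1), GG f (i + 1) w := by
  refine (poincare_Q W hW hM f hf).trans ?_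
  rw [mul_assoc]
  apply mul_le_mul_of_nonneg_left _ (by positivity)
  have hMr : (2 : ℝ) ≤ M := by exact_mod_cast hM
  have hM1 : (0 : ℝ) < (M : ℝ) - 1 := by linarith
  have e : ∑ w ∈ W, f w * (f w - QQ M ell f w) =
      (∑ i ∈ range (M - 1), ∑ w ∈ W, f w * (f w - EE ell (i + 1) f w)) / ((M : ℝ) - 1) := by
    rw [Finset.sum_comm, Finset.sum_div]
    apply Finset.sum_congr rfl
    intro w _
    rw [← Finset.mul_sum, Finset.sum_sub_distrib, Finset.sum_const, card_range, nsmul_eq_mul,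
      Nat.cast_sub (by omega), Nat.cast_one]
    unfold QQ
    field_simp
  rw [e, Finset.sum_comm (s := W) (t := range (M - 1)) (f := fun w i => GG f (i + 1) w), Finset.mul_sum]
  have h1 : ∑ i ∈ range (M - 1), ∑ w ∈ W, f w * (f w - EE ell (i + 1) f w) ≤
      ∑ i ∈ range (M - 1), ((n : ℝ) + 1) ^ 3 * ∑ w ∈ W, GG f (i + 1) w := by
    apply Finset.sum_le_sum
    intro i hi
    rw [mem_range] at hi
    exact EE_dirichlet W hW (Nat.succ_pos i) (by omega) f
  have h0 : 0 ≤ ∑ i ∈ range (M - 1), ((n : ℝ) + 1) ^ 3 * ∑ w ∈ W, GG f (i + 1) w :=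
    Finset.sum_nonneg (fun _ _ => mul_nonneg (by positivity) (Finset.sum_nonneg (fun _ _ => GG_nonneg _ _ _)))
  rw [div_le_iff₀ hM1]
  nlinarith

end PartD4

section PartE1

/-- number of pairs starting before `j` -/
def SS (D : Finset (ℕ × ℕ)) (j : ℕ) : ℕ := (D.filter (fun e => e.1 < j)).card

def AdjD (D D' : Finset (ℕ × ℕ)) : Prop := (D \ D').card = 1 ∧ (D' \ D).card = 1

theorem swap_adj {D : Finset (ℕ × ℕ)} {e f : ℕ × ℕ} (he : e ∈ D) (hf : f ∉ D) :
    AdjD D (insert f (D.erase e)) := by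
  have hef : e ≠ f := by rintro rfl; exact hf he
  constructor
  · rw [card_eq_one]
    refine ⟨e, ?_⟩
    ext x; simp only [mem_sdiff, mem_insert, mem_erase, mem_singleton]
    constructor
    · rintro ⟨h1, h2⟩; by_contra h; exact h2 (Or.inr ⟨h, h1⟩)
    · rintro rfl; exact ⟨he, by tauto⟩
  · rw [card_eq_one]
    refine ⟨f, ?_⟩
    ext x; simp only [mem_sdiff, mem_insert, mem_erase, mem_singleton]
    constructor
    · rintro ⟨h1, h2⟩; tauto
    · rintro rfl; exact ⟨Or.inl rfl, hf⟩

theorem swap_card {D : Finset (ℕ × ℕ)} {e f : ℕ × ℕ} (he : e ∈ D) (hf : f ∉ D) :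
    (insert f (D.erase e)).card = D.card := by
  rw [card_insert_of_notMem (by simp [hf]), card_erase_of_mem he]
  have := card_pos.2 ⟨e, he⟩
  omega

theorem swap_SS {D : Finset (ℕ × ℕ)} {e f : ℕ × ℕ} (he : e ∈ D) (hf : f ∉ D) (j : ℕ) :
    SS (insert f (D.erase e)) j + (if e.1 < j then 1 else 0) = SS D j + (if f.1 < j then 1 else 0) := by
  unfold SS
  rw [filter_insert, filter_erase]
  have h1 : f ∉ (D.filter (fun e => e.1 < j)).erase e := by simp [hf]
  by_cases h : e.1 < j
  · have h2 : e ∈ D.filter (fun e => e.1 < j) := by simp [he, h]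
    have := card_pos.2 ⟨e, h2⟩
    split_ifs
    · rw [card_insert_of_notMem h1, card_erase_of_mem h2]; omega
    · rw [card_erase_of_mem h2]; omega
  · have h2 : e ∉ D.filter (fun e => e.1 < j) := by simp [h]
    rw [erase_eq_of_notMem h2] at h1 ⊢
    split_ifs
    · rw [card_insert_of_notMem h1]
    · omega

/-- intermediate configurations of the ladder -/
def LX (D : Finset (ℕ × ℕ)) (a b c q x : ℕ) : Finset (ℕ × ℕ) :=
  (D.filter (fun e => e ≠ (a, b) ∧ ¬ (e.2 = a ∧ e.1 < q))) ∪
    ((D.filter (fun e => e.2 = a ∧ e.1 < q)).image (fun e => (e.1, c))) ∪ {(x, c)}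

theorem mem_LX {D : Finset (ℕ × ℕ)} {a b c q x u v : ℕ} : (u, v) ∈ LX D a b c q x ↔
    ((u, v) ∈ D ∧ ¬ (u = a ∧ v = b) ∧ ¬ (v = a ∧ u < q)) ∨ ((u, a) ∈ D ∧ u < q ∧ v = c) ∨
      (u = x ∧ v = c) := by
  unfold LX
  simp only [mem_union, mem_filter, mem_image, mem_singleton, Prod.mk.injEq, Prod.exists, ne_eq]
  constructor
  · rintro ((h | ⟨u', v', ⟨h1, h2, h3⟩, h4, h5⟩) | h)
    · left; tauto
    · subst h2 h4; right; left; exact ⟨h1, h3, h5.symm⟩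
    · right; right; exact h
  · rintro (h | ⟨h1, h2, h3⟩ | h)
    · left; left; tauto
    · left; right; exact ⟨u, a, ⟨h1, rfl, h2⟩, rfl, h3.symm⟩
    · right; exact h

/-- reconstruct the start of the ladder -/
def decL (a b c i : ℕ) (Z : Finset (ℕ × ℕ)) : Finset (ℕ × ℕ) :=
  (Z.filter (fun e => ¬ (e.2 = c ∧ e.1 < a))) ∪
    ((Z.filter (fun e => e.2 = c ∧ e.1 < i - 1)).image (fun e => (e.1, a))) ∪ {(a, b)}

theorem mem_decL {Z : Finset (ℕ × ℕ)} {a b c i u v : ℕ} : (u, v) ∈ decL a b c i Z ↔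
    ((u, v) ∈ Z ∧ ¬ (v = c ∧ u < a)) ∨ ((u, c) ∈ Z ∧ u < i - 1 ∧ v = a) ∨
      (u = a ∧ v = b) := by
  unfold decL
  simp only [mem_union, mem_filter, mem_image, mem_singleton, Prod.mk.injEq, Prod.exists]
  constructor
  · rintro ((h | ⟨u', v', ⟨h1, h2, h3⟩, h4, h5⟩) | h)
    · left; tauto
    · subst h2 h4; right; left; exact ⟨h1, h3, h5.symm⟩
    · right; right; exact h
  · rintro (h | ⟨h1, h2, h3⟩ | h)
    · left; left; tauto
    · left; right; exact ⟨u, c, ⟨h1, rfl, h2⟩, rfl, h3.symm⟩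
    · right; exact h

theorem Good.bc {κ n : ℕ} {D : Finset (ℕ × ℕ)} (h : Good κ n D) {a b0 : ℕ} (ha : (a, b0) ∈ D) :
    ∃ b c, (a, b) ∈ D ∧ (∀ v, (a, v) ∈ D → v ≤ b) ∧ a < c ∧ c < b ∧
      ((c, b) ∈ D ∨ c + 1 = b) ∧ ∀ u, (u, b) ∈ D → a < u → c ≤ u := by
  classical
  obtain ⟨b, hb, hmax⟩ := exists_max_image ((range (κ * n + 2)).filter (fun b => (a, b) ∈ D)) id
    ⟨b0, by
      have := h.bd _ ha
      simp only [mem_filter, mem_range]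
      exact ⟨by simp only at this; omega, ha⟩⟩
  simp only [mem_filter, mem_range, id] at hb hmax
  have hch := h.chord _ hb.2
  simp only at hch
  have hex : ∃ u, a < u ∧ ((u, b) ∈ D ∨ u + 1 = b) := ⟨b - 1, by omega, Or.inr (by omega)⟩
  refine ⟨b, Nat.find hex, hb.2, ?_, (Nat.find_spec hex).1, ?_, (Nat.find_spec hex).2, ?_⟩
  · intro v hv
    have := h.bd _ hv
    exact hmax v ⟨by simp only at this; omega, hv⟩
  · rcases (Nat.find_spec hex).2 with h1 | h1
    · have := h.chord _ h1; simp only at this; omega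
    · omega
  · intro u hu hau
    exact Nat.find_min' hex ⟨hau, Or.inl hu⟩

section
variable {κ n : ℕ} {D : Finset (ℕ × ℕ)} {a b c : ℕ}

set_option maxHeartbeats 1000000 in
theorem LX_nc (h : Good κ n D) (hab : (a, b) ∈ D) (hmax : ∀ v, (a, v) ∈ D → v ≤ b)
    (hac : a < c) (hcb : c < b) (hc : (c, b) ∈ D ∨ c + 1 = b) (hmin : ∀ u, (u, b) ∈ D → a < u → c ≤ u)
    {q x : ℕ} (hx : (x, a) ∈ D ∨ x + 1 = a) (hqx : q ≤ x) (hxm : ∀ p, (p, a) ∈ D → q ≤ p → x ≤ p) :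
    NCr (LX D a b c q x) := by
  have key : ∀ p, ((p, a) ∈ D ∧ p < q) ∨ p = x → ∀ u v, (u, v) ∈ D → ¬ (u = a ∧ v = b) → ¬ (v = a ∧ u < q) →
      ¬ (p < u ∧ u < c ∧ c < v) ∧ ¬ (u < p ∧ p < v ∧ v < c) := by
    intro p hp u v huv h1 h2
    have hp' : (p, a) ∈ D ∨ p + 1 = a := by
      rcases hp with hp | hp
      · exact Or.inl hp.1
      · rw [hp]; exact hx
    have c1 := h.chord _ huv
    have n1 := h.nc _ huv _ hab
    have n2 := h.nc _ hab _ huv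
    simp only at c1 n1 n2
    constructor
    · rintro ⟨l1, l2, l3⟩
      have n3 : (p, a) ∈ D → ¬ (p < u ∧ u < a ∧ a < v) := fun hh => h.nc _ hh _ huv
      have n4 : (c, b) ∈ D → ¬ (u < c ∧ c < v ∧ v < b) := fun hh => h.nc _ huv _ hh
      have m1 : u = a → v ≤ b := by rintro rfl; exact hmax _ huv
      have m2 : v = b → a < u → c ≤ u := by rintro rfl; exact hmin _ huv
      rcases hp' with hp' | hp' <;> rcases hc with hc | hc
      · have := n3 hp'; have := n4 hc; omega
      · have := n3 hp'; omega
      · have := n4 hc; omega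
      · omega
    · rintro ⟨l1, l2, l3⟩
      have n3 : (p, a) ∈ D → ¬ (u < p ∧ p < v ∧ v < a) := fun hh => h.nc _ huv _ hh
      have m1 : v = a → q ≤ u → x ≤ u := by rintro rfl; exact hxm _ huv
      have hpq : p < q ∨ p = x := hp.imp And.right id
      rcases lt_trichotomy v a with hva | hva | hva
      · rcases hp' with hp' | hp'
        · exact n3 hp' ⟨l1, l2, hva⟩
        · omega
      · have := m1 hva; omega
      · rcases hp' with hp' | hp'
        · have := h.chord _ hp'; simp only at this; omega
        · omega
  rintro ⟨u, v⟩ he ⟨u', v'⟩ hf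
  rw [mem_LX] at he hf
  simp only
  rcases he with he | he
  · rcases hf with hf | hf
    · exact h.nc _ he.1 _ hf.1
    · have hv : v' = c := by tauto
      have := key u' (by tauto) u v he.1 he.2.1 he.2.2
      omega
  · have hv : v = c := by tauto
    rcases hf with hf | hf
    · have := key u (by tauto) u' v' hf.1 hf.2.1 hf.2.2
      omega
    · have hv : v' = c := by tauto
      omega

theorem ladder_notMem (h : Good κ n D) (hab : (a, b) ∈ D) (hac : a < c) (hcb : c < b) (p : ℕ) (hp : p < a) :
    (p, c) ∉ D := by
  intro hpc
  have := h.nc _ hpc _ hab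
  simp only at this; omega

theorem LX_zero (x : ℕ) : LX D a b c 0 x = insert (x, c) (D.erase (a, b)) := by
  ext ⟨u, v⟩
  rw [mem_LX]
  simp only [mem_insert, mem_erase, Prod.mk.injEq, ne_eq]
  have : ¬ u < 0 := by omega
  tauto

theorem LX_same {q x : ℕ} (hq : (q, a) ∉ D) : LX D a b c (q + 1) x = LX D a b c q x := by
  ext ⟨u, v⟩
  rw [mem_LX, mem_LX]
  by_cases huq : u = q
  · subst huq
    have : v = a → (u, v) ∉ D := by rintro rfl; exact hq
    tauto
  · have : u < q + 1 ↔ u < q := by omega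
    rw [this]

theorem LX_step {q x : ℕ} (hqa : q < a) (hq : (q, a) ∈ D) :
    LX D a b c (q + 1) x = insert (x, c) ((LX D a b c q q).erase (q, a)) ∨ a = c := by
  by_cases hac : a = c
  · right; exact hac
  left
  ext ⟨u, v⟩
  simp only [mem_LX, mem_insert, mem_erase, Prod.mk.injEq, ne_eq]
  by_cases huq : u = q
  · subst huq
    by_cases hva : v = a
    · subst hva
      have : ¬ (u = v) := by omega
      simp [hac]
    · by_cases hvc : v = c <;> simp [hva, hvc, hq, Ne.symm hac]
  · have : u < q + 1 ↔ u < q := by omega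
    rw [this]; tauto

theorem Good.ladder (h : Good κ n D) {a b0 : ℕ} (ha0 : 0 < a) (ha : (a, b0) ∈ D) :
    ∃ b c, b ≤ κ * n + 1 ∧ c ≤ κ * n + 1 ∧ ∃ Y : ℕ → Finset (ℕ × ℕ), Y 0 = D ∧ (∀ i ≤ a, Good κ n (Y i)) ∧
      (∀ i < a, Y (i + 1) = Y i ∨ AdjD (Y i) (Y (i + 1))) ∧
      (∀ j, SS (Y a) j = SS D j + if j = a then 1 else 0) ∧
      (∀ i, 1 ≤ i → i ≤ a → D = decL a b c i (Y i)) := by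
  classical
  obtain ⟨b, c, hab, hmax, hac, hcb, hc, hmin⟩ := h.bc ha
  have hbM := h.bd _ hab
  simp only at hbM
  have hchab := h.chord _ hab
  have hex : ∀ q, ∃ p, q < a → q ≤ p ∧ ((p, a) ∈ D ∨ p + 1 = a) ∧ ∀ p', (p', a) ∈ D → q ≤ p' → p ≤ p' := by
    intro q
    by_cases hq : q < a
    · have hex : ∃ p, q ≤ p ∧ ((p, a) ∈ D ∨ p + 1 = a) := ⟨a - 1, by omega, Or.inr (by omega)⟩
      refine ⟨Nat.find hex, fun _ => ⟨(Nat.find_spec hex).1, (Nat.find_spec hex).2, ?_⟩⟩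
      intro p' h1 h2
      exact Nat.find_min' hex ⟨h2, Or.inl h1⟩
    · exact ⟨0, fun h => absurd h hq⟩
  choose x hx using hex
  have hxa : ∀ q < a, x q < a := by
    intro q hq
    rcases (hx q hq).2.1 with h1 | h1
    · have := h.chord _ h1; simp only at this; omega
    · omega
  set X : ℕ → Finset (ℕ × ℕ) := fun q => LX D a b c q (x q) with hX
  -- elements (p,c) not in D
  have hno := ladder_notMem h hab hac hcb
  have step0 : X 0 = insert (x 0, c) (D.erase (a, b)) := LX_zero _
  have hn0 : (x 0, c) ∉ D := hno _ (hxa 0 ha0)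
  have stepq : ∀ q, q + 1 < a → (X (q + 1) = X q ∧ x (q + 1) = x q) ∨
      (x q = q ∧ (q, a) ∈ X q ∧ (x (q + 1), c) ∉ X q ∧ X (q + 1) = insert (x (q + 1), c) ((X q).erase (q, a))) := by
    intro q hq
    have h1 := hx q (by omega)
    have h2 := hx (q + 1) hq
    by_cases hqa : (q, a) ∈ D
    · right
      have hxq : x q = q := le_antisymm (h1.2.2 q hqa le_rfl) h1.1
      refine ⟨hxq, ?_, ?_, ?_⟩
      · simp only [hX, mem_LX]
        left; exact ⟨hqa, by omega, by omega⟩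
      · simp only [hX, mem_LX]
        have := hno _ (hxa (q + 1) hq)
        rw [hxq]
        rintro (h3 | h3 | h3)
        · exact this h3.1
        · omega
        · omega
      · rcases LX_step (D := D) (b := b) (c := c) (x := x (q + 1)) (by omega : q < a) hqa with h3 | h3
        · simp only [hX]; rw [h3, hxq]
        · omega
    · left
      have hxx : x (q + 1) = x q := by
        have h3 : q + 1 ≤ x q := by
          rcases Nat.eq_or_lt_of_le h1.1 with h4 | h4
          · rcases h1.2.1 with h5 | h5
            · rw [← h4] at h5; exact absurd h5 hqa
            · omega
          · exact h4
        apply le_antisymm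
        · rcases h1.2.1 with h5 | h5
          · exact h2.2.2 _ h5 h3
          · have := hxa (q + 1) hq; omega
        · rcases h2.2.1 with h5 | h5
          · exact h1.2.2 _ h5 (by omega)
          · have := hxa q (by omega); omega
      refine ⟨?_, hxx⟩
      simp only [hX]; rw [hxx]; exact LX_same hqa
  have cardX : ∀ q, q < a → (X q).card = n := by
    intro q
    induction q with
    | zero => intro _; rw [step0, swap_card hab hn0, h.card]
    | succ q ih =>
      intro hq
      rcases stepq q hq with h1 | ⟨_, h1, h2, h3⟩
      · rw [h1.1]; exact ih (by omega)
      · rw [h3, swap_card h1 h2]; exact ih (by omega)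
  have SX : ∀ j q, q < a → SS (X q) j + (if a < j then 1 else 0) = SS D j + (if x q < j then 1 else 0) := by
    intro j q
    induction q with
    | zero => intro _; rw [step0]; exact swap_SS hab hn0 j
    | succ q ih =>
      intro hq
      rcases stepq q hq with h1 | ⟨h0, h1, h2, h3⟩
      · rw [h1.1, h1.2]; exact ih (by omega)
      · have := swap_SS h1 h2 j
        have ih := ih (by omega)
        rw [← h3] at this
        rw [h0] at ih
        simp only at this
        omega
  have hdvd : κ ∣ c - a := by
    have e1 := h.allow _ hab
    simp only at e1
    rcases hc with hc | hc
    · have e2 := h.allow _ hc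
      have e3 := h.chord _ hc
      simp only at e2 e3
      have e4 : c - a = (b - a - 1) - (b - c - 1) := by omega
      rw [e4]; exact Nat.dvd_sub e1 e2
    · have e4 : c - a = b - a - 1 := by omega
      rw [e4]; exact e1
  have goodX : ∀ q, q < a → Good κ n (X q) := by
    intro q hq
    have hxq := hx q hq
    have new : ∀ p, (p, a) ∈ D ∨ p + 1 = a → p + 2 ≤ c ∧ κ ∣ c - p - 1 := by
      rintro p (hp | hp)
      · have e1 := h.chord _ hp
        have e2 := h.allow _ hp
        simp only at e1 e2
        refine ⟨by omega, ?_⟩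
        have e4 : c - p - 1 = (c - a) + (a - p - 1) := by omega
        rw [e4]; exact dvd_add hdvd e2
      · refine ⟨by omega, ?_⟩
        have e4 : c - p - 1 = c - a := by omega
        rw [e4]; exact hdvd
    have cases : ∀ u v, (u, v) ∈ X q → (u, v) ∈ D ∨ (v = c ∧ ((u, a) ∈ D ∨ u + 1 = a)) := by
      intro u v huv
      simp only [hX, mem_LX] at huv
      rcases huv with h1 | h1 | h1
      · left; exact h1.1
      · right; exact ⟨h1.2.2, Or.inl h1.1⟩
      · right; rw [h1.1]; exact ⟨h1.2, hxq.2.1⟩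
    refine ⟨?_, ?_, ?_, ?_, ?_, cardX q hq⟩
    · rintro ⟨u, v⟩ he
      rcases cases u v he with h1 | ⟨rfl, h1⟩
      · exact h.chord _ h1
      · exact (new _ h1).1
    · rintro ⟨u, v⟩ he
      rcases cases u v he with h1 | ⟨rfl, h1⟩
      · exact h.bd _ h1
      · simp only; omega
    · rintro ⟨u, v⟩ he
      rcases cases u v he with h1 | ⟨rfl, h1⟩
      · exact h.allow _ h1
      · exact (new _ h1).2
    · exact LX_nc h hab hmax hac hcb hc hmin hxq.2.1 hxq.1 hxq.2.2
    · simp only [hX, mem_LX]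
      left; exact ⟨h.root, by omega, by omega⟩
  refine ⟨b, c, hbM, by omega, fun i => if i = 0 then D else X (i - 1), by simp, ?_, ?_, ?_, ?_⟩
  · intro i hi
    by_cases h0 : i = 0
    · simp only [h0, if_true]; exact h
    · simp only [h0, if_false]; exact goodX _ (by omega)
  · intro i hi
    by_cases h0 : i = 0
    · subst h0
      right
      simp only [if_true, zero_add, one_ne_zero, if_false, Nat.sub_self]
      rw [step0]; exact swap_adj hab hn0
    · simp only [h0, if_false, Nat.add_one_ne_zero, Nat.add_sub_cancel]
      have e : i = (i - 1) + 1 := by omega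
      have := stepq (i - 1) (by omega)
      rw [← e] at this
      rcases this with h1 | ⟨_, h1, h2, h3⟩
      · left; exact h1.1
      · right; rw [h3]; exact swap_adj h1 h2
  · intro j
    have h0 : a ≠ 0 := by omega
    simp only [h0, if_false]
    have h1 := SX j (a - 1) (by omega)
    have h2 := hx (a - 1) (by omega)
    have h3 := hxa (a - 1) (by omega)
    have h4 : x (a - 1) = a - 1 := by omega
    rw [h4] at h1
    split_ifs at h1 ⊢ <;> omega
  · intro i hi1 hia
    have h0 : i ≠ 0 := by omega
    simp only [h0, if_false]
    have hxi := hx (i - 1) (by omega)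
    have hxia := hxa (i - 1) (by omega)
    ext ⟨u, v⟩
    rw [mem_decL]
    simp only [hX, mem_LX]
    have k1 : u < a → (u, c) ∉ D := hno u
    have k2 : (u, v) ∈ D → u + 2 ≤ v := fun hh => h.chord _ hh
    have k3 : u = a → v = b → (u, v) ∈ D := by rintro rfl rfl; exact hab
    have k4 : v = a → ((u, v) ∈ D ↔ (u, a) ∈ D) := by rintro rfl; rfl
    have k5 : v = c → ((u, v) ∈ D ↔ (u, c) ∈ D) := by rintro rfl; rfl
    have k6 : (u, a) ∈ D → u + 2 ≤ a := fun hh => h.chord _ hh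
    have k7 : u < i - 1 → u < a := by omega
    have k8 : a ≠ c := by omega
    constructor
    · intro huv
      by_cases e1 : u = a ∧ v = b
      · right; right; exact e1
      by_cases e2 : v = a ∧ u < i - 1
      · right; left
        exact ⟨Or.inr (Or.inl ⟨(k4 e2.1).1 huv, e2.2, by trivial⟩), e2.2, e2.1⟩
      · left
        refine ⟨Or.inl ⟨huv, e1, e2⟩, ?_⟩
        rintro ⟨e3, e4⟩
        exact k1 e4 ((k5 e3).1 huv)
    · rintro (⟨h1, h2⟩ | ⟨h1, h2, h3⟩ | ⟨h1, h2⟩)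
      · rcases h1 with h1 | h1 | h1
        · exact h1.1
        · exact absurd ⟨h1.2.2, k7 h1.2.1⟩ h2
        · exact absurd ⟨h1.2, by omega⟩ h2
      · rcases h1 with h1 | h1 | h1
        · exact absurd h1.1 (k1 (k7 h2))
        · exact (k4 h3).2 h1.1
        · omega
      · exact k3 h1 h2
end

end PartE1

section PartE2

def ellK (κ n j : ℕ) : ℕ := if j < κ * n + 1 then (j + κ - 1) / κ else n

theorem ellK_le {κ n j s : ℕ} (hκ : 0 < κ) (hj : j < κ * n + 1) : ellK κ n j ≤ s ↔ j ≤ κ * s := by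
  unfold ellK
  rw [if_pos hj, Nat.div_le_iff_le_mul_add_pred hκ]
  omega

theorem SS_mono (D : Finset (ℕ × ℕ)) {i j : ℕ} (hij : i ≤ j) : SS D i ≤ SS D j := by
  unfold SS
  apply card_le_card
  intro e; simp only [mem_filter]
  rintro ⟨h1, h2⟩; exact ⟨h1, by omega⟩

theorem Good.isW {κ n : ℕ} {D : Finset (ℕ × ℕ)} (hκ : 0 < κ) (h : Good κ n D) :
    IsW (κ * n + 1) n (ellK κ n) (SS D) := by
  have htop : ∀ j, κ * n + 1 ≤ j → SS D j = n := by
    intro j hj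
    unfold SS
    rw [filter_true_of_mem, h.card]
    intro e he
    have := h.chord e he
    have := h.bd e he
    omega
  refine ⟨?_, fun j => SS_mono D (Nat.le_succ j), htop, ?_⟩
  · unfold SS; rw [card_eq_zero]; ext e; simp
  · intro j
    by_cases hj : j < κ * n + 1
    · rw [ellK_le hκ hj]
      have h1 : SS D j + NN D j (κ * n + 1) = n := by
        unfold SS NN
        rw [← card_union_of_disjoint]
        · rw [← filter_or, filter_true_of_mem, h.card]
          intro e he
          have := h.bd e he
          omega
        · rw [disjoint_filter]
          intro e he; omega
      have h2 := nn_le h.chord h.allow h.nc _ j (κ * n + 1) rfl hj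
      have h3 : κ * n = κ * SS D j + κ * NN D j (κ * n + 1) := by rw [← mul_add, h1]
      omega
    · unfold ellK; rw [if_neg hj, htop j (by omega)]

/-- rank of the end of a pair among pairs with the same start -/
def rkE (D : Finset (ℕ × ℕ)) (a b : ℕ) : ℕ := (D.filter (fun e => e.1 = a ∧ e.2 < b)).card

theorem SS_split {κ n : ℕ} {D : Finset (ℕ × ℕ)} (h : Good κ n D) {a b b' : ℕ} (hab : (a, b) ∈ D)
    (h1 : a < b') (h2 : b' ≤ b) : SS D b = SS D b' + NN D b' b := by
  unfold SS NN
  rw [← card_union_of_disjoint]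
  · congr 1
    rw [← filter_or]
    apply filter_congr
    intro e he
    have n1 := h.nc _ hab _ he
    have n2 := h.chord _ he
    simp only at n1
    omega
  · rw [disjoint_filter]
    intro e he; omega

theorem charS1 {κ n : ℕ} {D : Finset (ℕ × ℕ)} (h : Good κ n D) {a b : ℕ} (hab : (a, b) ∈ D) :
    κ * (SS D b + rkE D a b + 1) + a + 1 = b + κ * SS D (a + 1) := by
  have hc := h.chord _ hab
  simp only at hc
  have h1 := SS_split h hab (show a < a + 1 by omega) (by omega)
  have h2 : NN D a b = NN D (a + 1) b + rkE D a b + 1 := by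
    unfold NN rkE
    have : D.filter (fun e => a ≤ e.1 ∧ e.2 ≤ b) = insert (a, b)
        (D.filter (fun e => a + 1 ≤ e.1 ∧ e.2 ≤ b) ∪ D.filter (fun e => e.1 = a ∧ e.2 < b)) := by
      ext ⟨u, v⟩
      simp only [mem_filter, mem_insert, mem_union, Prod.mk.injEq]
      constructor
      · rintro ⟨h1, h2, h3⟩
        by_cases hu : u = a
        · by_cases hv : v = b
          · left; exact ⟨hu, hv⟩
          · right; right; exact ⟨h1, hu, by omega⟩
        · right; left; exact ⟨h1, by omega, h3⟩
      · rintro (⟨rfl, rfl⟩ | h1 | h1)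
        · exact ⟨hab, le_rfl, le_rfl⟩
        · exact ⟨h1.1, by omega, h1.2.2⟩
        · exact ⟨h1.1, by omega, by omega⟩
    rw [this, card_insert_of_notMem, card_union_of_disjoint]
    · rw [disjoint_filter]; intro e he; omega
    · simp
  have h3 := h.sat a b hab
  rw [h2] at h3
  rw [h1]
  simp only [mul_add] at *
  omega

theorem charS2 {κ n : ℕ} {D : Finset (ℕ × ℕ)} (h : Good κ n D) {a b : ℕ} (hab : (a, b) ∈ D)
    {b' : ℕ} (h1 : a < b') (h2 : b' < b) :
    b' + κ * SS D (a + 1) ≤ κ * (SS D b' + rkE D a b + 1) + a := by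
  have e1 := charS1 h hab
  have e2 := SS_split h hab h1 h2.le
  have e3 := nn_le h.chord h.allow h.nc _ b' b rfl h2
  rw [e2] at e1
  simp only [mul_add] at *
  omega

theorem rank_surj (A : Finset ℕ) {i : ℕ} (hi : i < A.card) :
    ∃ x ∈ A, (A.filter (fun y => y < x)).card = i := by
  have hinj : Set.InjOn (fun x => (A.filter (fun y => y < x)).card) (A : Set ℕ) := by
    have key : ∀ x ∈ A, ∀ y ∈ A, x < y → (A.filter (fun z => z < x)).card < (A.filter (fun z => z < y)).card := by
      intro x hx y hy hxy
      apply card_lt_card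
      rw [ssubset_iff_of_subset]
      · exact ⟨x, by simp [hx, hxy], by simp⟩
      · intro z; simp only [mem_filter]; rintro ⟨h1, h2⟩; exact ⟨h1, by omega⟩
    intro x hx y hy hxy
    simp only at hxy
    rcases lt_trichotomy x y with h | h | h
    · have := key x hx y hy h; omega
    · exact h
    · have := key y hy x hx h; omega
  have himg : A.image (fun x => (A.filter (fun y => y < x)).card) = range A.card := by
    apply eq_of_subset_of_card_le
    · intro r; simp only [mem_image, mem_range]
      rintro ⟨x, hx, rfl⟩
      apply card_lt_card
      rw [ssubset_iff_of_subset (filter_subset _ _)]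
      exact ⟨x, hx, by simp⟩
    · rw [card_image_of_injOn hinj, card_range]
  have := mem_range.2 hi
  rw [← himg, mem_image] at this
  exact this

theorem rkE_surj (D : Finset (ℕ × ℕ)) {a i : ℕ} (hi : i < (D.filter (fun e => e.1 = a)).card) :
    ∃ b, (a, b) ∈ D ∧ rkE D a b = i := by
  have hcard : ∀ P : ℕ → Prop, ∀ [DecidablePred P], ((((D.filter (fun e => e.1 = a)).image Prod.snd)).filter P).card =
      (D.filter (fun e => e.1 = a ∧ P e.2)).card := by
    intro P _
    have : D.filter (fun e => e.1 = a ∧ P e.2) = (((D.filter (fun e => e.1 = a)).image Prod.snd).filter P).image (fun b => (a, b)) := by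
      ext ⟨u, v⟩
      simp only [mem_filter, mem_image, Prod.mk.injEq, Prod.exists, exists_eq_right, exists_eq_right_right]
      constructor
      · rintro ⟨h1, rfl, h2⟩; exact ⟨⟨h1, h2⟩, rfl⟩
      · rintro ⟨⟨h1, h2⟩, rfl⟩; exact ⟨h1, rfl, h2⟩
    rw [this, card_image_of_injective]
    intro x y; simp
  set A := (D.filter (fun e => e.1 = a)).image Prod.snd with hA
  have hAc : A.card = (D.filter (fun e => e.1 = a)).card := by
    have := hcard (fun _ => True)
    simpa using this
  obtain ⟨b, hb, hr⟩ := rank_surj A (i := i) (by omega)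
  rw [hA, mem_image] at hb
  obtain ⟨⟨u, v⟩, h1, rfl⟩ := hb
  simp only [mem_filter] at h1
  obtain ⟨h1, rfl⟩ := h1
  refine ⟨v, h1, ?_⟩
  rw [hcard] at hr
  exact hr

theorem SS_succ (D : Finset (ℕ × ℕ)) (a : ℕ) : SS D (a + 1) = SS D a + (D.filter (fun e => e.1 = a)).card := by
  unfold SS
  rw [← card_union_of_disjoint, ← filter_or]
  · congr 1; apply filter_congr; intro e _; omega
  · rw [disjoint_filter]; intro e _; omega

theorem SS_inj_sub {κ n : ℕ} {D D' : Finset (ℕ × ℕ)} (h : Good κ n D) (h' : Good κ n D') (hS : SS D = SS D') :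
    D ⊆ D' := by
  rintro ⟨a, b⟩ hab
  have hlt : rkE D a b < (D'.filter (fun e => e.1 = a)).card := by
    have e1 := SS_succ D a
    have e2 := SS_succ D' a
    rw [← hS] at e2
    have e3 : rkE D a b < (D.filter (fun e => e.1 = a)).card := by
      unfold rkE
      apply card_lt_card
      rw [ssubset_iff_of_subset]
      · exact ⟨(a, b), by simp [hab], by simp⟩
      · intro e; simp only [mem_filter]; tauto
    omega
  obtain ⟨b', hab', hr⟩ := rkE_surj D' hlt
  have c1 := charS1 h hab
  have c2 := charS1 h' hab'
  have d1 := h.chord _ hab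
  have d2 := h'.chord _ hab'
  simp only at d1 d2
  rcases lt_trichotomy b b' with hlt | heq | hlt
  · have := charS2 h' hab' (by omega) hlt
    rw [hr, ← hS] at this
    omega
  · rw [heq]; exact hab'
  · have := charS2 h hab (by omega) hlt
    rw [← hr, hS] at this
    omega

theorem SS_inj {κ n : ℕ} {D D' : Finset (ℕ × ℕ)} (h : Good κ n D) (h' : Good κ n D') (hS : SS D = SS D') :
    D = D' := (SS_inj_sub h h' hS).antisymm (SS_inj_sub h' h hS.symm)

theorem fan_good {κ n : ℕ} (hκ : 0 < κ) (hn : 0 < n) :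
    Good κ n ((range n).image (fun i => (i * κ, κ * n + 1))) := by
  have hi : ∀ i < n, i * κ + κ ≤ κ * n := by
    intro i hi
    have : (i + 1) * κ ≤ n * κ := Nat.mul_le_mul_right _ hi
    rw [mul_comm κ n]; linarith
  refine ⟨?_, ?_, ?_, ?_, ?_, ?_⟩
  · intro e he
    simp only [mem_image, mem_range] at he
    obtain ⟨i, hin, rfl⟩ := he
    have := hi i hin
    simp only; omega
  · intro e he
    simp only [mem_image, mem_range] at he
    obtain ⟨i, hin, rfl⟩ := he
    simp
  · intro e he
    simp only [mem_image, mem_range] at he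
    obtain ⟨i, hin, rfl⟩ := he
    refine ⟨n - i, ?_⟩
    simp only
    rw [Nat.mul_sub, mul_comm i κ]; omega
  · intro e he f hf
    simp only [mem_image, mem_range] at he hf
    obtain ⟨i, hin, rfl⟩ := he
    obtain ⟨j, hjn, rfl⟩ := hf
    simp only; omega
  · simp only [mem_image, mem_range]
    exact ⟨0, hn, by simp⟩
  · rw [card_image_of_injective, card_range]
    intro i j hij
    simp only [Prod.mk.injEq, and_true] at hij
    exact Nat.eq_of_mul_eq_mul_right hκ hij

theorem fan_SS {κ n : ℕ} (hκ : 0 < κ) {j : ℕ} (hj : j < κ * n + 1) :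
    SS ((range n).image (fun i => (i * κ, κ * n + 1))) j ≤ ellK κ n j := by
  have h := (ellK_le hκ hj).1 (le_refl (ellK κ n j))
  set s := ellK κ n j
  unfold SS
  have : filter (fun e => e.1 < j) ((range n).image (fun i => (i * κ, κ * n + 1))) ⊆
      (range s).image (fun i => (i * κ, κ * n + 1)) := by
    intro e
    simp only [mem_filter, mem_image, mem_range]
    rintro ⟨⟨i, hin, rfl⟩, h2⟩
    refine ⟨i, ?_, rfl⟩
    simp only at h2
    have : κ * i < κ * s := by rw [mul_comm]; omega
    exact Nat.lt_of_mul_lt_mul_left this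
  refine (card_le_card this).trans (card_image_le.trans ?_)
  rw [card_range]

theorem SS_surj {κ n : ℕ} (hκ : 0 < κ) (hn : 0 < n) : ∀ N : ℕ, ∀ w : ℕ → ℕ, IsW (κ * n + 1) n (ellK κ n) w →
    ∑ j ∈ range (κ * n + 1), w j = N → ∃ D, Good κ n D ∧ SS D = w := by
  intro N
  induction N using Nat.strong_induction_on with
  | _ N ih =>
  intro w hw hN
  by_cases hex : ∃ j, 0 < j ∧ j < κ * n + 1 ∧ ellK κ n j < w j
  · classical
    have hmin := fun i hi => Nat.find_min hex (m := i) hi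
    obtain ⟨hj0, hjM, hjl⟩ := Nat.find_spec hex
    set j := Nat.find hex
    have hw' : IsW (κ * n + 1) n (ellK κ n) (Function.update w j (w j - 1)) := by
      rw [hw.upd hj0 hjM]
      constructor
      · unfold wlo
        apply max_le
        · by_cases h1 : j - 1 = 0
          · rw [h1, hw.zero]; omega
          · have h2 := hmin (j - 1) (by omega)
            have h3 : w (j - 1) ≤ ellK κ n (j - 1) := by
              by_contra hcon
              exact h2 ⟨by omega, by omega, by omega⟩
            have h4 : ellK κ n (j - 1) ≤ ellK κ n j := by
              rw [ellK_le hκ (by omega)]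
              have := (ellK_le hκ hjM).1 (le_refl (ellK κ n j))
              omega
            omega
        · omega
      · have := (hw.lo_le hj0).2; omega
    have hsum : ∑ i ∈ range (κ * n + 1), Function.update w j (w j - 1) i < N := by
      rw [← hN]
      apply Finset.sum_lt_sum
      · intro i _
        by_cases hi : i = j
        · subst hi; rw [Function.update_self]; omega
        · rw [Function.update_of_ne hi]
      · exact ⟨j, mem_range.2 hjM, by rw [Function.update_self]; omega⟩
    obtain ⟨D, hD, hSD⟩ := ih _ hsum _ hw' rfl
    have hlt : SS D j < SS D (j + 1) := by
      rw [hSD, Function.update_self, Function.update_of_ne (by omega)]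
      have := hw.mono j; omega
    rw [SS_succ] at hlt
    obtain ⟨⟨u, v⟩, he⟩ := card_pos.1 (by omega : 0 < (D.filter (fun e => e.1 = j)).card)
    simp only [mem_filter] at he
    obtain ⟨he, hu⟩ := he
    rw [hu] at he
    obtain ⟨b, c, -, -, Y, -, hg, -, hS, -⟩ := hD.ladder hj0 he
    refine ⟨Y j, hg j le_rfl, ?_⟩
    funext i
    rw [hS i, hSD]
    by_cases hi : i = j
    · rw [if_pos hi, hi, Function.update_self]; omega
    · rw [if_neg hi, Function.update_of_ne hi, add_zero]
  · push Not at hex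
    refine ⟨_, fan_good hκ hn, ?_⟩
    have hf := (fan_good hκ hn).isW hκ
    funext j
    by_cases hj0 : j = 0
    · rw [hj0, hf.zero, hw.zero]
    by_cases hjM : j < κ * n + 1
    · have h1 := hex j (by omega) hjM
      have h2 := hw.low j
      have h3 := hf.low j
      have h4 := fan_SS hκ hjM
      omega
    · rw [hf.top j (by omega), hw.top j (by omega)]

end PartE2

section PartE3

open Classical in
noncomputable def XX (κ n : ℕ) : Finset (Finset (ℕ × ℕ)) :=
  ((range (κ * n + 2) ×ˢ range (κ * n + 2)).powerset).filter (Good κ n)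

theorem mem_XX {κ n : ℕ} {D : Finset (ℕ × ℕ)} : D ∈ XX κ n ↔ Good κ n D := by
  unfold XX
  simp only [mem_filter, mem_powerset, and_iff_right_iff_imp]
  intro h e he
  have h1 := h.chord e he
  have h2 := h.bd e he
  simp only [mem_product, mem_range]; omega

open Classical in
/-- local energy -/
noncomputable def hE (κ n : ℕ) (g : Finset (ℕ × ℕ) → ℝ) (D : Finset (ℕ × ℕ)) : ℝ :=
  ∑ D' ∈ (XX κ n).filter (fun D' => AdjD D D'), (g D - g D') ^ 2

theorem hE_nonneg (κ n : ℕ) (g : Finset (ℕ × ℕ) → ℝ) (D : Finset (ℕ × ℕ)) : 0 ≤ hE κ n g D :=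
  Finset.sum_nonneg (fun _ _ => sq_nonneg _)

theorem hE_le {κ n : ℕ} (g : Finset (ℕ × ℕ) → ℝ) {D D' : Finset (ℕ × ℕ)} (h' : Good κ n D')
    (hadj : D = D' ∨ AdjD D' D) : (g D - g D') ^ 2 ≤ hE κ n g D := by
  classical
  rcases hadj with h | h
  · rw [h]; simp only [sub_self]; simpa using hE_nonneg κ n g D'
  · unfold hE
    exact Finset.single_le_sum (f := fun D' => (g D - g D') ^ 2) (fun _ _ => sq_nonneg _)
      (by rw [mem_filter, mem_XX]; exact ⟨h', h.2, h.1⟩)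

set_option maxHeartbeats 2000000 in
theorem poincare_X {κ n : ℕ} (hκ : 0 < κ) (hn : 0 < n) (g : Finset (ℕ × ℕ) → ℝ)
    (hg : ∑ D ∈ XX κ n, g D = 0) :
    ∑ D ∈ XX κ n, g D ^ 2 ≤ ((κ * n + 2 : ℕ) : ℝ) ^ 11 * ∑ D ∈ XX κ n, hE κ n g D := by
  classical
  set M := κ * n + 1 with hM
  have hMn : n ≤ κ * n := Nat.le_mul_of_pos_left n hκ
  set EN := ∑ D ∈ XX κ n, hE κ n g D with hEN
  have hEN0 : 0 ≤ EN := Finset.sum_nonneg (fun _ _ => hE_nonneg _ _ _ _)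
  have hinj : Set.InjOn SS ((XX κ n : Finset _) : Set (Finset (ℕ × ℕ))) := by
    intro D hD D' hD' hS
    exact SS_inj (mem_XX.1 hD) (mem_XX.1 hD') hS
  set W := (XX κ n).image SS with hWdef
  have hW : ∀ w, w ∈ W ↔ IsW M n (ellK κ n) w := by
    intro w
    rw [hWdef, mem_image]
    constructor
    · rintro ⟨D, hD, rfl⟩; exact (mem_XX.1 hD).isW hκ
    · intro hw
      obtain ⟨D, hD, hS⟩ := SS_surj hκ hn _ w hw rfl
      exact ⟨D, mem_XX.2 hD, hS⟩
  set f : (ℕ → ℕ) → ℝ := fun w => g (Function.invFunOn SS ((XX κ n : Finset _) : Set (Finset (ℕ × ℕ))) w) with hf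
  have hfS : ∀ D ∈ XX κ n, f (SS D) = g D := by
    intro D hD
    simp only [hf]
    rw [hinj.leftInvOn_invFunOn hD]
  have hsum0 : ∑ w ∈ W, f w = 0 := by
    rw [hWdef, sum_image hinj, ← hg]
    exact Finset.sum_congr rfl hfS
  have hP := poincare_W W hW (by omega) f hsum0
  rw [hWdef, sum_image hinj, sum_image hinj] at hP
  have e1 : ∑ D ∈ XX κ n, f (SS D) ^ 2 = ∑ D ∈ XX κ n, g D ^ 2 :=
    Finset.sum_congr rfl (fun D hD => by rw [hfS D hD])
  rw [e1] at hP
  -- ladder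
  have hlad : ∀ (D : Finset (ℕ × ℕ)) (a : ℕ), ∃ (b c : ℕ) (Y : ℕ → Finset (ℕ × ℕ)),
      Good κ n D → 0 < a → (∃ b0, (a, b0) ∈ D) → b ≤ κ * n + 1 ∧ c ≤ κ * n + 1 ∧ Y 0 = D ∧ (∀ i ≤ a, Good κ n (Y i)) ∧
      (∀ i < a, Y (i + 1) = Y i ∨ AdjD (Y i) (Y (i + 1))) ∧
      (∀ j, SS (Y a) j = SS D j + if j = a then 1 else 0) ∧
      (∀ i, 1 ≤ i → i ≤ a → D = decL a b c i (Y i)) := by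
    intro D a
    by_cases h : Good κ n D ∧ 0 < a ∧ (∃ b0, (a, b0) ∈ D)
    · obtain ⟨h1, h2, b0, h3⟩ := h
      obtain ⟨b, c, h4, h5, Y, h6⟩ := h1.ladder h2 h3
      exact ⟨b, c, Y, fun _ _ _ => ⟨h4, h5, h6⟩⟩
    · exact ⟨0, 0, fun _ => ∅, fun h1 h2 h3 => absurd ⟨h1, h2, h3⟩ h⟩
  choose b c Y hY using hlad
  set A : ℕ → Finset (Finset (ℕ × ℕ)) := fun a => (XX κ n).filter (fun D => ∃ b0, (a, b0) ∈ D) with hA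
  have hcong : ∀ a i, 0 < a → i < a →
      ∑ D ∈ A a, (g (Y D a (i + 1)) - g (Y D a i)) ^ 2 ≤ ((κ * n + 2 : ℕ) : ℝ) ^ 2 * EN := by
    intro a i ha hi
    have hmap : ∀ D ∈ A a, (b D a, c D a) ∈ range (κ * n + 2) ×ˢ range (κ * n + 2) := by
      intro D hD
      simp only [hA, mem_filter] at hD
      have := hY D a (mem_XX.1 hD.1) ha hD.2
      simp only [mem_product, mem_range]; omega
    rw [← Finset.sum_fiberwise_of_maps_to hmap]
    have : ∀ bc ∈ range (κ * n + 2) ×ˢ range (κ * n + 2),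
        ∑ D ∈ A a with (b D a, c D a) = bc, (g (Y D a (i + 1)) - g (Y D a i)) ^ 2 ≤ EN := by
      rintro ⟨b0, c0⟩ -
      have hmem : ∀ D ∈ (A a).filter (fun D => (b D a, c D a) = (b0, c0)),
          Good κ n D ∧ (∃ b0, (a, b0) ∈ D) ∧ b D a = b0 ∧ c D a = c0 := by
        intro D hD
        simp only [hA, mem_filter, Prod.mk.injEq] at hD
        exact ⟨mem_XX.1 hD.1.1, hD.1.2, hD.2⟩
      have hI : Set.InjOn (fun D => Y D a (i + 1)) (((A a).filter (fun D => (b D a, c D a) = (b0, c0)) : Finset _) : Set (Finset (ℕ × ℕ))) := by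
        intro D hD D' hD' heq
        obtain ⟨h1, h2, h3, h4⟩ := hmem D hD
        obtain ⟨h1', h2', h3', h4'⟩ := hmem D' hD'
        have k := (hY D a h1 ha h2).2.2.2.2.2.2 (i + 1) (by omega) (by omega)
        have k' := (hY D' a h1' ha h2').2.2.2.2.2.2 (i + 1) (by omega) (by omega)
        simp only at heq
        rw [k, k', heq, h3, h4, h3', h4']
      calc ∑ D ∈ A a with (b D a, c D a) = (b0, c0), (g (Y D a (i + 1)) - g (Y D a i)) ^ 2
          ≤ ∑ D ∈ A a with (b D a, c D a) = (b0, c0), hE κ n g (Y D a (i + 1)) := by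
            apply Finset.sum_le_sum
            intro D hD
            obtain ⟨h1, h2, h3, h4⟩ := hmem D hD
            have k := hY D a h1 ha h2
            exact hE_le g (k.2.2.2.1 i (by omega)) (k.2.2.2.2.1 i hi)
        _ = ∑ Z ∈ ((A a).filter (fun D => (b D a, c D a) = (b0, c0))).image (fun D => Y D a (i + 1)), hE κ n g Z := by
            rw [sum_image hI]
        _ ≤ EN := by
            apply Finset.sum_le_sum_of_subset_of_nonneg
            · intro Z hZ
              rw [mem_image] at hZ
              obtain ⟨D, hD, rfl⟩ := hZ
              obtain ⟨h1, h2, h3, h4⟩ := hmem D hD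
              exact mem_XX.2 ((hY D a h1 ha h2).2.2.2.1 (i + 1) (by omega))
            · intro _ _ _; exact hE_nonneg _ _ _ _
    refine (Finset.sum_le_card_nsmul _ _ _ this).trans (le_of_eq ?_)
    rw [card_product, card_range, nsmul_eq_mul]; push_cast; ring
  have hGG : ∀ i ∈ range (M - 1), ∑ D ∈ XX κ n, GG f (i + 1) (SS D) ≤
      ((κ * n + 2 : ℕ) : ℝ) ^ 4 * EN := by
    intro i hi
    rw [mem_range] at hi
    set a := i + 1 with ha
    have ha0 : 0 < a := Nat.succ_pos i
    have h1 : ∑ D ∈ XX κ n, GG f a (SS D) = ∑ D ∈ A a, GG f a (SS D) := by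
      symm
      apply Finset.sum_subset (filter_subset _ _)
      intro D hD hnot
      unfold GG
      rw [if_neg]
      intro hlt
      rw [SS_succ D a] at hlt
      obtain ⟨⟨u, v⟩, he⟩ := card_pos.1 (Nat.pos_of_lt_add_right hlt : 0 < (D.filter (fun e => e.1 = a)).card)
      simp only [mem_filter] at he
      apply hnot
      simp only [hA, mem_filter]
      exact ⟨hD, v, by rw [← he.2]; exact he.1⟩
    rw [h1]
    have h2 : ∀ D ∈ A a, GG f a (SS D) ≤ (a : ℝ) * ∑ q ∈ range a, (g (Y D a (q + 1)) - g (Y D a q)) ^ 2 := by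
      intro D hD
      simp only [hA, mem_filter] at hD
      have hG := mem_XX.1 hD.1
      have k := hY D a hG ha0 hD.2
      unfold GG
      split_ifs with hlt
      · have e2 : Function.update (SS D) a (SS D a + 1) = SS (Y D a a) := by
          funext j
          rw [k.2.2.2.2.2.1 j]
          by_cases hj : j = a
          · rw [hj, Function.update_self, if_pos rfl]
          · rw [Function.update_of_ne hj, if_neg hj, add_zero]
        rw [e2, hfS _ (mem_XX.2 (k.2.2.2.1 a le_rfl)), hfS D hD.1]
        have e3 : g (Y D a a) - g D = ∑ q ∈ range a, (g (Y D a (q + 1)) - g (Y D a q)) := by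
          rw [Finset.sum_range_sub (fun q => g (Y D a q)), k.2.2.1]
        rw [e3]
        have := sq_sum_le_card_mul_sum_sq (s := range a) (f := fun q => g (Y D a (q + 1)) - g (Y D a q))
        rw [card_range] at this
        exact this
      · exact mul_nonneg (by positivity) (Finset.sum_nonneg (fun _ _ => sq_nonneg _))
    refine (Finset.sum_le_sum h2).trans ?_
    rw [← Finset.mul_sum, Finset.sum_comm]
    have h3 : ∑ q ∈ range a, ∑ D ∈ A a, (g (Y D a (q + 1)) - g (Y D a q)) ^ 2 ≤
        ∑ q ∈ range a, ((κ * n + 2 : ℕ) : ℝ) ^ 2 * EN :=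
      Finset.sum_le_sum (fun q hq => hcong a q ha0 (mem_range.1 hq))
    rw [Finset.sum_const, card_range, nsmul_eq_mul] at h3
    have haM : (a : ℝ) ≤ ((κ * n + 2 : ℕ) : ℝ) := by exact_mod_cast (by omega)
    calc (a : ℝ) * ∑ q ∈ range a, ∑ D ∈ A a, (g (Y D a (q + 1)) - g (Y D a q)) ^ 2
        ≤ (a : ℝ) * (a * (((κ * n + 2 : ℕ) : ℝ) ^ 2 * EN)) := mul_le_mul_of_nonneg_left h3 (by positivity)
      _ = (a : ℝ) ^ 2 * (((κ * n + 2 : ℕ) : ℝ) ^ 2 * EN) := by ring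
      _ ≤ ((κ * n + 2 : ℕ) : ℝ) ^ 2 * (((κ * n + 2 : ℕ) : ℝ) ^ 2 * EN) := by gcongr
      _ = _ := by ring
  have htot : ∑ D ∈ XX κ n, ∑ i ∈ range (M - 1), GG f (i + 1) (SS D) ≤ ((κ * n + 2 : ℕ) : ℝ) ^ 5 * EN := by
    rw [Finset.sum_comm]
    refine (Finset.sum_le_card_nsmul _ _ _ hGG).trans ?_
    rw [card_range, nsmul_eq_mul]
    have h1 : ((M - 1 : ℕ) : ℝ) ≤ ((κ * n + 2 : ℕ) : ℝ) := by exact_mod_cast (by omega)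
    calc ((M - 1 : ℕ) : ℝ) * (((κ * n + 2 : ℕ) : ℝ) ^ 4 * EN) ≤ ((κ * n + 2 : ℕ) : ℝ) * (((κ * n + 2 : ℕ) : ℝ) ^ 4 * EN) := by gcongr
      _ = _ := by ring
  have hML : (M : ℝ) ≤ ((κ * n + 2 : ℕ) : ℝ) := by exact_mod_cast (by omega)
  have hnL : (n : ℝ) + 1 ≤ ((κ * n + 2 : ℕ) : ℝ) := by exact_mod_cast (by omega)
  calc ∑ D ∈ XX κ n, g D ^ 2 ≤ (M : ℝ) ^ 3 * ((n : ℝ) + 1) ^ 3 * ∑ D ∈ XX κ n, ∑ i ∈ range (M - 1), GG f (i + 1) (SS D) := hP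
    _ ≤ ((κ * n + 2 : ℕ) : ℝ) ^ 3 * ((κ * n + 2 : ℕ) : ℝ) ^ 3 * (((κ * n + 2 : ℕ) : ℝ) ^ 5 * EN) := by
        gcongr
        exact Finset.sum_nonneg (fun _ _ => Finset.sum_nonneg (fun _ _ => GG_nonneg _ _ _))
    _ = _ := by ring

end PartE3

section PartC1

def rk (A : Finset ℕ) (x : ℕ) : ℕ := (A.filter (fun y => y < x)).card

theorem rk_lt {A : Finset ℕ} {x y : ℕ} (hx : x ∈ A) (hxy : x < y) : rk A x < rk A y := by
  unfold rk
  apply card_lt_card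
  rw [ssubset_iff_of_subset]
  · exact ⟨x, by simp [hx, hxy], by simp⟩
  · intro z; simp only [mem_filter]; rintro ⟨h1, h2⟩; exact ⟨h1, by omega⟩

theorem rk_lt_card {A : Finset ℕ} {x : ℕ} (hx : x ∈ A) : rk A x < A.card := by
  unfold rk
  apply card_lt_card
  rw [ssubset_iff_of_subset (filter_subset _ _)]
  exact ⟨x, hx, by simp⟩

theorem rk_inj {A : Finset ℕ} {x y : ℕ} (hx : x ∈ A) (hy : y ∈ A) (h : rk A x = rk A y) : x = y := by
  rcases lt_trichotomy x y with h1 | h1 | h1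
  · have := rk_lt hx h1; omega
  · exact h1
  · have := rk_lt hy h1; omega

theorem rk_lt_iff {A : Finset ℕ} {x y : ℕ} (hx : x ∈ A) (h : rk A x < rk A y) : x < y := by
  by_contra hcon
  have : rk A y ≤ rk A x := by
    unfold rk; apply card_le_card; intro z; simp only [mem_filter]; rintro ⟨h1, h2⟩; exact ⟨h1, by omega⟩
  omega

theorem rk_pairs_card {A : Finset ℕ} {κ : ℕ} (hA : A.card = 2 * κ + 2) :
    ((A ×ˢ A).filter (fun e => rk A e.2 = rk A e.1 + κ + 1)).card = κ + 1 := by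
  rw [← card_range (κ + 1)]
  apply card_bij (fun e _ => rk A e.1)
  · rintro ⟨c, d⟩ h
    simp only [mem_filter, mem_product] at h
    have := rk_lt_card h.1.2
    simp only [mem_range]; omega
  · rintro ⟨c, d⟩ h ⟨c', d'⟩ h' heq
    simp only [mem_filter, mem_product] at h h' heq
    have e1 := rk_inj h.1.1 h'.1.1 heq
    have e2 := rk_inj h.1.2 h'.1.2 (by omega)
    rw [e1, e2]
  · intro i hi
    rw [mem_range] at hi
    obtain ⟨c, hc, hci⟩ := rank_surj A (i := i) (by omega)
    obtain ⟨d, hd, hdi⟩ := rank_surj A (i := i + κ + 1) (by omega)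
    refine ⟨(c, d), ?_, hci⟩
    simp only [mem_filter, mem_product]
    refine ⟨⟨hc, hd⟩, ?_⟩
    unfold rk; rw [hci, hdi]

/-- uncovered vertices of `[p,q]` -/
def unc (D : Finset (ℕ × ℕ)) (p q : ℕ) : Finset ℕ :=
  (Icc p q).filter (fun x => ∀ e ∈ D, p ≤ e.1 → e.2 ≤ q → ¬ (e.1 < x ∧ x < e.2))

theorem mem_unc {D : Finset (ℕ × ℕ)} {p q x : ℕ} : x ∈ unc D p q ↔ (p ≤ x ∧ x ≤ q) ∧
    ∀ e ∈ D, p ≤ e.1 → e.2 ≤ q → ¬ (e.1 < x ∧ x < e.2) := by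
  unfold unc; rw [mem_filter, mem_Icc]

theorem unc_left {D : Finset (ℕ × ℕ)} {p q : ℕ} (h : p ≤ q) : p ∈ unc D p q := by
  rw [mem_unc]; refine ⟨⟨le_rfl, h⟩, ?_⟩; intro e _ _ _; omega

theorem unc_right {D : Finset (ℕ × ℕ)} {p q : ℕ} (h : p ≤ q) : q ∈ unc D p q := by
  rw [mem_unc]; refine ⟨⟨h, le_rfl⟩, ?_⟩; intro e _ _ _; omega

theorem unc_next {D : Finset (ℕ × ℕ)} (hn : NCr D) {p q x y : ℕ}
    (hx : x ∈ unc D p q) (hy : y ∈ unc D p q) (hxy : x < y)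
    (hcons : ∀ z ∈ unc D p q, ¬ (x < z ∧ z < y)) : y = x + 1 ∨ (x, y) ∈ D := by
  classical
  by_cases h1 : y = x + 1
  · left; exact h1
  right
  have hx' := mem_unc.1 hx
  have hy' := mem_unc.1 hy
  have h2 : x + 1 ∉ unc D p q := fun h => hcons _ h ⟨by omega, by omega⟩
  rw [mem_unc] at h2
  push Not at h2
  obtain ⟨⟨u, v⟩, huv, hpu, hvq, hu, hv⟩ := h2 ⟨by omega, by omega⟩
  simp only at hpu hvq hu hv
  have hux : u = x := by
    have := hx'.2 _ huv hpu hvq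
    simp only at this; omega
  subst hux
  obtain ⟨d, hd, hmax⟩ := exists_max_image ((range (q + 1)).filter (fun d => (u, d) ∈ D)) id
    ⟨v, by simp only [mem_filter, mem_range]; exact ⟨by omega, huv⟩⟩
  simp only [mem_filter, mem_range, id] at hd hmax
  have hvd := hmax v ⟨by omega, huv⟩
  have hdG : d ∈ unc D p q := by
    rw [mem_unc]
    refine ⟨⟨by omega, by omega⟩, ?_⟩
    rintro ⟨u', v'⟩ h3 h4 h5 ⟨h6, h7⟩
    simp only at h4 h5 h6 h7
    have c1 := hn _ hd.2 _ h3
    have c2 := hx'.2 _ h3 h4 h5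
    simp only at c1 c2
    have : u' = u := by omega
    subst this
    have := hmax v' ⟨by omega, h3⟩
    omega
  have h8 := hcons d hdG
  have h9 := hy'.2 _ hd.2 (by simp only; omega) (by simp only; omega)
  simp only at h9
  have : y = d := by omega
  rw [this]; exact hd.2

/-- counting lemma along a face -/
theorem face_count {κ : ℕ} {D : Finset (ℕ × ℕ)} (hc : ∀ e ∈ D, e.1 + 2 ≤ e.2) {F : Finset ℕ} {p q : ℕ}
    (hp : p ∈ F) (hF : ∀ x ∈ F, p ≤ x ∧ x ≤ q)
    (h1 : ∀ x ∈ F, ∀ e ∈ D, p ≤ e.1 → e.2 ≤ q → ¬ (e.1 < x ∧ x < e.2))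
    (h2 : ∀ x ∈ F, ∀ y ∈ F, x < y → (∀ z ∈ F, ¬ (x < z ∧ z < y)) → κ * NN D x y + x + 1 = y) :
    ∀ x ∈ F, ∀ y ∈ F, x ≤ y → κ * NN D x y + rk F y + x = y + rk F x := by
  classical
  intro x hx y
  induction y using Nat.strong_induction_on with
  | _ y ih =>
  intro hy hxy
  rcases Nat.eq_or_lt_of_le hxy with heq | hlt
  · subst heq
    rw [nn_of_ge hc x x (by omega)]; omega
  obtain ⟨z, hz, hmax⟩ := exists_max_image (F.filter (fun z => z < y)) id
    ⟨x, by simp only [mem_filter]; exact ⟨hx, hlt⟩⟩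
  simp only [mem_filter, id] at hz hmax
  have hxz := hmax x ⟨hx, hlt⟩
  have e1 := ih z hz.2 hz.1 hxz
  have e2 := h2 z hz.1 y hy hz.2 (by
    rintro w hw ⟨h3, h4⟩
    have := hmax w ⟨hw, h4⟩; omega)
  have e3 : rk F y = rk F z + 1 := by
    unfold rk
    have : F.filter (fun w => w < y) = insert z (F.filter (fun w => w < z)) := by
      ext w; simp only [mem_filter, mem_insert]
      constructor
      · rintro ⟨h3, h4⟩
        have := hmax w ⟨h3, h4⟩
        by_cases h5 : w = z
        · left; exact h5
        · right; exact ⟨h3, by omega⟩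
      · rintro (rfl | h3)
        · exact hz
        · exact ⟨h3.1, by omega⟩
    rw [this, card_insert_of_notMem (by simp)]
  have e4 : NN D x y = NN D x z + NN D z y := by
    unfold NN
    rw [← card_union_of_disjoint, ← filter_or]
    · congr 1
      apply filter_congr
      intro e he
      have a1 := (hF x hx)
      have a2 := (hF y hy)
      constructor
      · rintro ⟨b1, b2⟩
        have := h1 z hz.1 e he (by omega) (by omega)
        omega
      · omega
    · rw [disjoint_filter]
      intro e he
      have := hc e he
      omega
  rw [e4, e3, mul_add]
  omega

theorem nn_insert {D : Finset (ℕ × ℕ)} {e : ℕ × ℕ} (he : e ∉ D) (i j : ℕ) :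
    NN (insert e D) i j = NN D i j + if i ≤ e.1 ∧ e.2 ≤ j then 1 else 0 := by
  unfold NN
  rw [filter_insert]
  split_ifs
  · rw [card_insert_of_notMem (by simp [he])]
  · rfl

theorem nn_erase {D : Finset (ℕ × ℕ)} {e : ℕ × ℕ} (he : e ∈ D) (i j : ℕ) :
    NN D i j = NN (D.erase e) i j + if i ≤ e.1 ∧ e.2 ≤ j then 1 else 0 := by
  rw [← nn_insert (notMem_erase e D), insert_erase he]

theorem NCr.mono {D D' : Finset (ℕ × ℕ)} (h : NCr D) (hs : D' ⊆ D) : NCr D' :=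
  fun e he f hf => h e (hs he) f (hs hf)

end PartC1

section PartC2

section
variable {κ n : ℕ} {D : Finset (ℕ × ℕ)}

theorem Good.parent (h : Good κ n D) {e : ℕ × ℕ} (he : e ∈ D) (hne : e ≠ (0, κ * n + 1)) :
    ∃ p q, (p, q) ∈ D ∧ (p, q) ≠ e ∧ p ≤ e.1 ∧ e.2 ≤ q ∧
      ∀ u v, (u, v) ∈ D → (u, v) ≠ e → u ≤ e.1 → e.2 ≤ v → p ≤ u → v ≤ q → u = p ∧ v = q := by
  classical
  obtain ⟨⟨p, q⟩, h1, h2⟩ := exists_min_image (D.filter (fun f => f ≠ e ∧ f.1 ≤ e.1 ∧ e.2 ≤ f.2))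
    (fun f => f.2 - f.1) ⟨(0, κ * n + 1), by
      rw [mem_filter]; exact ⟨h.root, hne.symm, Nat.zero_le _, h.bd e he⟩⟩
  simp only [mem_filter] at h1
  refine ⟨p, q, h1.1, h1.2.1, h1.2.2.1, h1.2.2.2, ?_⟩
  intro u v h3 h4 h5 h6 h7 h8
  have := h2 (u, v) (by rw [mem_filter]; exact ⟨h3, h4, h5, h6⟩)
  have := h.chord _ h3
  simp only at *
  omega

/-- the set of possible replacements for `e` (including `e`) is the set of opposite pairs -/
theorem Good.flips (hκ : 0 < κ) (h : Good κ n D) {e : ℕ × ℕ} (he : e ∈ D) (hne : e ≠ (0, κ * n + 1)) :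
    ∃ G : Finset ℕ, G.card = 2 * κ + 2 ∧ ∀ e', (e' ∉ D.erase e ∧ Good κ n (insert e' (D.erase e))) ↔
      e' ∈ (G ×ˢ G).filter (fun f => rk G f.2 = rk G f.1 + κ + 1) := by
  classical
  obtain ⟨p, q, hpq, hpqe, hpe, heq, hmin⟩ := h.parent he hne
  set D0 := D.erase e with hD0
  set D1 := D0.erase (p, q) with hD1
  have hpq0 : (p, q) ∈ D0 := mem_erase.2 ⟨hpqe, hpq⟩
  have h0D : D0 ⊆ D := erase_subset _ _
  have h10 : D1 ⊆ D0 := erase_subset _ _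
  have h1D : D1 ⊆ D := h10.trans h0D
  have hce := h.chord _ he
  have hcpq := h.chord _ hpq
  simp only at hcpq
  set G := unc D1 p q with hG
  have hc1 : ∀ f ∈ D1, f.1 + 2 ≤ f.2 := fun f hf => h.chord f (h1D hf)
  have hn1 : NCr D1 := h.nc.mono h1D
  have hNN : ∀ i j, NN D i j = NN D1 i j + (if i ≤ p ∧ q ≤ j then 1 else 0) + (if i ≤ e.1 ∧ e.2 ≤ j then 1 else 0) := by
    intro i j
    rw [nn_erase he, nn_erase hpq0]
  -- pairs of D1 within [p,q] do not contain e
  have hnoe : ∀ u v, (u, v) ∈ D1 → p ≤ u → v ≤ q → ¬ (u ≤ e.1 ∧ e.2 ≤ v) := by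
    rintro u v huv h1 h2 ⟨h3, h4⟩
    have huv' := mem_erase.1 huv
    have huv'' := mem_erase.1 huv'.2
    have := hmin u v huv''.2 huv''.1 h3 h4 h1 h2
    exact huv'.1 (by rw [this.1, this.2])
  have hsat1 : ∀ u v, (u, v) ∈ D1 → p ≤ u → v ≤ q → κ * NN D1 u v + u + 1 = v := by
    intro u v huv h1 h2
    have h3 := h.sat u v (h1D huv)
    have h4 := hnoe u v huv h1 h2
    rw [hNN, if_neg h4, if_neg] at h3
    · exact h3
    · rintro ⟨h5, h6⟩
      have : (u, v) = (p, q) := by rw [show u = p by omega, show v = q by omega]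
      exact (mem_erase.1 huv).1 this
  have hcount := face_count (κ := κ) hc1 (unc_left (D := D1) (p := p) (q := q) (by omega))
    (fun x hx => (mem_unc.1 hx).1) (fun x hx => (mem_unc.1 hx).2) (by
      intro x hx y hy hxy hcons
      have hx' := (mem_unc.1 hx).1
      have hy' := (mem_unc.1 hy).1
      rcases unc_next hn1 hx hy hxy hcons with h1 | h1
      · rw [nn_of_ge hc1 x y (by omega)]; omega
      · exact hsat1 x y h1 hx'.1 hy'.2)
  rw [← hG] at hcount
  have hpG : p ∈ G := unc_left (by omega)
  have hqG : q ∈ G := unc_right (by omega)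
  have hrp : rk G p = 0 := by
    unfold rk; rw [card_eq_zero]; ext x
    simp only [mem_filter, notMem_empty, iff_false]
    rintro ⟨h1, h2⟩
    have := (mem_unc.1 h1).1; omega
  have hrq : rk G q + 1 = G.card := by
    unfold rk
    have : G = insert q (G.filter (fun y => y < q)) := by
      ext x; simp only [mem_insert, mem_filter]
      constructor
      · intro hx
        have := (mem_unc.1 hx).1
        by_cases h5 : x = q
        · left; exact h5
        · right; exact ⟨hx, by omega⟩
      · rintro (rfl | h3)
        · exact hqG
        · exact h3.1
    conv_rhs => rw [this]
    rw [card_insert_of_notMem (by simp)]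
  have hcard : G.card = 2 * κ + 2 := by
    have h1 := hcount p hpG q hqG (by omega)
    have h2 := h.sat p q hpq
    rw [hNN, if_pos ⟨le_rfl, le_rfl⟩, if_pos ⟨hpe, heq⟩] at h2
    rw [mul_add, mul_add] at h2
    omega
  refine ⟨G, hcard, ?_⟩
  rintro ⟨c, d⟩
  simp only [mem_filter, mem_product]
  constructor
  · rintro ⟨hnot, hgood⟩
    have hmem : (c, d) ∈ insert (c, d) D0 := mem_insert_self _ _
    have hcd := hgood.chord _ hmem
    simp only at hcd
    have hD' : ∀ i j, NN (insert (c, d) D0) i j = NN D1 i j + (if i ≤ p ∧ q ≤ j then 1 else 0) + (if i ≤ c ∧ d ≤ j then 1 else 0) := by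
      intro i j
      rw [nn_insert hnot, nn_erase hpq0]
    have hsame : ∀ u v, (u, v) ∈ D0 → (u ≤ e.1 ∧ e.2 ≤ v ↔ u ≤ c ∧ d ≤ v) := by
      intro u v huv
      have h1 := h.sat u v (h0D huv)
      have h2 := hgood.sat u v (mem_insert_of_mem huv)
      have h3 : κ * NN D u v = κ * NN (insert (c, d) D0) u v := by omega
      have h4 := Nat.eq_of_mul_eq_mul_left hκ h3
      rw [hNN, hD'] at h4
      by_cases a1 : u ≤ e.1 ∧ e.2 ≤ v <;> by_cases a2 : u ≤ c ∧ d ≤ v <;> simp only [a1, a2, if_true, if_false] at h4 ⊢ <;> simp at h4 ⊢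
    have hin := (hsame p q hpq0).1 ⟨hpe, heq⟩
    have hcG : c ∈ G := by
      rw [hG, mem_unc]
      refine ⟨⟨by omega, by omega⟩, ?_⟩
      rintro ⟨u, v⟩ huv h1 h2 ⟨h3, h4⟩
      simp only at h1 h2 h3 h4
      have h5 := hgood.nc _ (mem_insert_of_mem (h10 huv)) _ hmem
      simp only at h5
      exact hnoe u v huv h1 h2 ((hsame u v (h10 huv)).2 ⟨by omega, by omega⟩)
    have hdG : d ∈ G := by
      rw [hG, mem_unc]
      refine ⟨⟨by omega, by omega⟩, ?_⟩
      rintro ⟨u, v⟩ huv h1 h2 ⟨h3, h4⟩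
      simp only at h1 h2 h3 h4
      have h5 := hgood.nc _ hmem _ (mem_insert_of_mem (h10 huv))
      simp only at h5
      exact hnoe u v huv h1 h2 ((hsame u v (h10 huv)).2 ⟨by omega, by omega⟩)
    refine ⟨⟨hcG, hdG⟩, ?_⟩
    have h1 := hcount c hcG d hdG (by omega)
    have h2 := hgood.sat c d hmem
    rw [hD', if_pos (⟨le_rfl, le_rfl⟩ : c ≤ c ∧ d ≤ d), if_neg, mul_add, mul_add] at h2
    · omega
    · rintro ⟨h5, h6⟩
      have : (c, d) = (p, q) := by rw [show c = p by omega, show d = q by omega]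
      exact hnot (by rw [this]; exact hpq0)
  · rintro ⟨⟨hcG, hdG⟩, hr⟩
    have hlt : c < d := rk_lt_iff hcG (by omega)
    have h1 := hcount c hcG d hdG hlt.le
    have hc' := mem_unc.1 hcG
    have hd' := mem_unc.1 hdG
    have hnot : (c, d) ∉ D0 := by
      intro hcd
      by_cases h2 : (c, d) = (p, q)
      · simp only [Prod.mk.injEq] at h2
        rw [h2.1, h2.2] at hr
        omega
      · have := hsat1 c d (mem_erase.2 ⟨h2, hcd⟩) hc'.1.1 hd'.1.2
        omega
    refine ⟨hnot, ?_⟩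
    have hpqM := h.bd _ hpq
    simp only at hpqM
    have key : ∀ f ∈ D0, ¬ (f.1 < c ∧ c < f.2 ∧ f.2 < d) ∧ ¬ (c < f.1 ∧ f.1 < d ∧ d < f.2) := by
      rintro ⟨u, v⟩ hf
      simp only
      have n1 := h.nc _ (h0D hf) _ hpq
      have n2 := h.nc _ hpq _ (h0D hf)
      simp only at n1 n2
      by_cases h2 : (u, v) = (p, q)
      · simp only [Prod.mk.injEq] at h2; omega
      · have hf1 : (u, v) ∈ D1 := mem_erase.2 ⟨h2, hf⟩
        by_cases h3 : p ≤ u ∧ v ≤ q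
        · have := hc'.2 _ hf1 h3.1 h3.2
          have := hd'.2 _ hf1 h3.1 h3.2
          simp only at *
          omega
        · omega
    refine ⟨?_, ?_, ?_, ?_, ?_, ?_⟩
    · intro f hf
      rcases mem_insert.1 hf with rfl | hf
      · simp only; omega
      · exact h.chord f (h0D hf)
    · intro f hf
      rcases mem_insert.1 hf with rfl | hf
      · simp only; omega
      · exact h.bd f (h0D hf)
    · intro f hf
      rcases mem_insert.1 hf with rfl | hf
      · refine ⟨NN D1 c d + 1, ?_⟩
        rw [mul_add]; simp only; omega
      · exact h.allow f (h0D hf)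
    · intro f hf g hg
      rcases mem_insert.1 hf with rfl | hf
      · rcases mem_insert.1 hg with rfl | hg
        · omega
        · exact (key g hg).2
      · rcases mem_insert.1 hg with rfl | hg
        · exact (key f hf).1
        · exact h.nc f (h0D hf) g (h0D hg)
    · exact mem_insert_of_mem (mem_erase.2 ⟨hne.symm, h.root⟩)
    · rw [card_insert_of_notMem hnot, hD0, card_erase_of_mem he, h.card]
      have := card_pos.2 ⟨e, he⟩
      rw [h.card] at this; omega

theorem adjD_iff {D D' : Finset (ℕ × ℕ)} : AdjD D D' ↔ ∃ e ∈ D, ∃ e', e' ∉ D ∧ D' = insert e' (D.erase e) := by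
  constructor
  · rintro ⟨h1, h2⟩
    obtain ⟨e, he⟩ := card_eq_one.1 h1
    obtain ⟨e', he'⟩ := card_eq_one.1 h2
    have a1 : ∀ x, (x ∈ D ∧ x ∉ D') ↔ x = e := by intro x; rw [← mem_sdiff, he, mem_singleton]
    have a2 : ∀ x, (x ∈ D' ∧ x ∉ D) ↔ x = e' := by intro x; rw [← mem_sdiff, he', mem_singleton]
    refine ⟨e, ((a1 e).2 rfl).1, e', ((a2 e').2 rfl).2, ?_⟩
    ext x
    rw [mem_insert, mem_erase]
    have := a1 x
    have := a2 x
    tauto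
  · rintro ⟨e, he, e', he', rfl⟩; exact swap_adj he he'

open Classical in
theorem Good.degree (hκ : 0 < κ) (h : Good κ n D) :
    ((XX κ n).filter (fun D' => AdjD D D')).card = (n - 1) * κ := by
  have hfl : ∀ e, ∃ E : Finset (ℕ × ℕ), e ∈ D.erase (0, κ * n + 1) →
      E.card = κ ∧ ∀ e', e' ∈ E ↔ (e' ∉ D ∧ Good κ n (insert e' (D.erase e))) := by
    intro e
    by_cases he : e ∈ D.erase (0, κ * n + 1)
    · have he' := mem_erase.1 he
      obtain ⟨G, hG, hiff⟩ := h.flips hκ he'.2 he'.1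
      refine ⟨((G ×ˢ G).filter (fun f => rk G f.2 = rk G f.1 + κ + 1)).erase e, fun _ => ⟨?_, ?_⟩⟩
      · rw [card_erase_of_mem, rk_pairs_card hG]
        · omega
        · rw [← hiff]; exact ⟨notMem_erase _ _, by rw [insert_erase he'.2]; exact h⟩
      · intro e'
        rw [mem_erase, ← hiff, mem_erase]
        constructor
        · rintro ⟨h1, h2, h3⟩; exact ⟨fun h4 => h2 ⟨h1, h4⟩, h3⟩
        · rintro ⟨h1, h2⟩
          refine ⟨?_, fun h3 => h1 h3.2, h2⟩
          rintro rfl; exact h1 he'.2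
    · exact ⟨∅, fun h => absurd h he⟩
  choose E hE using hfl
  have heq : (XX κ n).filter (fun D' => AdjD D D') =
      (D.erase (0, κ * n + 1)).biUnion (fun e => (E e).image (fun e' => insert e' (D.erase e))) := by
    ext D'
    rw [mem_filter, mem_biUnion, mem_XX, adjD_iff]
    constructor
    · rintro ⟨hg, e, he, e', he', rfl⟩
      have hr : e ∈ D.erase (0, κ * n + 1) := by
        rw [mem_erase]
        refine ⟨?_, he⟩
        rintro rfl
        have := hg.root
        rw [mem_insert] at this
        rcases this with h1 | h1
        · rw [h1] at he; exact he' he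
        · exact notMem_erase _ _ h1
      exact ⟨e, hr, mem_image.2 ⟨e', ((hE e hr).2 e').2 ⟨he', hg⟩, rfl⟩⟩
    · rintro ⟨e, he, h1⟩
      obtain ⟨e', he', rfl⟩ := mem_image.1 h1
      have := ((hE e he).2 e').1 he'
      exact ⟨this.2, e, (mem_erase.1 he).2, e', this.1, rfl⟩
  have hsd : ∀ e ∈ D, ∀ e', e' ∉ D → D \ insert e' (D.erase e) = {e} ∧ insert e' (D.erase e) \ D = {e'} := by
    intro e he e' he'
    constructor
    · ext x; rw [mem_sdiff, mem_insert, mem_erase, mem_singleton]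
      constructor
      · tauto
      · rintro rfl
        refine ⟨he, ?_⟩
        rintro (h1 | h1)
        · rw [h1] at he; exact he' he
        · exact h1.1 rfl
    · ext x; rw [mem_sdiff, mem_insert, mem_erase, mem_singleton]
      constructor
      · tauto
      · rintro rfl; exact ⟨Or.inl rfl, he'⟩
  rw [heq, card_biUnion]
  · have : ∀ e ∈ D.erase (0, κ * n + 1), ((E e).image (fun e' => insert e' (D.erase e))).card = κ := by
      intro e he
      rw [card_image_of_injOn, (hE e he).1]
      intro x hx y hy hxy
      simp only at hxy
      have h1 := (hsd e (mem_erase.1 he).2 x (((hE e he).2 x).1 hx).1).2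
      have h2 := (hsd e (mem_erase.1 he).2 y (((hE e he).2 y).1 hy).1).2
      rw [hxy, h2] at h1
      exact (singleton_injective h1).symm
    rw [Finset.sum_congr rfl this, Finset.sum_const, card_erase_of_mem h.root, h.card, smul_eq_mul]
  · intro e he f hf hef
    rw [Finset.mem_coe] at he hf
    unfold Function.onFun
    rw [disjoint_left]
    intro Z hZ hZ'
    obtain ⟨x, hx, rfl⟩ := mem_image.1 hZ
    obtain ⟨y, hy, hxy⟩ := mem_image.1 hZ'
    have h1 := (hsd e (mem_erase.1 he).2 x (((hE e he).2 x).1 hx).1).1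
    have h2 := (hsd f (mem_erase.1 hf).2 y (((hE f hf).2 y).1 hy).1).1
    rw [hxy, h1] at h2
    exact hef (singleton_injective h2)
end

end PartC2

section PartT1

structure NatFace (D : Finset (ℕ × ℕ)) (F : Finset ℕ) (p q : ℕ) : Prop where
  hp : p ∈ F
  hq : q ∈ F
  bnd : ∀ x ∈ F, p ≤ x ∧ x ≤ q
  three : 3 ≤ F.card
  mem : (p, q) ∈ D
  cons : ∀ x ∈ F, ∀ y ∈ F, x < y → (∀ z ∈ F, ¬ (x < z ∧ z < y)) → y = x + 1 ∨ ((x, y) ∈ D ∧ (x, y) ≠ (p, q))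
  diag : ∀ u v, (u, v) ∈ D → u ∈ F → v ∈ F → (u, v) ≠ (p, q) → ∀ z ∈ F, ¬ (u < z ∧ z < v)

theorem rk_left {F : Finset ℕ} {p q : ℕ} (h : ∀ x ∈ F, p ≤ x ∧ x ≤ q) : rk F p = 0 := by
  unfold rk; rw [card_eq_zero]; ext x
  simp only [mem_filter, notMem_empty, iff_false]
  rintro ⟨h1, h2⟩
  have := h x h1; omega

theorem rk_right {F : Finset ℕ} {p q : ℕ} (h : ∀ x ∈ F, p ≤ x ∧ x ≤ q) (hq : q ∈ F) : rk F q + 1 = F.card := by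
  unfold rk
  have : F = insert q (F.filter (fun y => y < q)) := by
    ext x; simp only [mem_insert, mem_filter]
    constructor
    · intro hx
      have := h x hx
      by_cases h5 : x = q
      · left; exact h5
      · right; exact ⟨hx, by omega⟩
    · rintro (rfl | h3)
      · exact hq
      · exact h3.1
  conv_rhs => rw [this]
  rw [card_insert_of_notMem (by simp)]

theorem NatFace.lt {D : Finset (ℕ × ℕ)} {F : Finset ℕ} {p q : ℕ} (h : NatFace D F p q) : p + 2 ≤ q := by
  have h1 : F ⊆ Icc p q := fun x hx => mem_Icc.2 (h.bnd x hx)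
  have h2 := card_le_card h1
  have h3 := h.three
  rw [Nat.card_Icc] at h2
  omega

theorem exists_cons {F : Finset ℕ} {y0 z0 u : ℕ} (hy : y0 ∈ F) (hz : z0 ∈ F) (h1 : y0 < u) (h2 : u < z0)
    (hu : u ∉ F) : ∃ y ∈ F, ∃ z ∈ F, y0 ≤ y ∧ y < u ∧ u < z ∧ z ≤ z0 ∧ ∀ w ∈ F, ¬ (y < w ∧ w < z) := by
  classical
  obtain ⟨y, hy1, hy2⟩ := exists_max_image (F.filter (fun w => w < u)) id ⟨y0, by simp [hy, h1]⟩
  obtain ⟨z, hz1, hz2⟩ := exists_min_image (F.filter (fun w => u < w)) id ⟨z0, by simp [hz, h2]⟩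
  simp only [mem_filter, id] at hy1 hy2 hz1 hz2
  refine ⟨y, hy1.1, z, hz1.1, hy2 _ ⟨hy, h1⟩, hy1.2, hz1.2, hz2 _ ⟨hz, h2⟩, ?_⟩
  rintro w hw ⟨h3, h4⟩
  rcases lt_trichotomy w u with h | h | h
  · have := hy2 w ⟨hw, h⟩; omega
  · rw [h] at hw; exact hu hw
  · have := hz2 w ⟨hw, h⟩; omega

theorem Good.face_card {κ n : ℕ} {D : Finset (ℕ × ℕ)} (h : Good κ n D) {F : Finset ℕ} {p q : ℕ}
    (hF : NatFace D F p q) : F.card = κ + 2 := by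
  have hlt := hF.lt
  have h1D : D.erase (p, q) ⊆ D := erase_subset _ _
  have hunc : ∀ x ∈ F, ∀ e ∈ D.erase (p, q), p ≤ e.1 → e.2 ≤ q → ¬ (e.1 < x ∧ x < e.2) := by
    rintro x hx ⟨u, v⟩ he hpu hvq ⟨hux, hxv⟩
    simp only at hpu hvq hux hxv
    obtain ⟨hne, heD⟩ := mem_erase.1 he
    have hxb := hF.bnd x hx
    by_cases hu : u ∈ F
    · by_cases hv : v ∈ F
      · exact hF.diag u v heD hu hv hne x hx ⟨hux, hxv⟩
      · have : v ≠ q := by rintro rfl; exact hv hF.hq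
        obtain ⟨y, hy, z, hz, h1, h2, h3, h4, h5⟩ := exists_cons hx hF.hq hxv (by omega) hv
        rcases hF.cons y hy z hz (by omega) h5 with h6 | h6
        · omega
        · have := h.nc _ heD _ h6.1
          simp only at this; omega
    · have : u ≠ p := by rintro rfl; exact hu hF.hp
      obtain ⟨y, hy, z, hz, h1, h2, h3, h4, h5⟩ := exists_cons hF.hp hx (by omega) hux hu
      rcases hF.cons y hy z hz (by omega) h5 with h6 | h6
      · omega
      · have := h.nc _ h6.1 _ heD
        simp only at this; omega
  have hc1 : ∀ e ∈ D.erase (p, q), e.1 + 2 ≤ e.2 := fun e he => h.chord e (h1D he)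
  have hcount := face_count (κ := κ) hc1 hF.hp hF.bnd hunc (by
    intro x hx y hy hxy hcons
    have hx' := hF.bnd x hx
    have hy' := hF.bnd y hy
    rcases hF.cons x hx y hy hxy hcons with h1 | h1
    · rw [nn_of_ge hc1 x y (by omega)]; omega
    · have h2 := h.sat x y h1.1
      rw [nn_erase hF.mem, if_neg, add_zero] at h2
      · exact h2
      · rintro ⟨h3, h4⟩
        simp only at h3 h4
        exact h1.2 (by rw [show x = p by omega, show y = q by omega]))
  have h1 := hcount p hF.hp q hF.hq (by omega)
  have h2 := h.sat p q hF.mem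
  rw [nn_erase hF.mem, if_pos ⟨le_rfl, le_rfl⟩, mul_add] at h2
  rw [rk_left hF.bnd] at h1
  have h3 := rk_right hF.bnd hF.hq
  omega

theorem unc_face {D : Finset (ℕ × ℕ)} (hc : ∀ e ∈ D, e.1 + 2 ≤ e.2) (hn : NCr D) {p q : ℕ} (hpq : (p, q) ∈ D) :
    NatFace D (unc (D.erase (p, q)) p q) p q := by
  have h1D : D.erase (p, q) ⊆ D := erase_subset _ _
  have hlt := hc _ hpq
  simp only at hlt
  refine ⟨unc_left (by omega), unc_right (by omega), fun x hx => (mem_unc.1 hx).1, ?_, hpq, ?_, ?_⟩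
  · obtain ⟨l, hl1, hl2, hl3⟩ := exists_split hc hn p q hlt
    have hl : l ∈ unc (D.erase (p, q)) p q := by
      rw [mem_unc]
      refine ⟨⟨by omega, by omega⟩, ?_⟩
      rintro e he h1 h2 ⟨h3, h4⟩
      have := hl3 e (h1D he) h1 h2 (mem_erase.1 he).1
      omega
    have hsub : ({p, l, q} : Finset ℕ) ⊆ unc (D.erase (p, q)) p q := by
      intro x hx
      simp only [mem_insert, mem_singleton] at hx
      rcases hx with rfl | rfl | rfl
      · exact unc_left (by omega)
      · exact hl
      · exact unc_right (by omega)
    refine le_trans ?_ (card_le_card hsub)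
    rw [card_insert_of_notMem, card_insert_of_notMem, card_singleton]
    · simp only [mem_singleton]; omega
    · simp only [mem_insert, mem_singleton]; omega
  · intro x hx y hy hxy hcons
    rcases unc_next (hn.mono h1D) hx hy hxy hcons with h | h
    · left; exact h
    · right; exact ⟨h1D h, (mem_erase.1 h).1⟩
  · intro u v huv hu hv hne z hz
    have hu' := mem_unc.1 hu
    have hv' := mem_unc.1 hv
    exact (mem_unc.1 hz).2 (u, v) (mem_erase.2 ⟨hne, huv⟩) hu'.1.1 hv'.1.2

theorem sat_of_faces {κ : ℕ} {D : Finset (ℕ × ℕ)} (hc : ∀ e ∈ D, e.1 + 2 ≤ e.2) (hn : NCr D)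
    (hf : ∀ F p q, NatFace D F p q → F.card = κ + 2) :
    ∀ s p q, q - p = s → (p, q) ∈ D → κ * NN D p q + p + 1 = q := by
  intro s
  induction s using Nat.strong_induction_on with
  | _ s ih =>
  intro p q hs hpq
  have h1D : D.erase (p, q) ⊆ D := erase_subset _ _
  have hc1 : ∀ e ∈ D.erase (p, q), e.1 + 2 ≤ e.2 := fun e he => hc e (h1D he)
  have hF := unc_face hc hn hpq
  have hlt := hF.lt
  have hcard := hf _ _ _ hF
  have hcount := face_count (κ := κ) hc1 hF.hp hF.bnd (fun x hx => (mem_unc.1 hx).2) (by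
    intro x hx y hy hxy hcons
    have hx' := hF.bnd x hx
    have hy' := hF.bnd y hy
    rcases hF.cons x hx y hy hxy hcons with h1 | h1
    · rw [nn_of_ge hc1 x y (by omega)]; omega
    · have hne : ¬ (x = p ∧ y = q) := by
        rintro ⟨h3, h4⟩; exact h1.2 (by rw [h3, h4])
      have h2 := ih (y - x) (by omega) x y rfl h1.1
      rw [nn_erase hpq, if_neg, add_zero] at h2
      · exact h2
      · rintro ⟨h3, h4⟩
        simp only at h3 h4
        omega)
  have h1 := hcount p hF.hp q hF.hq (by omega)
  rw [rk_left hF.bnd] at h1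
  have h3 := rk_right hF.bnd hF.hq
  rw [nn_erase hpq, if_pos ⟨le_rfl, le_rfl⟩, mul_add]
  omega

end PartT1

section PartT2

theorem fin_sub_val {M : ℕ} (x a : Fin (M + 1)) :
    (a.val ≤ x.val ∧ (x - a).val = x.val - a.val) ∨ (x.val < a.val ∧ (x - a).val = M + 1 + x.val - a.val) := by
  rcases le_or_gt a x with h | h
  · left; exact ⟨h, Fin.coe_sub_iff_le.2 h⟩
  · right; exact ⟨h, Fin.coe_sub_iff_lt.2 h⟩

theorem cyc_iff {M : ℕ} (a b x : Fin (M + 1)) : CycBtw a b x ↔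
    (a.val < x.val ∧ x.val < b.val) ∨ (x.val < b.val ∧ b.val < a.val) ∨ (b.val < a.val ∧ a.val < x.val) := by
  unfold CycBtw
  have h1 := fin_sub_val x a
  have h2 := fin_sub_val b a
  have := x.2; have := a.2; have := b.2
  omega

theorem polyAdj_iff {M : ℕ} (hM : 2 ≤ M) (a b : Fin (M + 1)) : PolyAdj a b ↔
    b.val = a.val + 1 ∨ a.val = b.val + 1 ∨ (a.val = 0 ∧ b.val = M) ∨ (b.val = 0 ∧ a.val = M) := by
  unfold PolyAdj
  have h1 := fin_sub_val a b
  have h2 := fin_sub_val b a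
  have := a.2; have := b.2
  omega

theorem isDiagonal_iff {M : ℕ} (hM : 2 ≤ M) (a b : Fin (M + 1)) (hab : a.val < b.val) :
    IsDiagonal s(a, b) ↔ a.val + 2 ≤ b.val ∧ ¬ (a.val = 0 ∧ b.val = M) := by
  unfold IsDiagonal
  constructor
  · rintro ⟨-, h⟩
    have := h a b rfl
    rw [polyAdj_iff hM] at this
    omega
  · rintro ⟨h1, h2⟩
    refine ⟨?_, ?_⟩
    · rw [Sym2.mk_isDiag_iff]; rintro rfl; omega
    · intro c d h
      rw [polyAdj_iff hM]
      rw [Sym2.eq_iff] at h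
      rcases h with ⟨rfl, rfl⟩ | ⟨rfl, rfl⟩ <;> omega

theorem isSide_iff {M : ℕ} (hM : 2 ≤ M) (a b : Fin (M + 1)) (hab : a.val < b.val) :
    IsSide s(a, b) ↔ b.val = a.val + 1 ∨ (a.val = 0 ∧ b.val = M) := by
  unfold IsSide
  constructor
  · rintro ⟨c, d, h, h1⟩
    rw [polyAdj_iff hM] at h1
    rw [Sym2.eq_iff] at h
    rcases h with ⟨rfl, rfl⟩ | ⟨rfl, rfl⟩ <;> omega
  · intro h
    refine ⟨a, b, rfl, ?_⟩
    rw [polyAdj_iff hM]; omega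

theorem crosses_iff {M : ℕ} (a b c d : Fin (M + 1)) (hab : a.val < b.val) (hcd : c.val < d.val) :
    Crosses s(a, b) s(c, d) ↔ (a.val < c.val ∧ c.val < b.val ∧ b.val < d.val) ∨
      (c.val < a.val ∧ a.val < d.val ∧ d.val < b.val) := by
  unfold Crosses
  constructor
  · intro h
    obtain ⟨c1, d1, h1, h2⟩ := h a b rfl
    obtain ⟨c2, d2, h3, h4⟩ := h b a Sym2.eq_swap
    have h2' : Xor (CycBtw a b c) (CycBtw a b d) := by
      rw [Sym2.eq_iff] at h1
      rcases h1 with ⟨rfl, rfl⟩ | ⟨rfl, rfl⟩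
      · exact h2
      · exact Or.symm h2
    have h4' : Xor (CycBtw b a c) (CycBtw b a d) := by
      rw [Sym2.eq_iff] at h3
      rcases h3 with ⟨rfl, rfl⟩ | ⟨rfl, rfl⟩
      · exact h4
      · exact Or.symm h4
    simp only [Xor, cyc_iff] at h2' h4'
    omega
  · intro h x y hxy
    refine ⟨c, d, rfl, ?_⟩
    change Xor (CycBtw x y c) (CycBtw x y d)
    simp only [Xor, cyc_iff]
    rw [Sym2.eq_iff] at hxy
    rcases hxy with ⟨rfl, rfl⟩ | ⟨rfl, rfl⟩ <;> omega

/-- the ordered pair of an unordered pair -/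
def pr {M : ℕ} : Sym2 (Fin (M + 1)) → ℕ × ℕ :=
  Sym2.lift ⟨fun a b => (min a.val b.val, max a.val b.val), fun a b => by
    simp only [min_comm, max_comm]⟩

theorem pr_mk {M : ℕ} (a b : Fin (M + 1)) (h : a.val ≤ b.val) : pr s(a, b) = (a.val, b.val) := by
  simp [pr, h]

theorem exists_rep {M : ℕ} (e : Sym2 (Fin (M + 1))) : ∃ a b : Fin (M + 1), a.val ≤ b.val ∧ e = s(a, b) := by
  induction e using Sym2.ind with
  | _ a b =>
    rcases le_total a.val b.val with h | h
    · exact ⟨a, b, h, rfl⟩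
    · exact ⟨b, a, h, Sym2.eq_swap⟩

theorem pr_inj {M : ℕ} : Function.Injective (pr (M := M)) := by
  intro e f h
  obtain ⟨a, b, h1, rfl⟩ := exists_rep e
  obtain ⟨c, d, h2, rfl⟩ := exists_rep f
  rw [pr_mk _ _ h1, pr_mk _ _ h2, Prod.mk.injEq] at h
  rw [Fin.ext h.1, Fin.ext h.2]

/-- the set of ordered pairs of a dissection, with the root side -/
def dd {M : ℕ} (t : Finset (Sym2 (Fin (M + 1)))) : Finset (ℕ × ℕ) := insert (0, M) (t.image pr)

theorem mem_dd {M : ℕ} (t : Finset (Sym2 (Fin (M + 1)))) (a b : Fin (M + 1)) (h : a.val ≤ b.val) :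
    (a.val, b.val) ∈ dd t ↔ (a.val = 0 ∧ b.val = M) ∨ s(a, b) ∈ t := by
  unfold dd
  rw [mem_insert, Prod.mk.injEq, ← pr_mk _ _ h, pr_inj.mem_finset_image]

theorem dd_cases {M : ℕ} (t : Finset (Sym2 (Fin (M + 1)))) (e : ℕ × ℕ) (he : e ∈ dd t) :
    ∃ a b : Fin (M + 1), a.val ≤ b.val ∧ e = (a.val, b.val) := by
  unfold dd at he
  rw [mem_insert] at he
  rcases he with rfl | he
  · exact ⟨0, Fin.last M, by simp, by simp⟩
  · rw [mem_image] at he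
    obtain ⟨f, -, rfl⟩ := he
    obtain ⟨a, b, h, rfl⟩ := exists_rep f
    exact ⟨a, b, h, pr_mk _ _ h⟩

theorem root_notMem {M : ℕ} (hM : 2 ≤ M) (t : Finset (Sym2 (Fin (M + 1)))) (ht : ∀ e ∈ t, IsDiagonal e) :
    (0, M) ∉ t.image pr := by
  intro h
  rw [mem_image] at h
  obtain ⟨f, hf, h⟩ := h
  have := ht f hf
  obtain ⟨a, b, h1, rfl⟩ := exists_rep f
  rw [pr_mk _ _ h1, Prod.mk.injEq] at h
  rw [isDiagonal_iff hM _ _ (by omega)] at this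
  omega

theorem dd_chord {M : ℕ} (hM : 2 ≤ M) (t : Finset (Sym2 (Fin (M + 1)))) (ht : ∀ e ∈ t, IsDiagonal e) :
    ∀ e ∈ dd t, e.1 + 2 ≤ e.2 := by
  intro e he
  obtain ⟨a, b, h, rfl⟩ := dd_cases t e he
  rw [mem_dd _ _ _ h] at he
  rcases he with h1 | h1
  · simp only; omega
  · have := ht _ h1
    rcases h.lt_or_eq with h2 | h2
    · rw [isDiagonal_iff hM _ _ h2] at this
      exact this.1
    · exfalso
      have h3 := this.1
      rw [Sym2.mk_isDiag_iff] at h3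
      exact h3 (Fin.ext h2)

theorem dd_ncr {M : ℕ} (hM : 2 ≤ M) (t : Finset (Sym2 (Fin (M + 1)))) (ht : ∀ e ∈ t, IsDiagonal e)
    (hc : ∀ e ∈ t, ∀ f ∈ t, ¬ Crosses e f) : NCr (dd t) := by
  intro e he f hf h
  have h1 := dd_chord hM t ht _ he
  have h2 := dd_chord hM t ht _ hf
  obtain ⟨a, b, h3, rfl⟩ := dd_cases t e he
  obtain ⟨c, d, h4, rfl⟩ := dd_cases t f hf
  rw [mem_dd _ _ _ h3] at he
  rw [mem_dd _ _ _ h4] at hf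
  simp only at h h1 h2
  have := d.2
  rcases he with he | he
  · omega
  rcases hf with hf | hf
  · omega
  apply hc _ he _ hf
  rw [crosses_iff _ _ _ _ (by omega) (by omega)]
  left; exact h

theorem face_to_nat {M : ℕ} (hM : 2 ≤ M) (t : Finset (Sym2 (Fin (M + 1)))) (ht : ∀ e ∈ t, IsDiagonal e)
    (F : Finset (Fin (M + 1))) (hF : IsFaceSet t F) :
    ∃ p q, NatFace (dd t) (F.image Fin.val) p q := by
  obtain ⟨h3, hn, hd⟩ := hF
  have hne : F.Nonempty := card_pos.1 (by omega)
  obtain ⟨p, hp, hp'⟩ := exists_min_image F Fin.val hne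
  obtain ⟨q, hq, hq'⟩ := exists_max_image F Fin.val hne
  have hcard : (F.image Fin.val).card = F.card := card_image_of_injective _ Fin.val_injective
  have hsub : F.image Fin.val ⊆ Icc p.val q.val := by
    intro x hx
    rw [mem_image] at hx
    obtain ⟨y, hy, rfl⟩ := hx
    exact mem_Icc.2 ⟨hp' y hy, hq' y hy⟩
  have hpq := card_le_card hsub
  rw [hcard, Nat.card_Icc] at hpq
  have hex : ∃ z ∈ F, p.val < z.val ∧ z.val < q.val := by
    by_contra hcon
    push Not at hcon
    have : F ⊆ {p, q} := by
      intro x hx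
      rw [mem_insert, mem_singleton]
      have h1 := hp' x hx; have h2 := hq' x hx; have h3 := hcon x hx
      rcases h1.lt_or_eq with h1 | h1
      · right; exact Fin.ext (by have := h3 h1; omega)
      · left; exact Fin.ext h1.symm
    have := card_le_card this
    have := card_le_two (a := p) (b := q)
    omega
  refine ⟨p.val, q.val, ?_⟩
  constructor
  · exact mem_image_of_mem _ hp
  · exact mem_image_of_mem _ hq
  · intro x hx; exact mem_Icc.1 (hsub hx)
  · omega
  · rw [mem_dd _ _ _ (by omega)]
    have h1 : NextIn F q p := by
      refine ⟨hq, hp, by rintro rfl; omega, ?_⟩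
      intro x hx
      have := hp' x hx; have := hq' x hx
      rw [cyc_iff]; omega
    have h2 := hn _ _ h1
    rw [Sym2.eq_swap] at h2
    rcases h2 with h2 | h2
    · rw [isSide_iff hM _ _ (by omega)] at h2
      left; omega
    · right; exact h2
  · intro x hx y hy hxy hcons
    rw [mem_image] at hx hy
    obtain ⟨a, ha, rfl⟩ := hx
    obtain ⟨b, hb, rfl⟩ := hy
    have h1 : NextIn F a b := by
      refine ⟨ha, hb, by rintro rfl; omega, ?_⟩
      intro x hx
      have := hcons x.val (mem_image_of_mem _ hx)
      rw [cyc_iff]; omega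
    obtain ⟨z, hz, hz1, hz2⟩ := hex
    have h5 := hcons z.val (mem_image_of_mem _ hz)
    have h6 : (a.val, b.val) ≠ (p.val, q.val) := by
      rw [Ne, Prod.mk.injEq]; omega
    rcases hn _ _ h1 with h2 | h2
    · rw [isSide_iff hM _ _ hxy] at h2
      rcases h2 with h2 | h2
      · left; exact h2
      · exfalso
        have := p.2; have := q.2
        omega
    · right; refine ⟨?_, h6⟩
      rw [mem_dd _ _ _ hxy.le]; right; exact h2
  · intro u v huv hu hv hne z hz hcon
    rw [mem_image] at hu hv hz
    obtain ⟨a, ha, rfl⟩ := hu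
    obtain ⟨b, hb, rfl⟩ := hv
    obtain ⟨z, hz, rfl⟩ := hz
    have := hp' a ha; have := hp' b hb; have := hq' a ha; have := hq' b hb
    have := b.2; have := q.2
    rw [Ne, Prod.mk.injEq] at hne
    rw [mem_dd _ _ _ (by omega)] at huv
    rcases huv with huv | huv
    · omega
    rcases hd _ huv a b rfl ha hb with h | h
    · apply h.2.2.2 z hz
      rw [cyc_iff]; left; exact hcon
    · have h1 := h.2.2.2 p hp
      have h2 := h.2.2.2 q hq
      rw [cyc_iff] at h1 h2
      omega

theorem nat_to_face {M : ℕ} (hM : 2 ≤ M) (t : Finset (Sym2 (Fin (M + 1)))) (ht : ∀ e ∈ t, IsDiagonal e)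
    (F : Finset (Fin (M + 1))) {p q : ℕ} (hF : NatFace (dd t) (F.image Fin.val) p q) : IsFaceSet t F := by
  have hlt := hF.lt
  have hcard : (F.image Fin.val).card = F.card := card_image_of_injective _ Fin.val_injective
  have hp := hF.hp
  have hq := hF.hq
  rw [mem_image] at hp hq
  obtain ⟨p, hp, rfl⟩ := hp
  obtain ⟨q, hq, rfl⟩ := hq
  have hb : ∀ x ∈ F, p.val ≤ x.val ∧ x.val ≤ q.val := fun x hx => hF.bnd _ (mem_image_of_mem _ hx)
  refine ⟨hcard ▸ hF.three, ?_, ?_⟩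
  · rintro a b ⟨ha, hb', hne, h⟩
    have hne' : a.val ≠ b.val := fun h => hne (Fin.ext h)
    rcases lt_or_gt_of_ne hne' with hab | hab
    · have := hF.cons a.val (mem_image_of_mem _ ha) b.val (mem_image_of_mem _ hb') hab (by
        intro z hz hcon
        rw [mem_image] at hz
        obtain ⟨z, hz, rfl⟩ := hz
        apply h z hz
        rw [cyc_iff]; left; exact hcon)
      rcases this with h1 | h1
      · left; rw [isSide_iff hM _ _ hab]; left; exact h1
      · rw [mem_dd _ _ _ hab.le] at h1
        rcases h1.1 with h2 | h2
        · left; rw [isSide_iff hM _ _ hab]; right; exact h2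
        · right; exact h2
    · have h1 := h p hp
      have h2 := h q hq
      rw [cyc_iff] at h1 h2
      have h3 := hb a ha; have h4 := hb b hb'
      have h5 : b = p := Fin.ext (by omega)
      have h6 : a = q := Fin.ext (by omega)
      subst h5 h6
      have h7 := hF.mem
      rw [mem_dd _ _ _ hab.le] at h7
      unfold EdgeOfD
      rw [Sym2.eq_swap, isSide_iff hM _ _ hab]
      tauto
  · have key : ∀ a b : Fin (M + 1), a.val < b.val → s(a, b) ∈ t → a ∈ F → b ∈ F → NextIn F a b ∨ NextIn F b a := by
      intro a b hab he ha hb'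
      by_cases hpq : (a.val, b.val) = (p.val, q.val)
      · right
        rw [Prod.mk.injEq] at hpq
        refine ⟨hb', ha, by rintro rfl; omega, ?_⟩
        intro x hx
        have := hb x hx
        rw [cyc_iff]; omega
      · left
        have := hF.diag a.val b.val (by rw [mem_dd _ _ _ hab.le]; right; exact he) (mem_image_of_mem _ ha)
          (mem_image_of_mem _ hb') hpq
        refine ⟨ha, hb', by rintro rfl; omega, ?_⟩
        intro x hx
        have := this x.val (mem_image_of_mem _ hx)
        rw [cyc_iff]; omega
    rintro e he a b rfl ha hb'
    rcases lt_trichotomy a.val b.val with hab | hab | hab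
    · exact key a b hab he ha hb'
    · exfalso
      have h3 := (ht _ he).1
      rw [Sym2.mk_isDiag_iff] at h3
      exact h3 (Fin.ext hab)
    · rw [Sym2.eq_swap] at he
      exact (key b a hab he hb' ha).symm

theorem card_dd {M : ℕ} (hM : 2 ≤ M) (t : Finset (Sym2 (Fin (M + 1)))) (ht : ∀ e ∈ t, IsDiagonal e) :
    (dd t).card = t.card + 1 := by
  unfold dd
  rw [card_insert_of_notMem (root_notMem hM t ht), card_image_of_injective _ pr_inj]

theorem dd_sdiff {M : ℕ} (hM : 2 ≤ M) (s t : Finset (Sym2 (Fin (M + 1)))) (hs : ∀ e ∈ s, IsDiagonal e) :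
    (dd s \ dd t).card = (s \ t).card := by
  have : dd s \ dd t = (s \ t).image pr := by
    rw [image_sdiff _ _ pr_inj]
    unfold dd
    ext e
    have := root_notMem hM s hs
    simp only [mem_sdiff, mem_insert]
    by_cases h : e = (0, M)
    · subst h; tauto
    · tauto
  rw [this, card_image_of_injective _ pr_inj]

theorem dd_inj {M : ℕ} (hM : 2 ≤ M) (s t : Finset (Sym2 (Fin (M + 1)))) (hs : ∀ e ∈ s, IsDiagonal e)
    (ht : ∀ e ∈ t, IsDiagonal e) (h : dd s = dd t) : s = t := by
  have h1 := dd_sdiff hM s t hs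
  have h2 := dd_sdiff hM t s ht
  rw [h, sdiff_self, bot_eq_empty, card_empty] at h1
  rw [h, sdiff_self, bot_eq_empty, card_empty] at h2
  apply Subset.antisymm
  · rw [← sdiff_eq_empty_iff_subset, ← card_eq_zero]; exact h1.symm
  · rw [← sdiff_eq_empty_iff_subset, ← card_eq_zero]; exact h2.symm

end PartT2

section PartT3

theorem two_le_M {k n : ℕ} (hk : 3 ≤ k) (hn : 1 ≤ n) : 2 ≤ (k - 2) * n + 1 := by
  have : 0 < (k - 2) * n := Nat.mul_pos (by omega) (by omega)
  omega

theorem good_of_kang {k n : ℕ} (hk : 3 ≤ k) (hn : 1 ≤ n) (t : Finset (Sym2 (Fin ((k - 2) * n + 1 + 1))))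
    (ht : IsKAngulation k n t) : Good (k - 2) n (dd t) := by
  have hM := two_le_M hk hn
  obtain ⟨h1, h2, h3, h4⟩ := ht
  have hch := dd_chord hM t h1
  have hnc := dd_ncr hM t h1 h2
  refine ⟨hch, ?_, ?_, hnc, mem_insert_self _ _, ?_⟩
  · intro e he
    obtain ⟨a, b, h, rfl⟩ := dd_cases t e he
    have := b.2
    simp only; omega
  · intro e he
    have := sat_of_faces (κ := k - 2) hch hnc (by
      intro F p q hF
      have hF1 : (univ.filter (fun x : Fin ((k - 2) * n + 1 + 1) => x.val ∈ F)).image Fin.val = F := by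
        ext x
        simp only [mem_image, mem_filter, mem_univ, true_and]
        constructor
        · rintro ⟨y, hy, rfl⟩; exact hy
        · intro hx
          have h5 := (hF.bnd x hx).2
          obtain ⟨a, b, h, h6⟩ := dd_cases t _ hF.mem
          rw [Prod.mk.injEq] at h6
          have := b.2
          exact ⟨⟨x, by omega⟩, hx, rfl⟩
      have := h4 _ (nat_to_face hM t h1 (univ.filter (fun x : Fin ((k - 2) * n + 1 + 1) => x.val ∈ F))
        (p := p) (q := q) (by rw [hF1]; exact hF))
      rw [← card_image_of_injective _ Fin.val_injective, hF1] at this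
      omega) _ e.1 e.2 rfl he
    exact ⟨NN (dd t) e.1 e.2, by omega⟩
  · rw [card_dd hM t h1, h3]; omega

theorem kang_of_good {k n : ℕ} (hk : 3 ≤ k) (hn : 1 ≤ n) (D : Finset (ℕ × ℕ)) (hD : Good (k - 2) n D) :
    ∃ t : Finset (Sym2 (Fin ((k - 2) * n + 1 + 1))), IsKAngulation k n t ∧ dd t = D := by
  classical
  have hM := two_le_M hk hn
  set t : Finset (Sym2 (Fin ((k - 2) * n + 1 + 1))) :=
    univ.filter (fun e => pr e ∈ D.erase (0, (k - 2) * n + 1)) with ht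
  have hdd : dd t = D := by
    ext e
    unfold dd
    rw [mem_insert, mem_image]
    constructor
    · rintro (rfl | ⟨f, hf, rfl⟩)
      · exact hD.root
      · rw [ht, mem_filter] at hf
        exact mem_of_mem_erase hf.2
    · intro he
      by_cases h : e = (0, (k - 2) * n + 1)
      · left; exact h
      · right
        have h1 := hD.chord e he
        have h2 := hD.bd e he
        have h3 : pr s((⟨e.1, by omega⟩ : Fin ((k - 2) * n + 1 + 1)), ⟨e.2, by omega⟩) = e := by
          rw [pr_mk]
          simp only; omega
        refine ⟨s((⟨e.1, by omega⟩ : Fin ((k - 2) * n + 1 + 1)), ⟨e.2, by omega⟩), ?_, h3⟩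
        rw [ht, mem_filter, h3]
        exact ⟨mem_univ _, mem_erase.2 ⟨h, he⟩⟩
  have hdiag : ∀ e ∈ t, IsDiagonal e := by
    intro e he
    rw [ht, mem_filter] at he
    obtain ⟨a, b, h, rfl⟩ := exists_rep e
    rw [pr_mk _ _ h, mem_erase, Ne, Prod.mk.injEq] at he
    have := hD.chord _ he.2.2
    simp only at this
    rw [isDiagonal_iff hM _ _ (by omega)]
    exact ⟨this, he.2.1⟩
  refine ⟨t, ⟨hdiag, ?_, ?_, ?_⟩, hdd⟩
  · intro e he f hf hcr
    have h1 := hdiag e he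
    have h2 := hdiag f hf
    obtain ⟨a, b, hab, rfl⟩ := exists_rep e
    obtain ⟨c, d, hcd, rfl⟩ := exists_rep f
    have h3 : (a.val, b.val) ∈ D := by rw [← hdd, mem_dd _ _ _ hab]; right; exact he
    have h4 : (c.val, d.val) ∈ D := by rw [← hdd, mem_dd _ _ _ hcd]; right; exact hf
    have h5 := hD.chord _ h3
    have h6 := hD.chord _ h4
    simp only at h5 h6
    rw [crosses_iff _ _ _ _ (by omega) (by omega)] at hcr
    rcases hcr with h | h
    · exact hD.nc _ h3 _ h4 h
    · exact hD.nc _ h4 _ h3 h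
  · have := card_dd hM t hdiag
    rw [hdd, hD.card] at this
    omega
  · intro F hF
    obtain ⟨p, q, h⟩ := face_to_nat hM t hdiag F hF
    rw [hdd] at h
    have := hD.face_card h
    rw [card_image_of_injective _ Fin.val_injective] at this
    omega

/-- the pair set of a k-angulation -/
def dk {k n : ℕ} (x : KAngulation k n) : Finset (ℕ × ℕ) := dd (M := (k - 2) * n + 1) x.val

theorem dk_inj {k n : ℕ} (hk : 3 ≤ k) (hn : 1 ≤ n) : Function.Injective (dk (k := k) (n := n)) := by
  intro x y h
  exact Subtype.ext (dd_inj (two_le_M hk hn) _ _ x.2.1 y.2.1 h)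

theorem adj_iff {k n : ℕ} (hk : 3 ≤ k) (hn : 1 ≤ n) (x y : KAngulation k n) :
    (kAngGraph k n).Adj x y ↔ AdjD (dk x) (dk y) := by
  have h1 := dd_sdiff (two_le_M hk hn) x.val y.val x.2.1
  have h2 := dd_sdiff (two_le_M hk hn) y.val x.val y.2.1
  unfold AdjD dk
  rw [h1, h2]
  rfl

theorem image_dk {k n : ℕ} (hk : 3 ≤ k) (hn : 1 ≤ n) :
    (univ : Finset (KAngulation k n)).image dk = XX (k - 2) n := by
  ext D
  rw [mem_XX, mem_image]
  constructor
  · rintro ⟨x, -, rfl⟩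
    exact good_of_kang hk hn x.val x.2
  · intro h
    obtain ⟨t, h1, h2⟩ := kang_of_good hk hn D h
    exact ⟨⟨t, h1⟩, mem_univ _, h2⟩

theorem sum_dk {k n : ℕ} (hk : 3 ≤ k) (hn : 1 ≤ n) (f : Finset (ℕ × ℕ) → ℝ) :
    ∑ D ∈ XX (k - 2) n, f D = ∑ x : KAngulation k n, f (dk x) := by
  rw [← image_dk hk hn, sum_image]
  intro x _ y _ h
  exact dk_inj hk hn h

open Classical in
theorem degree_k {k n : ℕ} (hk : 3 ≤ k) (hn : 1 ≤ n) (x : KAngulation k n) :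
    (univ.filter (fun y => (kAngGraph k n).Adj x y)).card = (n - 1) * (k - 2) := by
  have := Good.degree (κ := k - 2) (by omega) (good_of_kang hk hn x.val x.2)
  rw [← this, ← image_dk hk hn, filter_image, card_image_of_injective _ (dk_inj hk hn)]
  congr 1
  ext y
  simp only [mem_filter, mem_univ, true_and]
  exact adj_iff hk hn x y

open Classical in
theorem poincare_k {k n : ℕ} (hk : 3 ≤ k) (hn : 1 ≤ n) (g : KAngulation k n → ℝ) (hg : ∑ x, g x = 0) :
    ∑ x, g x ^ 2 ≤ (((k - 2) * n + 2 : ℕ) : ℝ) ^ 11 *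
      ∑ x, ∑ y, if (kAngGraph k n).Adj x y then (g x - g y) ^ 2 else 0 := by
  rcases isEmpty_or_nonempty (KAngulation k n) with he | he
  · simp
  set g' : Finset (ℕ × ℕ) → ℝ := fun D => g (Function.invFun dk D) with hg'
  have h1 : ∀ x, g' (dk x) = g x := by
    intro x
    simp only [hg', Function.leftInverse_invFun (dk_inj hk hn) x]
  have h := poincare_X (κ := k - 2) (n := n) (by omega) (by omega) g' (by
    rw [sum_dk hk hn, ← hg]; exact sum_congr rfl fun x _ => h1 x)
  rw [sum_dk hk hn, sum_dk hk hn] at h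
  simp only [h1] at h
  refine h.trans (le_of_eq ?_)
  congr 1
  apply sum_congr rfl
  intro x _
  unfold hE
  rw [sum_filter, sum_dk hk hn]
  apply sum_congr rfl
  intro y _
  simp only [h1, adj_iff hk hn]

theorem card_k_le {k n : ℕ} (hk : 3 ≤ k) (hn : 1 ≤ n) :
    Fintype.card (KAngulation k n) ≤ 2 ^ (((k - 2) * n + 2) ^ 2) := by
  classical
  have : Fintype.card (KAngulation k n) = (XX (k - 2) n).card := by
    rw [← image_dk hk hn, card_image_of_injective _ (dk_inj hk hn), card_univ]
  rw [this]
  unfold XX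
  refine (card_filter_le _ _).trans ?_
  rw [card_powerset, card_product, card_range, sq]

end PartT3


section Mix
set_option linter.unusedSectionVars false
variable {V : Type*} [Fintype V] [DecidableEq V] (P : Matrix V V ℝ)

theorem jensen_row (Q : V → ℝ) (hQ : ∀ y, 0 ≤ Q y) (h1 : ∑ y, Q y = 1) (g : V → ℝ) :
    (∑ y, Q y * g y) ^ 2 ≤ ∑ y, Q y * g y ^ 2 := by
  set m := ∑ y, Q y * g y with hm
  have h : 0 ≤ ∑ y, Q y * (g y - m) ^ 2 := sum_nonneg fun y _ => mul_nonneg (hQ y) (sq_nonneg _)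
  have h2 : ∑ y, Q y * (g y - m) ^ 2 = ∑ y, Q y * g y ^ 2 - 2 * m * ∑ y, Q y * g y + m ^ 2 * ∑ y, Q y := by
    clear_value m
    rw [mul_sum, mul_sum, ← sum_sub_distrib, ← sum_add_distrib]
    exact sum_congr rfl fun y _ => by ring
  rw [h2, ← hm, h1] at h
  nlinarith

theorem form_eq (hs : ∀ x y, P x y = P y x) (h1 : ∀ x, ∑ y, P x y = 1) (g : V → ℝ) :
    ∑ x, g x * ∑ y, P x y * g y = ∑ x, g x ^ 2 - (1 / 2) * ∑ x, ∑ y, P x y * (g x - g y) ^ 2 := by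
  have e1 : ∑ x, ∑ y, P x y * g x ^ 2 = ∑ x, g x ^ 2 := by
    apply sum_congr rfl; intro x _
    rw [← sum_mul, h1, one_mul]
  have e2 : ∑ x, ∑ y, P x y * g y ^ 2 = ∑ x, g x ^ 2 := by
    rw [sum_comm, ← e1]
    apply sum_congr rfl; intro x _
    apply sum_congr rfl; intro y _
    rw [hs]
  have e3 : ∑ x, ∑ y, P x y * (g x - g y) ^ 2 =
      ∑ x, ∑ y, P x y * g x ^ 2 + ∑ x, ∑ y, P x y * g y ^ 2 - 2 * ∑ x, g x * ∑ y, P x y * g y := by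
    simp only [mul_sum]
    rw [← sum_add_distrib, ← sum_sub_distrib]
    apply sum_congr rfl; intro x _
    rw [← sum_add_distrib, ← sum_sub_distrib]
    apply sum_congr rfl; intro y _
    ring
  rw [e3, e1, e2]; ring

theorem contr_step (hs : ∀ x y, P x y = P y x) (h0 : ∀ x y, 0 ≤ P x y) (hl : ∀ x, 1 / 2 ≤ P x x)
    (h1 : ∀ x, ∑ y, P x y = 1) (γ : ℝ) (g : V → ℝ)
    (hp : γ * ∑ x, g x ^ 2 ≤ (1 / 2) * ∑ x, ∑ y, P x y * (g x - g y) ^ 2) :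
    ∑ x, (∑ y, P x y * g y) ^ 2 ≤ (1 - γ) * ∑ x, g x ^ 2 := by
  have hQ : ∀ x, (2 * ∑ y, P x y * g y - g x) ^ 2 ≤ 2 * ∑ y, P x y * g y ^ 2 - g x ^ 2 := by
    intro x
    have e : ∀ f : V → ℝ, ∑ y, (2 * P x y - if y = x then 1 else 0) * f y = 2 * ∑ y, P x y * f y - f x := by
      intro f
      simp only [sub_mul, sum_sub_distrib, ite_mul, one_mul, zero_mul, sum_ite_eq', mem_univ, if_true, mul_sum,
        mul_assoc]
    have := jensen_row (fun y => 2 * P x y - if y = x then 1 else 0) (by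
      intro y
      by_cases h : y = x
      · subst h; simp only [if_true]; linarith [hl y]
      · simp only [h, if_false]; linarith [h0 x y]) (by
      have := e (fun _ => 1)
      simp only [mul_one, h1] at this
      rw [this]; norm_num) g
    rw [e, e (fun y => g y ^ 2)] at this
    exact this
  have e2 : ∑ x, ∑ y, P x y * g y ^ 2 = ∑ x, g x ^ 2 := by
    rw [sum_comm]
    apply sum_congr rfl; intro x _
    rw [← sum_mul]
    simp only [hs _ x]
    rw [h1, one_mul]
  have h3 := sum_le_sum fun x (_ : x ∈ (univ : Finset V)) => hQ x
  rw [sum_sub_distrib, ← mul_sum, e2] at h3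
  have e4 : ∑ x, (2 * ∑ y, P x y * g y - g x) ^ 2 =
      4 * ∑ x, (∑ y, P x y * g y) ^ 2 - 4 * ∑ x, g x * ∑ y, P x y * g y + ∑ x, g x ^ 2 := by
    rw [mul_sum, mul_sum, ← sum_sub_distrib, ← sum_add_distrib]
    apply sum_congr rfl; intro x _
    ring
  rw [e4, form_eq P hs h1] at h3
  linarith

theorem mix_abs (hs : ∀ x y, P x y = P y x) (h0 : ∀ x y, 0 ≤ P x y) (hl : ∀ x, 1 / 2 ≤ P x x)
    (h1 : ∀ x, ∑ y, P x y = 1) (γ : ℝ) (hγ : γ ≤ 1)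
    (hp : ∀ g : V → ℝ, ∑ x, g x = 0 → γ * ∑ x, g x ^ 2 ≤ (1 / 2) * ∑ x, ∑ y, P x y * (g x - g y) ^ 2)
    (x : V) (t : ℕ) :
    ∑ y, (P ^ t) x y = 1 ∧
    ∑ y, ((P ^ t) x y - 1 / (Fintype.card V : ℝ)) ^ 2 ≤ (1 - γ) ^ t := by
  have hN : (0 : ℝ) < Fintype.card V := by
    exact_mod_cast Fintype.card_pos_iff.2 ⟨x⟩
  induction t with
  | zero =>
    have ha : ∑ y, (1 : Matrix V V ℝ) x y = 1 := by
      simp [Matrix.one_apply]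
    rw [pow_zero, pow_zero]
    refine ⟨ha, ?_⟩
    have : ∀ y, ((1 : Matrix V V ℝ) x y - 1 / (Fintype.card V : ℝ)) ^ 2 =
        (1 : Matrix V V ℝ) x y - 2 * (1 / (Fintype.card V : ℝ)) * (1 : Matrix V V ℝ) x y
          + (1 / (Fintype.card V : ℝ)) ^ 2 := by
      intro y
      rw [Matrix.one_apply]
      split_ifs <;> ring
    rw [sum_congr rfl fun y _ => this y, sum_add_distrib, sum_sub_distrib, ← mul_sum, ha, sum_const, card_univ,
      nsmul_eq_mul]
    have h5 : (Fintype.card V : ℝ) * (1 / (Fintype.card V : ℝ)) ^ 2 = 1 / (Fintype.card V : ℝ) := by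
      field_simp
    rw [h5]
    have : 0 < 1 / (Fintype.card V : ℝ) := by positivity
    linarith
  | succ t ih =>
    obtain ⟨ih1, ih2⟩ := ih
    have hstep : ∀ y, (P ^ (t + 1)) x y = ∑ z, P y z * (P ^ t) x z := by
      intro y
      rw [pow_succ, Matrix.mul_apply]
      exact sum_congr rfl fun z _ => by rw [hs z y, mul_comm]
    constructor
    · simp only [hstep]
      rw [sum_comm]
      rw [← ih1]
      apply sum_congr rfl; intro z _
      rw [← sum_mul]
      simp only [hs _ z]
      rw [h1, one_mul]
    · have hstep2 : ∀ y, (P ^ (t + 1)) x y - 1 / (Fintype.card V : ℝ) =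
          ∑ z, P y z * ((P ^ t) x z - 1 / (Fintype.card V : ℝ)) := by
        intro y
        simp only [mul_sub]
        rw [sum_sub_distrib, ← sum_mul, h1, hstep, one_mul]
      simp only [hstep2]
      have hz : ∑ z, ((P ^ t) x z - 1 / (Fintype.card V : ℝ)) = 0 := by
        rw [sum_sub_distrib, ih1, sum_const, card_univ, nsmul_eq_mul]
        field_simp; simp
      refine (contr_step P hs h0 hl h1 γ _ (hp _ hz)).trans ?_
      rw [pow_succ, mul_comm]
      exact mul_le_mul_of_nonneg_right ih2 (by linarith)

theorem tv_abs (hs : ∀ x y, P x y = P y x) (h0 : ∀ x y, 0 ≤ P x y) (hl : ∀ x, 1 / 2 ≤ P x x)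
    (h1 : ∀ x, ∑ y, P x y = 1) (γ : ℝ) (hγ : γ ≤ 1)
    (hp : ∀ g : V → ℝ, ∑ x, g x = 0 → γ * ∑ x, g x ^ 2 ≤ (1 / 2) * ∑ x, ∑ y, P x y * (g x - g y) ^ 2)
    (x : V) (t : ℕ) (B : ℝ) (hB : (Fintype.card V : ℝ) ≤ Real.exp B) (ht : B + 2 ≤ γ * t) :
    (1 / 2 : ℝ) * ∑ y, |(P ^ t) x y - 1 / (Fintype.card V : ℝ)| ≤ 1 / 4 := by
  have h := (mix_abs P hs h0 hl h1 γ hγ hp x t).2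
  have hcs : (∑ y, |(P ^ t) x y - 1 / (Fintype.card V : ℝ)|) ^ 2 ≤
      (Fintype.card V : ℝ) * ∑ y, ((P ^ t) x y - 1 / (Fintype.card V : ℝ)) ^ 2 := by
    have := sq_sum_le_card_mul_sum_sq (s := (univ : Finset V))
      (f := fun y => |(P ^ t) x y - 1 / (Fintype.card V : ℝ)|)
    simpa only [sq_abs, card_univ] using this
  have h5 : (1 - γ) ^ t ≤ Real.exp (-(γ * t)) := by
    have h6 : 1 - γ ≤ Real.exp (-γ) := by
      have := Real.add_one_le_exp (-γ); linarith
    calc (1 - γ) ^ t ≤ Real.exp (-γ) ^ t := pow_le_pow_left₀ (by linarith) h6 t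
      _ = Real.exp (-(γ * t)) := by rw [← Real.exp_nat_mul]; congr 1; ring
  have h7 : (Fintype.card V : ℝ) * ∑ y, ((P ^ t) x y - 1 / (Fintype.card V : ℝ)) ^ 2 ≤ 1 / 4 := by
    calc _ ≤ Real.exp B * Real.exp (-(γ * t)) :=
          mul_le_mul hB (h.trans h5) (sum_nonneg fun _ _ => sq_nonneg _) (Real.exp_pos _).le
      _ = Real.exp (B - γ * t) := by rw [← Real.exp_add]; congr 1
      _ ≤ Real.exp (-2) := Real.exp_le_exp.2 (by linarith)
      _ ≤ 1 / 4 := by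
        rw [Real.exp_neg, inv_eq_one_div]
        apply one_div_le_one_div_of_le (by norm_num)
        have : (2 : ℝ) ≤ Real.exp 1 := by have := Real.add_one_le_exp (1 : ℝ); linarith
        have h8 : Real.exp 2 = Real.exp 1 * Real.exp 1 := by rw [← Real.exp_add]; norm_num
        rw [h8]; nlinarith
  have h9 : 0 ≤ ∑ y, |(P ^ t) x y - 1 / (Fintype.card V : ℝ)| := sum_nonneg fun _ _ => abs_nonneg _
  nlinarith

end Mix

theorem time_bound {k n : ℕ} (hk : 3 ≤ k) (hn : 2 ≤ n) :
    (((k - 2) * n + 2 : ℕ) : ℝ) ^ 16 ≤ (n : ℝ) ^ (100 * (k : ℝ) * Real.log n) := by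
  have hm : (k - 2) * n + 2 ≤ k * n := by
    obtain ⟨j, rfl⟩ := Nat.exists_eq_add_of_le' hk
    have : j + 3 - 2 = j + 1 := by omega
    rw [this]; nlinarith
  have hn0 : (0 : ℝ) < n := by exact_mod_cast (by omega : 0 < n)
  have hk0 : (0 : ℝ) < k := by exact_mod_cast (by omega : 0 < k)
  have hk3 : (3 : ℝ) ≤ k := by exact_mod_cast hk
  have hn2 : (2 : ℝ) ≤ n := by exact_mod_cast hn
  have hL : (0.69 : ℝ) ≤ Real.log n := by
    have h1 := Real.log_two_gt_d9
    have h2 := Real.log_le_log (by norm_num) hn2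
    linarith
  have hK : Real.log k ≤ k := (Real.log_le_sub_one_of_pos hk0).trans (by linarith)
  calc (((k - 2) * n + 2 : ℕ) : ℝ) ^ 16 ≤ ((k * n : ℕ) : ℝ) ^ 16 := by
        apply pow_le_pow_left₀ (by positivity); exact_mod_cast hm
    _ = Real.exp (16 * (Real.log k + Real.log n)) := by
        rw [← Real.log_mul hk0.ne' hn0.ne']
        have := Real.exp_nat_mul (Real.log (k * n)) 16
        push_cast at this ⊢
        rw [this, Real.exp_log (by positivity)]
    _ ≤ Real.exp (Real.log n * (100 * (k : ℝ) * Real.log n)) := by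
        apply Real.exp_le_exp.2
        set L := Real.log n
        have h1 : 0.47 * k ≤ k * (L * L) := by
          have : 0.47 ≤ L * L := by nlinarith
          nlinarith
        have h2 : 2 * L ≤ k * (L * L) := by
          have : 2 ≤ k * L := by nlinarith
          nlinarith
        nlinarith
    _ = (n : ℝ) ^ (100 * (k : ℝ) * Real.log n) := by
        rw [Real.rpow_def_of_pos hn0]

/-- there is an absolute constant `C` such that for every `k ≥ 3` and
`n ≥ 2`, for every integer `t ≥ n^{C·k·log n}` and every starting `k`-angulation `x`,
the total variation distance between the distribution after `t` steps of the lazy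
`k`-angulation flip walk and the uniform distribution is at most 1/4. -/
theorem kangulation_flip_walk_mixing :
    ∃ C : ℝ, ∀ k n : ℕ, 3 ≤ k → 2 ≤ n → ∀ t : ℕ,
      (n : ℝ) ^ (C * (k : ℝ) * Real.log n) ≤ (t : ℝ) →
      ∀ x : KAngulation k n,
        (1 / 2 : ℝ) * ∑ y : KAngulation k n,
            |(kFlipWalkMatrix k n ^ t) x y - 1 / (Nat.card (KAngulation k n) : ℝ)|
          ≤ 1 / 4 := by
  refine ⟨100, ?_⟩
  intro k n hk hn t ht x
  classical
  have hn1 : 1 ≤ n := by omega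
  have hT := (time_bound hk hn).trans ht
  set m : ℝ := (((k - 2) * n + 2 : ℕ) : ℝ) with hm
  have hm3 : (3 : ℝ) ≤ m := by
    rw [hm]; exact_mod_cast (by have := two_le_M hk hn1; omega)
  have hkr : ((k - 2 : ℕ) : ℝ) = (k : ℝ) - 2 := by rw [Nat.cast_sub (by omega)]; norm_num
  have hnr : ((n - 1 : ℕ) : ℝ) = (n : ℝ) - 1 := by rw [Nat.cast_sub (by omega)]; norm_num
  have hk0 : (1 : ℝ) ≤ (k : ℝ) - 2 := by rw [← hkr]; exact_mod_cast (by omega : 1 ≤ k - 2)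
  have hn0 : (1 : ℝ) ≤ (n : ℝ) - 1 := by rw [← hnr]; exact_mod_cast (by omega : 1 ≤ n - 1)
  have hmle : ((n : ℝ) - 1) * ((k : ℝ) - 2) ≤ m := by
    rw [hm]; push_cast; rw [hkr]; nlinarith
  set r : ℝ := 1 / (2 * ((n : ℝ) - 1) * ((k : ℝ) - 2)) with hr
  have hr0 : 0 < r := by rw [hr]; apply one_div_pos.2; positivity
  have hrm : 1 / (2 * m) ≤ r := by
    rw [hr]; apply one_div_le_one_div_of_le (by positivity); linarith
  have hP : ∀ a b, kFlipWalkMatrix k n a b = if (kAngGraph k n).Adj a b then r else if a = b then 1 / 2 else 0 := by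
    intro a b; rw [kFlipWalkMatrix, ← hr]
  rw [Nat.card_eq_fintype_card]
  refine tv_abs (kFlipWalkMatrix k n) ?_ ?_ ?_ ?_ (1 / (4 * m ^ 12)) ?_ ?_ x t (m ^ 2) ?_ ?_
  · intro a b
    rw [hP, hP, (kAngGraph k n).adj_comm a b]
    simp only [eq_comm (a := a) (b := b)]
  · intro a b
    rw [hP]; split_ifs <;> first | positivity | norm_num
  · intro a; rw [hP]; simp
  · intro a
    simp only [hP]
    have : ∀ b, (if (kAngGraph k n).Adj a b then r else if a = b then (1 / 2 : ℝ) else 0) =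
        (if (kAngGraph k n).Adj a b then r else 0) + if a = b then (1 / 2 : ℝ) else 0 := by
      intro b
      by_cases h : a = b
      · subst h; simp
      · simp [h]
    rw [sum_congr rfl fun b _ => this b, sum_add_distrib, ← sum_filter, sum_const, degree_k hk hn1 a, nsmul_eq_mul,
      sum_ite_eq, if_pos (mem_univ _)]
    push_cast
    rw [hkr, hnr, hr]
    have : (n : ℝ) - 1 ≠ 0 := by linarith
    have : (k : ℝ) - 2 ≠ 0 := by linarith
    field_simp
    norm_num
  · rw [div_le_one (by positivity)]
    have : (1 : ℝ) ≤ m ^ 12 := one_le_pow₀ (by linarith)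
    linarith
  · intro g hg
    have h := poincare_k hk hn1 g hg
    rw [← hm] at h
    have e : ∑ x, ∑ y, kFlipWalkMatrix k n x y * (g x - g y) ^ 2 =
        r * ∑ x, ∑ y, if (kAngGraph k n).Adj x y then (g x - g y) ^ 2 else 0 := by
      simp only [mul_sum]
      apply sum_congr rfl; intro a _
      apply sum_congr rfl; intro b _
      rw [hP]
      by_cases h : (kAngGraph k n).Adj a b
      · simp [h]
      · by_cases h' : a = b
        · subst h'; simp
        · simp [h, h']
    rw [e]
    set E := ∑ x, ∑ y, if (kAngGraph k n).Adj x y then (g x - g y) ^ 2 else 0 with hE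
    have hE0 : 0 ≤ E := sum_nonneg fun _ _ => sum_nonneg fun _ _ => by split_ifs <;> positivity
    calc 1 / (4 * m ^ 12) * ∑ x, g x ^ 2 ≤ 1 / (4 * m ^ 12) * (m ^ 11 * E) := by
          apply mul_le_mul_of_nonneg_left h; positivity
      _ = 1 / 2 * (1 / (2 * m) * E) := by field_simp; ring
      _ ≤ 1 / 2 * (r * E) := by
          have := mul_le_mul_of_nonneg_right hrm hE0
          linarith
  · have h := card_k_le hk hn1
    calc (Fintype.card (KAngulation k n) : ℝ) ≤ ((2 ^ (((k - 2) * n + 2) ^ 2) : ℕ) : ℝ) := by exact_mod_cast h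
      _ = 2 ^ (((k - 2) * n + 2) ^ 2) := by push_cast; rfl
      _ ≤ Real.exp 1 ^ (((k - 2) * n + 2) ^ 2) := by
          apply pow_le_pow_left₀ (by norm_num)
          have := Real.add_one_le_exp (1 : ℝ); linarith
      _ = Real.exp (m ^ 2) := by
          rw [← Real.exp_nat_mul, mul_one, hm]; push_cast; rfl
  · have h1 : m ^ 2 + 2 ≤ 1 / (4 * m ^ 12) * m ^ 16 := by
      have : 1 / (4 * m ^ 12) * m ^ 16 = m ^ 4 / 4 := by field_simp
      rw [this]
      have : 9 ≤ m ^ 2 := by nlinarith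
      nlinarith
    refine h1.trans ?_
    apply mul_le_mul_of_nonneg_left hT; positivity
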